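/- arXiv:2405.16927 — 3 statements merged into one kernel-verified Lean document; each statement's English description precedes it below -/
import Mathlib

section
/- Let n be a real number with 0 < n < 3. Then there exists a function Q ∈ C²((0,∞), ℝ) such that Q(r) > 0 for all r > 0, Q''(r) + (2/r)Q'(r) = Q(r) − r^{2−n} Q(r)³ for all r > 0, the limit lim_{r→0⁺} Q(r) exists and is finite, and Q(r) → 0 as r → ∞. (This is the radial form of the existence of a positive radial ground state of Δu = u − |x|^{2−n}u³ on ℝ³.) -/
/-!
For `Q(r) = u(r) / r` the equation reads `u'' = u - r^(-n) u³`. The proof is a shooting argument for the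
two-parameter family `u'' = ε u - δ r^(-n) u³`, `u(0) = 0`, `u'(0) = 1`; for `ε, δ > 0` the rescaling
`Q(r) = c q(μ r)` of `q = u / r` sets both coefficients to `1` (`IsSol.exists_scaled`), so a positive
decaying solution for one such pair `(ε, δ)` suffices.

The initial value problem is solved for `q` as a Volterra equation, by contraction in a weighted sup
norm, with the cubic term truncated at `q = cosh r`; the solution depends continuously on `(ε, δ)`
(`exists_family`). Sturm comparison with `sinh` shows `q ≤ cosh r` as long as `q ≥ 0`, hence the
truncation is harmless there (`IsSol.kap_eq`).

The parameters move from `(0, 1)` to `(1, 0)`. At `(0, 1)`, the Emden-Fowler equation, a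
Pohozaev-type identity shows that the solution crosses zero (`IsSol.emden_fowler_crosses`). At `(1, δ)`
with `δ` small, `u` stays close to `sinh` for so long that the energy
`E = u'² / 2 - ε u² / 2 + δ r^(-n) u⁴ / 4` becomes negative; since `E' = -(δ n / 4) r^(-n-1) u⁴ ≤ 0` and
`E ≥ 0` at a zero of `u`, the solution never crosses (`exists_small_delta`). Consider the first
parameter at which the solution does not cross. There `q` is positive, since a nonnegative solution
cannot touch zero (`IsSol.pos_of_nonneg`), and its energy is nonnegative everywhere, as a limit of
crossing solutions whose zeros escape to infinity. A positive solution of nonnegative energy tends to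
zero (`IsSol.tendsto_zero_of_En_nonneg`).
-/

open Filter

namespace GroundState

/-! ### Global solutions of the truncated initial value problem -/

noncomputable section

/-- The truncation of `q` to `[0, cosh s]`. It makes the cubic nonlinearity globally Lipschitz, and
`IsSol.kap_eq` shows that it is inactive as long as the solution is nonnegative. -/
def kap (s q : ℝ) : ℝ := max 0 (min q (Real.cosh s))

/-- The right-hand side of `u'' = ε u - δ r^(-n) u³`, written in terms of `q = u / r` (so that it is
continuous at `r = 0` for `n < 3`) and with `q` truncated. -/
def G (n ε δ s q : ℝ) : ℝ := ε * (s * kap s q) - δ * (s ^ (3 - n) * kap s q ^ 3)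

/-- A Lipschitz constant of `G n ε δ s`, uniform in `|ε|, |δ| ≤ 1`. -/
def L (n s : ℝ) : ℝ := (s + 3 * s ^ (3 - n)) * Real.cosh s ^ 3

/-- Twice the primitive of `L n`; its exponential is the weight of the sup norm in which the Volterra
operator contracts. -/
def Lam (n r : ℝ) : ℝ := 2 * ∫ s in (0 : ℝ)..r, L n s

/-- The Volterra operator for `q = u / r`, namely `q(r) = 1 + ∫₀¹ r (1 - θ) G(rθ, q(rθ)) dθ`, conjugated
by the weight: the unknown is `y = exp(-Lam) q`. For `r < 0` it is extended by its value at `0`. -/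
def T (n ε δ : ℝ) (y : ℝ → ℝ) (r : ℝ) : ℝ :=
  Real.exp (-Lam n (max r 0)) * (1 + ∫ θ in (0 : ℝ)..1, max r 0 * ((1 - θ) *
    G n ε δ (max r 0 * θ) (Real.exp (Lam n (max r 0 * θ)) * y (max r 0 * θ))))

end

lemma kap_nonneg (s q : ℝ) : 0 ≤ kap s q := le_max_left _ _

lemma kap_le_cosh (s q : ℝ) : kap s q ≤ Real.cosh s :=
  max_le (Real.cosh_pos s).le (min_le_right _ _)

lemma kap_lip (s a b : ℝ) : |kap s a - kap s b| ≤ |a - b| := by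
  unfold kap
  rw [max_comm, max_comm 0]
  exact (abs_max_sub_max_le_abs _ _ _).trans (abs_inf_sub_inf_le_abs _ _ _)

lemma kap_cont : Continuous fun p : ℝ × ℝ => kap p.1 p.2 := by
  unfold kap
  have := Real.continuous_cosh
  fun_prop

lemma rpow_cont {n : ℝ} (hn : n < 3) : Continuous fun s : ℝ => s ^ (3 - n) :=
  Real.continuous_rpow_const (by linarith)

lemma G_cont {n : ℝ} (hn : n < 3) (ε δ : ℝ) : Continuous fun p : ℝ × ℝ => G n ε δ p.1 p.2 := by
  unfold G
  have h1 := kap_cont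
  have h2 : Continuous fun p : ℝ × ℝ => p.1 ^ (3 - n) := (rpow_cont hn).comp continuous_fst
  fun_prop

lemma L_cont {n : ℝ} (hn : n < 3) : Continuous (L n) := by
  unfold L
  have h1 := rpow_cont hn
  have := Real.continuous_cosh
  fun_prop

lemma L_nonneg (n : ℝ) {s : ℝ} (hs : 0 ≤ s) : 0 ≤ L n s := by
  unfold L
  have := Real.rpow_nonneg hs (3 - n)
  have := Real.cosh_pos s
  positivity

lemma G_lip (n : ℝ) {ε δ s : ℝ} (hε : |ε| ≤ 1) (hδ : |δ| ≤ 1) (hs : 0 ≤ s) (a b : ℝ) :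
    |G n ε δ s a - G n ε δ s b| ≤ L n s * |a - b| := by
  have hp := Real.rpow_nonneg hs (3 - n)
  have hc := Real.one_le_cosh s
  have ha := kap_nonneg s a
  have hb := kap_nonneg s b
  have ha' := kap_le_cosh s a
  have hb' := kap_le_cosh s b
  have hl := kap_lip s a b
  set x := kap s a
  set y := kap s b
  set c := Real.cosh s
  have e : G n ε δ s a - G n ε δ s b
      = (ε * s - δ * (s ^ (3 - n) * (x ^ 2 + x * y + y ^ 2))) * (x - y) := by
    simp only [G]; ring
  have hc2 : x ^ 2 + x * y + y ^ 2 ≤ 3 * c ^ 2 := by nlinarith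
  have hc3 : c ^ 2 ≤ c ^ 3 := pow_le_pow_right₀ hc (by norm_num)
  have hc4 : 1 ≤ c ^ 3 := one_le_pow₀ hc
  have hq : 0 ≤ x ^ 2 + x * y + y ^ 2 := by positivity
  rw [e, abs_mul]
  refine mul_le_mul ?_ hl (abs_nonneg _) (L_nonneg n hs)
  refine (abs_sub _ _).trans ?_
  rw [abs_mul, abs_mul, abs_of_nonneg hs, abs_of_nonneg (mul_nonneg hp hq)]
  have h1 : |ε| * s ≤ s * c ^ 3 := by nlinarith [mul_le_mul_of_nonneg_right hε hs]
  have h2 : |δ| * (s ^ (3 - n) * (x ^ 2 + x * y + y ^ 2)) ≤ s ^ (3 - n) * (3 * c ^ 3) := by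
    calc _ ≤ 1 * (s ^ (3 - n) * (x ^ 2 + x * y + y ^ 2)) := by gcongr
      _ ≤ _ := by rw [one_mul]; gcongr; linarith
  unfold L
  linarith

lemma G_param (n : ℝ) {s : ℝ} (hs : 0 ≤ s) (ε δ ε' δ' a : ℝ) :
    |G n ε δ s a - G n ε' δ' s a| ≤ L n s * (|ε - ε'| + |δ - δ'|) := by
  have hp := Real.rpow_nonneg hs (3 - n)
  have hc := Real.one_le_cosh s
  have ha := kap_nonneg s a
  have ha' := kap_le_cosh s a
  set x := kap s a
  set c := Real.cosh s
  have e : G n ε δ s a - G n ε' δ' s a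
      = (ε - ε') * (s * x) - (δ - δ') * (s ^ (3 - n) * x ^ 3) := by
    simp only [G]; ring
  have hc4 : 1 ≤ c ^ 3 := one_le_pow₀ hc
  have hc5 : c ≤ c ^ 3 := le_self_pow₀ hc (by norm_num)
  have hx3 : x ^ 3 ≤ c ^ 3 := by gcongr
  rw [e]
  refine (abs_sub _ _).trans ?_
  rw [abs_mul, abs_mul (δ - δ'), abs_of_nonneg (mul_nonneg hs ha),
    abs_of_nonneg (mul_nonneg hp (pow_nonneg ha 3))]
  have hA : 0 ≤ s ^ (3 - n) * c ^ 3 := by positivity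
  have hB : 0 ≤ s * c ^ 3 := by positivity
  have h1 : s * x ≤ L n s := by
    have : s * x ≤ s * c ^ 3 := by gcongr; linarith
    unfold L; linarith
  have h2 : s ^ (3 - n) * x ^ 3 ≤ L n s := by
    have : s ^ (3 - n) * x ^ 3 ≤ s ^ (3 - n) * c ^ 3 := by gcongr
    unfold L; linarith
  have := mul_le_mul_of_nonneg_left h1 (abs_nonneg (ε - ε'))
  have := mul_le_mul_of_nonneg_left h2 (abs_nonneg (δ - δ'))
  linarith

lemma Lam_deriv {n : ℝ} (hn : n < 3) (r : ℝ) : HasDerivAt (Lam n) (2 * L n r) r :=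
  ((L_cont hn).integral_hasStrictDerivAt 0 r).hasDerivAt.const_mul 2

lemma Lam_cont {n : ℝ} (hn : n < 3) : Continuous (Lam n) :=
  continuous_iff_continuousAt.2 fun r => (Lam_deriv hn r).continuousAt

lemma Lam_zero (n : ℝ) : Lam n 0 = 0 := by simp [Lam]

lemma Lam_nonneg (n : ℝ) {r : ℝ} (hr : 0 ≤ r) : 0 ≤ Lam n r := by
  unfold Lam
  have := intervalIntegral.integral_nonneg (μ := MeasureTheory.volume) hr
    (fun s hs => L_nonneg n hs.1)
  positivity

lemma Lam_mono {n : ℝ} (hn : n < 3) {r R : ℝ} (hr : 0 ≤ r) (hR : r ≤ R) : Lam n r ≤ Lam n R := by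
  have hmono : MonotoneOn (Lam n) (Set.Ici 0) :=
    monotoneOn_of_hasDerivWithinAt_nonneg (convex_Ici 0) (Lam_cont hn).continuousOn
      (fun x _ => (Lam_deriv hn x).hasDerivWithinAt)
      (fun x hx => by
        rw [interior_Ici] at hx
        have := L_nonneg n (le_of_lt hx)
        positivity)
  exact hmono hr (hr.trans hR) hR

/-- The kernel `r (1 - θ)` of the Volterra operator costs no more than plain integration on `[0, R]`. -/
lemma vol_bound {R : ℝ} (hR : 0 ≤ R) {F b : ℝ → ℝ} (hb : Continuous b)
    (h : ∀ s, 0 ≤ s → s ≤ R → |F s| ≤ b s) :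
    |∫ θ in (0 : ℝ)..1, R * ((1 - θ) * F (R * θ))| ≤ ∫ s in (0 : ℝ)..R, b s := by
  have e : ∫ s in (0 : ℝ)..R, b s = ∫ θ in (0 : ℝ)..1, R * b (R * θ) := by
    have := intervalIntegral.smul_integral_comp_mul_left (a := 0) (b := 1) b R
    rw [intervalIntegral.integral_const_mul, ← smul_eq_mul, this]
    simp
  rw [e, ← Real.norm_eq_abs]
  refine intervalIntegral.norm_integral_le_of_norm_le zero_le_one ?_
    (Continuous.intervalIntegrable (by fun_prop) _ _)
  refine Filter.Eventually.of_forall fun θ hθ => ?_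
  have h1 := h (R * θ) (mul_nonneg hR hθ.1.le) (mul_le_of_le_one_right hR hθ.2)
  rw [Real.norm_eq_abs, abs_mul, abs_mul, abs_of_nonneg hR,
    abs_of_nonneg (sub_nonneg.2 hθ.2)]
  gcongr
  calc (1 - θ) * |F (R * θ)| ≤ 1 * |F (R * θ)| := by
        gcongr; linarith [hθ.1]
    _ ≤ _ := by linarith

/-- The gain `1 / 2` from the weight: `L exp(Lam)` is the derivative of `exp(Lam) / 2`. -/
lemma weight_exp {n : ℝ} (hn : n < 3) {R c : ℝ} (hc : 0 ≤ c) :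
    Real.exp (-Lam n R) * ∫ s in (0 : ℝ)..R, L n s * (Real.exp (Lam n s) * c) ≤ c / 2 := by
  have h : ∫ s in (0 : ℝ)..R, L n s * (Real.exp (Lam n s) * c)
      = Real.exp (Lam n R) * (c / 2) - Real.exp (Lam n 0) * (c / 2) := by
    refine intervalIntegral.integral_eq_sub_of_hasDerivAt
      (f := fun s => Real.exp (Lam n s) * (c / 2)) (fun s _ => ?_) ?_
    · refine ((Lam_deriv hn s).exp.mul_const (c / 2)).congr_deriv ?_
      ring
    · have := L_cont hn
      have := Lam_cont hn
      exact Continuous.intervalIntegrable (by fun_prop) _ _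
  rw [h, Lam_zero, Real.exp_zero, mul_sub, ← mul_assoc, ← Real.exp_add]
  have := Real.exp_pos (-Lam n R)
  simp only [neg_add_cancel, Real.exp_zero, one_mul]
  nlinarith

lemma weight_const {n : ℝ} {R c : ℝ} (hc : 0 ≤ c) :
    Real.exp (-Lam n R) * ∫ s in (0 : ℝ)..R, L n s * c ≤ c / 2 := by
  rw [intervalIntegral.integral_mul_const]
  have h : ∫ s in (0 : ℝ)..R, L n s = Lam n R / 2 := by unfold Lam; ring
  rw [h]
  have h1 : Real.exp (-Lam n R) * Lam n R ≤ 1 := by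
    have := Real.add_one_le_exp (Lam n R)
    have h2 := Real.exp_pos (-Lam n R)
    have h3 : Real.exp (-Lam n R) * Real.exp (Lam n R) = 1 := by rw [← Real.exp_add]; simp
    nlinarith
  nlinarith

lemma T_cont {n : ℝ} (hn : n < 3) (ε δ : ℝ) {y : ℝ → ℝ} (hy : Continuous y) :
    Continuous (T n ε δ y) := by
  unfold T
  have hG := G_cont hn ε δ
  have hL := Lam_cont hn
  have hm : Continuous fun r : ℝ => max r 0 := by fun_prop
  refine Continuous.mul (by fun_prop) (continuous_const.add ?_)
  refine intervalIntegral.continuous_parametric_intervalIntegral_of_continuous' ?_ _ _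
  unfold Function.uncurry
  have h1 : Continuous fun p : ℝ × ℝ => max p.1 0 * p.2 := by fun_prop
  have h2 : Continuous fun p : ℝ × ℝ => G n ε δ (max p.1 0 * p.2)
      (Real.exp (Lam n (max p.1 0 * p.2)) * y (max p.1 0 * p.2)) :=
    hG.comp (h1.prodMk (by fun_prop))
  fun_prop

lemma T_integrable {n : ℝ} (hn : n < 3) (ε δ : ℝ) {y : ℝ → ℝ} (hy : Continuous y) (R : ℝ) :
    IntervalIntegrable (fun θ => R * ((1 - θ) *
      G n ε δ (R * θ) (Real.exp (Lam n (R * θ)) * y (R * θ)))) MeasureTheory.volume 0 1 := by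
  have hG := G_cont hn ε δ
  have hL := Lam_cont hn
  have h2 : Continuous fun θ : ℝ => G n ε δ (R * θ) (Real.exp (Lam n (R * θ)) * y (R * θ)) :=
    hG.comp (Continuous.prodMk (by fun_prop) (by fun_prop))
  exact Continuous.intervalIntegrable (by fun_prop) _ _

/-- The basic difference estimate: with equal parameters it yields the contraction property, and with
equal arguments the Lipschitz dependence on `(ε, δ)`. -/
lemma T_sub {n : ℝ} (hn : n < 3) (ε δ ε' δ' : ℝ) {y z : ℝ → ℝ} (hy : Continuous y)
    (hz : Continuous z) {b : ℝ → ℝ} (hb : Continuous b) (r : ℝ)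
    (h : ∀ s, 0 ≤ s → |G n ε δ s (Real.exp (Lam n s) * y s)
      - G n ε' δ' s (Real.exp (Lam n s) * z s)| ≤ b s) :
    |T n ε δ y r - T n ε' δ' z r|
      ≤ Real.exp (-Lam n (max r 0)) * ∫ s in (0 : ℝ)..(max r 0), b s := by
  have hR : 0 ≤ max r 0 := le_max_right _ _
  unfold T
  set R := max r 0
  rw [← mul_sub, add_sub_add_left_eq_sub, ← intervalIntegral.integral_sub
    (T_integrable hn ε δ hy R) (T_integrable hn ε' δ' hz R), abs_mul,
    abs_of_pos (Real.exp_pos _)]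
  gcongr
  have := vol_bound hR (F := fun s => G n ε δ s (Real.exp (Lam n s) * y s)
      - G n ε' δ' s (Real.exp (Lam n s) * z s)) hb (fun s hs _ => h s hs)
  simp only [mul_sub] at this ⊢
  exact this

lemma T_bound {n : ℝ} (hn : n < 3) {ε δ : ℝ} {y : ℝ → ℝ} (hy : Continuous y) (r : ℝ) :
    ‖T n ε δ y r‖ ≤ 1 + (|ε| + |δ|) / 2 := by
  have hL := L_cont hn
  have h1 := T_sub hn ε δ 0 0 hy hy (b := fun s => L n s * (|ε| + |δ|)) (by fun_prop) r
    (fun s hs => by simpa using G_param n hs ε δ 0 0 (Real.exp (Lam n s) * y s))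
  have h2 := h1.trans (weight_const (by positivity))
  have h3 : T n 0 0 y r = Real.exp (-Lam n (max r 0)) := by simp [T, G]
  have h4 : Real.exp (-Lam n (max r 0)) ≤ 1 := by
    rw [Real.exp_le_one_iff]
    linarith [Lam_nonneg n (le_max_right r 0)]
  rw [Real.norm_eq_abs]
  rw [h3] at h2
  have h5 := Real.exp_pos (-Lam n (max r 0))
  rw [abs_le] at h2 ⊢
  constructor <;> linarith

open scoped BoundedContinuousFunction in
/-- The operator `T n ε δ` acting on bounded continuous functions. -/
noncomputable def TB {n : ℝ} (hn : n < 3) (ε δ : ℝ) (y : ℝ →ᵇ ℝ) : ℝ →ᵇ ℝ :=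
  BoundedContinuousFunction.ofNormedAddCommGroup (T n ε δ y) (T_cont hn ε δ y.continuous)
    (1 + (|ε| + |δ|) / 2) (T_bound hn y.continuous)

open scoped BoundedContinuousFunction in
lemma TB_dist {n : ℝ} (hn : n < 3) {ε δ : ℝ} (hε : |ε| ≤ 1) (hδ : |δ| ≤ 1) (y z : ℝ →ᵇ ℝ) :
    dist (TB hn ε δ y) (TB hn ε δ z) ≤ dist y z / 2 := by
  have hL := L_cont hn
  have hLam := Lam_cont hn
  rw [BoundedContinuousFunction.dist_le (by positivity)]
  intro r
  rw [Real.dist_eq]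
  refine (T_sub hn ε δ ε δ y.continuous z.continuous
    (b := fun s => L n s * (Real.exp (Lam n s) * dist y z)) (by fun_prop) r ?_).trans
    (weight_exp hn dist_nonneg)
  intro s hs
  refine (G_lip n hε hδ hs _ _).trans ?_
  rw [← mul_sub, abs_mul, abs_of_pos (Real.exp_pos _), ← Real.dist_eq]
  have := L_nonneg n hs
  gcongr
  exact BoundedContinuousFunction.dist_coe_le_dist s

lemma TB_contracting {n : ℝ} (hn : n < 3) {ε δ : ℝ} (hε : |ε| ≤ 1) (hδ : |δ| ≤ 1) :
    ContractingWith (1 / 2) (TB hn ε δ) := by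
  refine ⟨by
    rw [← NNReal.coe_lt_coe]; norm_num, LipschitzWith.of_dist_le_mul fun y z => ?_⟩
  have := TB_dist hn hε hδ y z
  simp only [NNReal.coe_div, NNReal.coe_one, NNReal.coe_ofNat]
  linarith

lemma TB_param {n : ℝ} (hn : n < 3) (ε δ ε' δ' : ℝ) (y) :
    dist (TB hn ε δ y) (TB hn ε' δ' y) ≤ (|ε - ε'| + |δ - δ'|) / 2 := by
  have hL := L_cont hn
  rw [BoundedContinuousFunction.dist_le (by positivity)]
  intro r
  rw [Real.dist_eq]
  exact (T_sub hn ε δ ε' δ' y.continuous y.continuous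
    (b := fun s => L n s * (|ε - ε'| + |δ - δ'|)) (by fun_prop) r
    (fun s hs => G_param n hs _ _ _ _ _)).trans (weight_const (by positivity))

/-- `q`, `u = r q`, `v = u'` form the solution of the truncated equation `u'' = G(r, q)` with
`u(0) = 0`, `u'(0) = 1`. The functions live on all of `ℝ`, but only `r ≥ 0` is meaningful. -/
structure IsSol (n ε δ : ℝ) (q u v : ℝ → ℝ) : Prop where
  q_cont : Continuous q
  q_zero : q 0 = 1
  u_eq : ∀ r, 0 ≤ r → u r = r * q r
  hu : ∀ r, HasDerivAt u (v r) r
  hv : ∀ r, HasDerivAt v (G n ε δ r (q r)) r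
  v_zero : v 0 = 1

/-- Since `r ∫₀¹ (1 - θ) f(rθ) r dθ = ∫₀ʳ (r - s) f(s) ds`, a solution of the Volterra equation solves
the initial value problem. -/
lemma isSol_of_volterra {n ε δ : ℝ} (hn : n < 3) {q : ℝ → ℝ} (hq : Continuous q)
    (h : ∀ r, 0 ≤ r → q r = 1 + ∫ θ in (0 : ℝ)..1, r * ((1 - θ) * G n ε δ (r * θ) (q (r * θ)))) :
    IsSol n ε δ q
      (fun r => r + (r * (∫ s in (0 : ℝ)..r, G n ε δ s (q s))
        - ∫ s in (0 : ℝ)..r, s * G n ε δ s (q s)))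
      (fun r => 1 + ∫ s in (0 : ℝ)..r, G n ε δ s (q s)) := by
  have hc : Continuous fun s => G n ε δ s (q s) :=
    (G_cont hn ε δ).comp (continuous_id.prodMk hq)
  set f : ℝ → ℝ := fun s => G n ε δ s (q s) with hf
  have hc2 : Continuous fun s => s * f s := by fun_prop
  have d1 : ∀ r, HasDerivAt (fun r => ∫ s in (0 : ℝ)..r, f s) (f r) r := fun r =>
    (hc.integral_hasStrictDerivAt 0 r).hasDerivAt
  have d2 : ∀ r, HasDerivAt (fun r => ∫ s in (0 : ℝ)..r, s * f s) (r * f r) r := fun r =>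
    (hc2.integral_hasStrictDerivAt 0 r).hasDerivAt
  refine ⟨hq, by simpa using h 0 le_rfl, fun r hr => ?_, fun r => ?_, fun r => ?_, by simp⟩
  · rw [h r hr, mul_add, mul_one]
    congr 1
    have e := intervalIntegral.smul_integral_comp_mul_left (a := 0) (b := 1)
      (fun s => (r - s) * f s) r
    rw [mul_zero, mul_one, smul_eq_mul] at e
    have e2 : ∫ s in (0 : ℝ)..r, (r - s) * f s
        = r * (∫ s in (0 : ℝ)..r, f s) - ∫ s in (0 : ℝ)..r, s * f s := by
      rw [← intervalIntegral.integral_const_mul, ← intervalIntegral.integral_sub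
        (Continuous.intervalIntegrable (by fun_prop) _ _) (hc2.intervalIntegrable _ _)]
      congr 1
      ext s
      ring
    rw [← e2, ← e]
    congr 2
    ext θ
    simp only [hf]
    ring
  · refine ((hasDerivAt_id r).add (((hasDerivAt_id r).mul (d1 r)).sub (d2 r))).congr_deriv ?_
    simp only [id]
    ring
  · exact (d1 r).const_add 1

/-- Solutions exist globally for all `|ε|, |δ| ≤ 1`, and `q` and `v` depend on `(ε, δ)` in a Lipschitz
way, uniformly on compact intervals. -/
lemma exists_family {n : ℝ} (hn : n < 3) : ∃ q u v : ℝ → ℝ → ℝ → ℝ,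
    (∀ ε δ, |ε| ≤ 1 → |δ| ≤ 1 → IsSol n ε δ (q ε δ) (u ε δ) (v ε δ)) ∧
    ∀ R, 0 ≤ R → ∃ C, ∀ ε δ ε' δ', |ε| ≤ 1 → |δ| ≤ 1 → |ε'| ≤ 1 → |δ'| ≤ 1 →
      ∀ r, 0 ≤ r → r ≤ R →
        |q ε δ r - q ε' δ' r| ≤ C * (|ε - ε'| + |δ - δ'|) ∧
        |v ε δ r - v ε' δ' r| ≤ C * (|ε - ε'| + |δ - δ'|) := by
  classical
  have hL := L_cont hn
  have hLam := Lam_cont hn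
  let y : ℝ → ℝ → ℝ → ℝ := fun ε δ => if h : |ε| ≤ 1 ∧ |δ| ≤ 1 then
    ⇑((TB_contracting hn h.1 h.2).fixedPoint (TB hn ε δ)) else 0
  let q : ℝ → ℝ → ℝ → ℝ := fun ε δ r => Real.exp (Lam n r) * y ε δ r
  have hy : ∀ ε δ (h1 : |ε| ≤ 1) (h2 : |δ| ≤ 1),
      y ε δ = ⇑((TB_contracting hn h1 h2).fixedPoint (TB hn ε δ)) := fun ε δ h1 h2 => by
    simp only [y]; rw [dif_pos ⟨h1, h2⟩]
  have hqc : ∀ ε δ, |ε| ≤ 1 → |δ| ≤ 1 → Continuous (q ε δ) := fun ε δ h1 h2 => by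
    have : Continuous (y ε δ) := by rw [hy ε δ h1 h2]; exact BoundedContinuousFunction.continuous _
    simp only [q]
    fun_prop
  have hyq : ∀ ε δ ε' δ' r, |ε| ≤ 1 → |δ| ≤ 1 → |ε'| ≤ 1 → |δ'| ≤ 1 →
      |q ε δ r - q ε' δ' r| ≤ Real.exp (Lam n r) * (|ε - ε'| + |δ - δ'|) := by
    intro ε δ ε' δ' r h1 h2 h3 h4
    simp only [q]
    rw [← mul_sub, abs_mul, abs_of_pos (Real.exp_pos _), hy _ _ h1 h2, hy _ _ h3 h4]
    gcongr
    rw [← Real.dist_eq]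
    refine (BoundedContinuousFunction.dist_coe_le_dist r).trans ?_
    refine ((TB_contracting hn h1 h2).fixedPoint_lipschitz_in_map (TB_contracting hn h3 h4)
      (TB_param hn ε δ ε' δ')).trans (le_of_eq ?_)
    simp only [NNReal.coe_div, NNReal.coe_one, NNReal.coe_ofNat]
    ring
  refine ⟨q, _, _, fun ε δ h1 h2 => isSol_of_volterra hn (hqc ε δ h1 h2) fun r hr => ?_, ?_⟩
  · have hfix : T n ε δ (y ε δ) r = y ε δ r := by
      rw [hy ε δ h1 h2]
      exact DFunLike.congr_fun (TB_contracting hn h1 h2).fixedPoint_isFixedPt r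
    have e : q ε δ r = Real.exp (Lam n r) * T n ε δ (y ε δ) r := by rw [hfix]
    rw [e, T, max_eq_left hr, ← mul_assoc, ← Real.exp_add, add_neg_cancel, Real.exp_zero, one_mul]
  · intro R hR
    refine ⟨Real.exp (Lam n R) + (Real.exp (Lam n R) + 1) * (Lam n R / 2),
      fun ε δ ε' δ' h1 h2 h3 h4 r hr hrR => ?_⟩
    have hd : 0 ≤ |ε - ε'| + |δ - δ'| := by positivity
    set d := |ε - ε'| + |δ - δ'|
    have hqR : ∀ s, 0 ≤ s → s ≤ R → |q ε δ s - q ε' δ' s| ≤ Real.exp (Lam n R) * d := by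
      intro s hs hsR
      refine (hyq ε δ ε' δ' s h1 h2 h3 h4).trans ?_
      have := Lam_mono hn hs hsR
      gcongr
    have hL0 := Lam_nonneg n hR
    have hE := Real.exp_pos (Lam n R)
    refine ⟨(hqR r hr hrR).trans ?_, ?_⟩
    · gcongr
      have : 0 ≤ (Real.exp (Lam n R) + 1) * (Lam n R / 2) := by positivity
      linarith
    · have i1 := ((G_cont hn ε δ).comp (continuous_id.prodMk (hqc ε δ h1 h2))).intervalIntegrable
        (μ := MeasureTheory.volume) 0 r
      have i2 := ((G_cont hn ε' δ').comp
        (continuous_id.prodMk (hqc ε' δ' h3 h4))).intervalIntegrable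
        (μ := MeasureTheory.volume) 0 r
      simp only [Function.comp_def, id] at i1 i2
      rw [add_sub_add_left_eq_sub, ← intervalIntegral.integral_sub i1 i2, ← Real.norm_eq_abs]
      refine (intervalIntegral.norm_integral_le_of_norm_le hr
        (g := fun s => L n s * ((Real.exp (Lam n R) + 1) * d))
        (Filter.Eventually.of_forall fun s hs => ?_)
        (Continuous.intervalIntegrable (by fun_prop) _ _)).trans ?_
      · rw [Real.norm_eq_abs]
        have a1 := G_lip n h1 h2 hs.1.le (q ε δ s) (q ε' δ' s)
        have a2 := G_param n hs.1.le ε δ ε' δ' (q ε' δ' s)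
        have a3 := hqR s hs.1.le (hs.2.trans hrR)
        have a4 := mul_le_mul_of_nonneg_left a3 (L_nonneg n hs.1.le)
        refine (abs_sub_le _ (G n ε δ s (q ε' δ' s)) _).trans ?_
        simp only [d] at *
        linarith
      · rw [intervalIntegral.integral_mul_const]
        have e : ∫ s in (0 : ℝ)..r, L n s = Lam n r / 2 := by unfold Lam; ring
        rw [e]
        have a1 := Lam_mono hn hr hrR
        have a2 : Lam n r / 2 * ((Real.exp (Lam n R) + 1) * d)
          ≤ Lam n R / 2 * ((Real.exp (Lam n R) + 1) * d) := by gcongr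
        have : 0 ≤ Real.exp (Lam n R) * d := by positivity
        linarith

/-! ### Comparison with `sinh` and energy -/

lemma sinh_le_mul_cosh {r : ℝ} (hr : 0 ≤ r) : Real.sinh r ≤ r * Real.cosh r := by
  have hmono : MonotoneOn (fun r => r * Real.cosh r - Real.sinh r) (Set.Ici 0) := by
    refine monotoneOn_of_hasDerivWithinAt_nonneg (f' := fun r => r * Real.sinh r)
      (convex_Ici 0) ?_ (fun x _ => ?_) (fun x hx => ?_)
    · have := Real.continuous_cosh
      have := Real.continuous_sinh
      fun_prop
    · refine HasDerivAt.hasDerivWithinAt ?_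
      refine (((hasDerivAt_id x).mul (Real.hasDerivAt_cosh x)).sub
        (Real.hasDerivAt_sinh x)).congr_deriv ?_
      simp
    · rw [interior_Ici] at hx
      exact mul_nonneg (le_of_lt hx) (Real.sinh_nonneg_iff.2 (le_of_lt hx))
  have := hmono (Set.mem_Ici.2 le_rfl) hr hr
  simp at this
  linarith

lemma G_le {n ε δ s q : ℝ} (hε1 : ε ≤ 1) (hδ : 0 ≤ δ) (hs : 0 ≤ s)
    (hq : 0 ≤ q) : G n ε δ s q ≤ s * q := by
  have h1 := kap_nonneg s q
  have h2 : kap s q ≤ q := max_le hq (min_le_left _ _)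
  have h3 := Real.rpow_nonneg hs (3 - n)
  have h4 : 0 ≤ δ * (s ^ (3 - n) * kap s q ^ 3) := by positivity
  have h5 : ε * (s * kap s q) ≤ 1 * (s * kap s q) := by gcongr
  have h6 : s * kap s q ≤ s * q := by gcongr
  unfold G
  linarith

/-- The energy `u'² / 2 - ε u² / 2 + δ r^(-n) u⁴ / 4`, with the last term expressed through `q`, which
gives it the right value at `r = 0`. -/
noncomputable def En (n ε δ : ℝ) (q u v : ℝ → ℝ) (r : ℝ) : ℝ :=
  v r ^ 2 / 2 - ε * u r ^ 2 / 2 + δ * (r ^ (4 - n) * q r ^ 4) / 4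

namespace IsSol

variable {n ε δ : ℝ} {q u v : ℝ → ℝ}

lemma u_cont (S : IsSol n ε δ q u v) : Continuous u :=
  continuous_iff_continuousAt.2 fun r => (S.hu r).continuousAt

lemma v_cont (S : IsSol n ε δ q u v) : Continuous v :=
  continuous_iff_continuousAt.2 fun r => (S.hv r).continuousAt

lemma u_zero (S : IsSol n ε δ q u v) : u 0 = 0 := by simp [S.u_eq 0 le_rfl]

/-- The Wronskian `v sinh - u cosh` of `u` and `sinh`, where `sinh` solves the equation with `ε = 1`,
`δ = 0`. -/
lemma hasDerivAt_W (S : IsSol n ε δ q u v) (r : ℝ) :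
    HasDerivAt (fun r => v r * Real.sinh r - u r * Real.cosh r)
      ((G n ε δ r (q r) - u r) * Real.sinh r) r := by
  refine (((S.hv r).mul (Real.hasDerivAt_sinh r)).sub
    ((S.hu r).mul (Real.hasDerivAt_cosh r))).congr_deriv ?_
  ring

lemma W_antitone (S : IsSol n ε δ q u v) (hε1 : ε ≤ 1) (hδ : 0 ≤ δ) {R : ℝ}
    (hq : ∀ r, 0 ≤ r → r ≤ R → 0 ≤ q r) :
    AntitoneOn (fun r => v r * Real.sinh r - u r * Real.cosh r) (Set.Icc 0 R) := by
  refine antitoneOn_of_hasDerivWithinAt_nonpos (convex_Icc 0 R)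
    (fun x _ => (S.hasDerivAt_W x).continuousAt.continuousWithinAt)
    (fun x _ => (S.hasDerivAt_W x).hasDerivWithinAt) (fun x hx => ?_)
  rw [interior_Icc] at hx
  have := G_le (n := n) hε1 hδ hx.1.le (hq x hx.1.le hx.2.le)
  rw [← S.u_eq x hx.1.le] at this
  have h2 := Real.sinh_nonneg_iff.2 hx.1.le
  nlinarith

lemma W_nonpos (S : IsSol n ε δ q u v) (hε1 : ε ≤ 1) (hδ : 0 ≤ δ) {R : ℝ}
    (hq : ∀ r, 0 ≤ r → r ≤ R → 0 ≤ q r) {r : ℝ} (hr : 0 ≤ r) (hrR : r ≤ R) :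
    v r * Real.sinh r - u r * Real.cosh r ≤ 0 := by
  have := S.W_antitone hε1 hδ hq ⟨le_rfl, hr.trans hrR⟩ ⟨hr, hrR⟩ hr
  simpa [S.u_zero] using this

lemma hasDerivAt_div_sinh (S : IsSol n ε δ q u v) {r : ℝ} (hr : 0 < r) :
    HasDerivAt (fun r => u r / Real.sinh r)
      ((v r * Real.sinh r - u r * Real.cosh r) / Real.sinh r ^ 2) r :=
  (S.hu r).div (Real.hasDerivAt_sinh r) (Real.sinh_pos_iff.2 hr).ne'

/-- Sturm comparison: `u / sinh` is nonincreasing, because its derivative is the Wronskian over `sinh²`,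
and it tends to `1` at `0`. -/
lemma u_le_sinh (S : IsSol n ε δ q u v) (hε1 : ε ≤ 1) (hδ : 0 ≤ δ) {R : ℝ}
    (hq : ∀ r, 0 ≤ r → r ≤ R → 0 ≤ q r) {r : ℝ} (hr : 0 ≤ r) (hrR : r ≤ R) :
    u r ≤ Real.sinh r := by
  rcases hr.eq_or_lt with rfl | hr
  · simp [S.u_zero]
  have hanti : AntitoneOn (fun r => u r / Real.sinh r) (Set.Ioc 0 R) := by
    refine antitoneOn_of_hasDerivWithinAt_nonpos (convex_Ioc 0 R)
      (fun x hx => (S.hasDerivAt_div_sinh hx.1).continuousAt.continuousWithinAt)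
      (fun x hx => ?_) (fun x hx => ?_)
      (f' := fun r => (v r * Real.sinh r - u r * Real.cosh r) / Real.sinh r ^ 2)
    · rw [interior_Ioc] at hx
      exact (S.hasDerivAt_div_sinh hx.1).hasDerivWithinAt
    · rw [interior_Ioc] at hx
      exact div_nonpos_of_nonpos_of_nonneg (S.W_nonpos hε1 hδ hq hx.1.le hx.2.le) (sq_nonneg _)
  have key : u r / Real.sinh r ≤ 1 := by
    have ht : Tendsto q (nhdsWithin 0 (Set.Ioi 0)) (nhds 1) := by
      rw [← S.q_zero]
      exact S.q_cont.continuousAt.continuousWithinAt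
    refine ge_of_tendsto ht ?_
    filter_upwards [Ioc_mem_nhdsGT hr] with s hs
    have h1 := hanti ⟨hs.1, hs.2.trans hrR⟩ ⟨hr, hrR⟩ hs.2
    refine h1.trans ?_
    have h2 := Real.self_le_sinh_iff.2 hs.1.le
    have h3 := Real.sinh_pos_iff.2 hs.1
    simp only
    rw [div_le_iff₀ h3, S.u_eq s hs.1.le]
    nlinarith [hq s hs.1.le (hs.2.trans hrR)]
  have h3 := Real.sinh_pos_iff.2 hr
  rwa [div_le_one h3] at key

/-- While `q ≥ 0`, the comparison with `sinh` keeps `q` below `cosh`, so the truncation does nothing. -/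
lemma kap_eq (S : IsSol n ε δ q u v) (hε1 : ε ≤ 1) (hδ : 0 ≤ δ) {R : ℝ}
    (hq : ∀ r, 0 ≤ r → r ≤ R → 0 ≤ q r) {r : ℝ} (hr : 0 ≤ r) (hrR : r ≤ R) :
    kap r (q r) = q r := by
  have h : q r ≤ Real.cosh r := by
    rcases hr.eq_or_lt with rfl | hr'
    · simp [S.q_zero]
    · have h1 := (S.u_le_sinh hε1 hδ hq hr hrR).trans (sinh_le_mul_cosh hr)
      rw [S.u_eq r hr] at h1
      exact le_of_mul_le_mul_left h1 hr'
  unfold kap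
  rw [min_eq_left h, max_eq_right (hq r hr hrR)]

lemma G_eq (S : IsSol n ε δ q u v) {r : ℝ} (hr : 0 < r) (hk : kap r (q r) = q r) :
    G n ε δ r (q r) = ε * u r - δ * (r ^ (-n) * u r ^ 3) := by
  unfold G
  rw [hk, S.u_eq r hr.le, show (3 - n) = -n + (3 : ℕ) by push_cast; ring,
    Real.rpow_add_natCast hr.ne']
  ring

lemma u_pos (S : IsSol n ε δ q u v) {r : ℝ} (hr : 0 < r) (h : 0 < q r) : 0 < u r := by
  rw [S.u_eq r hr.le]; positivity

lemma quartic (S : IsSol n ε δ q u v) {r : ℝ} (hr : 0 < r) :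
    r ^ (4 - n) * q r ^ 4 = r ^ (-n) * u r ^ 4 := by
  rw [S.u_eq r hr.le, show (4 - n) = -n + (4 : ℕ) by push_cast; ring,
    Real.rpow_add_natCast hr.ne']
  ring

lemma En_eq (S : IsSol n ε δ q u v) {r : ℝ} (hr : 0 < r) :
    En n ε δ q u v r = v r ^ 2 / 2 - ε * u r ^ 2 / 2 + δ * (r ^ (-n) * u r ^ 4) / 4 := by
  rw [En, S.quartic hr]

lemma En_cont (S : IsSol n ε δ q u v) (hn : n < 3) : Continuous (En n ε δ q u v) := by
  unfold En
  have h1 := S.q_cont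
  have h2 := S.u_cont
  have h3 := S.v_cont
  have h4 : Continuous fun r : ℝ => r ^ (4 - n) := Real.continuous_rpow_const (by linarith)
  fun_prop

lemma En_zero (S : IsSol n ε δ q u v) (hn : n < 3) : En n ε δ q u v 0 = 1 / 2 := by
  simp [En, S.u_zero, S.v_zero, Real.zero_rpow (show (4 - n) ≠ 0 by linarith)]

lemma hasDerivAt_quartic (S : IsSol n ε δ q u v) (a : ℝ) {r : ℝ} (hr : 0 < r) :
    HasDerivAt (fun r => r ^ a * u r ^ 4) (a * r ^ (a - 1) * u r ^ 4
      + r ^ a * (4 * u r ^ 3 * v r)) r := by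
  refine ((Real.hasDerivAt_rpow_const (Or.inl hr.ne')).mul ((S.hu r).pow 4)).congr_deriv ?_
  norm_num

lemma hasDerivAt_En (S : IsSol n ε δ q u v) {r : ℝ} (hr : 0 < r) (hk : kap r (q r) = q r) :
    HasDerivAt (En n ε δ q u v) (-(δ * n / 4) * (r ^ (-n - 1) * u r ^ 4)) r := by
  have h1 : HasDerivAt (fun r => v r ^ 2 / 2 - ε * u r ^ 2 / 2 + δ * (r ^ (-n) * u r ^ 4) / 4)
      (-(δ * n / 4) * (r ^ (-n - 1) * u r ^ 4)) r := by
    refine (((((S.hv r).pow 2).div_const 2).sub ((((S.hu r).pow 2).const_mul ε).div_const 2)).add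
      (((S.hasDerivAt_quartic (-n) hr).const_mul δ).div_const 4)).congr_deriv ?_
    rw [S.G_eq hr hk]
    push_cast
    ring
  refine h1.congr_of_eventuallyEq ?_
  filter_upwards [lt_mem_nhds hr] with s hs
  exact S.En_eq hs

lemma En_antitone (S : IsSol n ε δ q u v) (hn0 : 0 < n) (hn : n < 3) (hε1 : ε ≤ 1) (hδ : 0 ≤ δ)
    {R : ℝ} (hq : ∀ r, 0 ≤ r → r ≤ R → 0 ≤ q r) :
    AntitoneOn (En n ε δ q u v) (Set.Icc 0 R) := by
  refine antitoneOn_of_hasDerivWithinAt_nonpos (convex_Icc 0 R) (S.En_cont hn).continuousOn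
    (f' := fun r => -(δ * n / 4) * (r ^ (-n - 1) * u r ^ 4)) (fun x hx => ?_) (fun x hx => ?_)
  all_goals rw [interior_Icc] at hx
  · exact (S.hasDerivAt_En hx.1 (S.kap_eq hε1 hδ hq hx.1.le hx.2.le)).hasDerivWithinAt
  · have := Real.rpow_nonneg hx.1.le (-n - 1)
    have : 0 ≤ (δ * n / 4) * (x ^ (-n - 1) * u x ^ 4) := by positivity
    linarith

/-- A nonnegative solution cannot touch zero. At a zero `r`, also `v r = 0`, so the Wronskian with
`sinh` vanishes at both `0` and `r`; being monotone it vanishes between, which forces `q = 0` there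
and contradicts `q 0 = 1`. -/
lemma pos_of_nonneg (S : IsSol n ε δ q u v) (hε1 : ε ≤ 1) (hδ : 0 < δ)
    (hq : ∀ r, 0 ≤ r → 0 ≤ q r) {r : ℝ} (hr : 0 < r) : 0 < q r := by
  refine (hq r hr.le).lt_of_ne fun h0 => ?_
  have hu0 : u r = 0 := by rw [S.u_eq r hr.le, ← h0, mul_zero]
  have hmin : IsLocalMin u r := by
    filter_upwards [lt_mem_nhds hr] with s hs
    rw [hu0, S.u_eq s (le_of_lt hs)]
    exact mul_nonneg (le_of_lt hs) (hq s (le_of_lt hs))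
  have hv0 : v r = 0 := hmin.hasDerivAt_eq_zero (S.hu r)
  have hqR : ∀ s, 0 ≤ s → s ≤ r → 0 ≤ q s := fun s hs _ => hq s hs
  have hW0 : ∀ s ∈ Set.Icc 0 r, v s * Real.sinh s - u s * Real.cosh s = 0 := by
    intro s hs
    refine le_antisymm (S.W_nonpos hε1 hδ.le hqR hs.1 hs.2) ?_
    have := S.W_antitone hε1 hδ.le hqR hs ⟨hr.le, le_rfl⟩ hs.2
    simpa [hu0, hv0] using this
  have hzero : ∀ s ∈ Set.Ioo 0 r, q s = 0 := by
    intro s hs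
    have h1 : HasDerivAt (fun r => v r * Real.sinh r - u r * Real.cosh r) 0 s := by
      refine (hasDerivAt_const s (0 : ℝ)).congr_of_eventuallyEq ?_
      filter_upwards [Ioo_mem_nhds hs.1 hs.2] with t ht
      exact hW0 t ⟨ht.1.le, ht.2.le⟩
    have h2 := h1.unique (S.hasDerivAt_W s)
    have h3 := Real.sinh_pos_iff.2 hs.1
    have h4 : G n ε δ s (q s) - u s = 0 := by
      rcases mul_eq_zero.1 h2.symm with h | h
      · exact h
      · exact absurd h h3.ne'
    rw [G, S.kap_eq hε1 hδ.le hqR hs.1.le hs.2.le, S.u_eq s hs.1.le] at h4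
    by_contra hne
    have hqs : 0 < q s := lt_of_le_of_ne (hq s hs.1.le) (Ne.symm hne)
    have h5 := Real.rpow_pos_of_pos hs.1 (3 - n)
    have h6 : 0 < δ * (s ^ (3 - n) * q s ^ 3) := by positivity
    have h7 : 0 < s * q s := mul_pos hs.1 hqs
    nlinarith
  have ht : Tendsto q (nhdsWithin 0 (Set.Ioi 0)) (nhds 1) := by
    rw [← S.q_zero]
    exact S.q_cont.continuousAt.continuousWithinAt
  have ht2 : Tendsto q (nhdsWithin 0 (Set.Ioi 0)) (nhds 0) := by
    refine tendsto_const_nhds.congr' ?_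
    filter_upwards [Ioo_mem_nhdsGT hr] with s hs
    exact (hzero s hs).symm
  exact one_ne_zero (tendsto_nhds_unique ht ht2)

lemma exists_first_zero (S : IsSol n ε δ q u v) {r : ℝ} (hr : 0 ≤ r) (h : q r ≤ 0) :
    ∃ r₀, 0 < r₀ ∧ r₀ ≤ r ∧ q r₀ = 0 ∧ ∀ s, 0 ≤ s → s < r₀ → 0 < q s := by
  have ivt : ∀ s, 0 ≤ s → q s ≤ 0 → ∃ t, 0 ≤ t ∧ t ≤ s ∧ q t = 0 := by
    intro s hs hqs
    obtain ⟨t, ht, ht0⟩ := intermediate_value_Icc' hs S.q_cont.continuousOn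
      (show (0 : ℝ) ∈ Set.Icc (q s) (q 0) from ⟨hqs, by rw [S.q_zero]; exact zero_le_one⟩)
    exact ⟨t, ht.1, ht.2, ht0⟩
  let Z : Set ℝ := {s | 0 ≤ s ∧ q s = 0}
  have hZc : IsClosed Z :=
    (isClosed_le continuous_const continuous_id).inter (isClosed_eq S.q_cont continuous_const)
  have hZb : BddBelow Z := ⟨0, fun s hs => hs.1⟩
  obtain ⟨t, ht, htr, ht0⟩ := ivt r hr h
  have hmem : sInf Z ∈ Z := hZc.csInf_mem ⟨t, ht, ht0⟩ hZb
  refine ⟨sInf Z, lt_of_le_of_ne hmem.1 fun h0 => ?_, (csInf_le hZb ⟨ht, ht0⟩).trans htr, hmem.2,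
    fun s hs hsZ => ?_⟩
  · have := hmem.2
    rw [← h0, S.q_zero] at this
    exact one_ne_zero this
  · by_contra hneg
    obtain ⟨t, ht, hts, ht0⟩ := ivt s hs (not_lt.1 hneg)
    exact absurd (csInf_le hZb ⟨ht, ht0⟩) (by linarith)

/-- The energy decreases up to the first zero `r₀` of `q`, where it equals `v(r₀)² / 2`. -/
lemma En_nonneg_before_zero (S : IsSol n ε δ q u v) (hn0 : 0 < n) (hn : n < 3) (hε1 : ε ≤ 1)
    (hδ : 0 ≤ δ) {r₀ : ℝ} (h0 : q r₀ = 0)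
    (hpos : ∀ s, 0 ≤ s → s < r₀ → 0 < q s) {r : ℝ} (hr : 0 ≤ r) (hr0 : r ≤ r₀) :
    0 ≤ En n ε δ q u v r := by
  have hq : ∀ s, 0 ≤ s → s ≤ r₀ → 0 ≤ q s := fun s hs hs' => by
    rcases hs'.eq_or_lt with rfl | h
    · exact h0.ge
    · exact (hpos s hs h).le
  have h1 := S.En_antitone hn0 hn hε1 hδ hq ⟨hr, hr0⟩ ⟨hr.trans hr0, le_rfl⟩ hr0
  refine le_trans ?_ h1
  have hu0 : u r₀ = 0 := by rw [S.u_eq _ (hr.trans hr0), h0, mul_zero]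
  rw [En, hu0, h0]
  norm_num
  positivity

end IsSol

/-! ### Crossing for `ε = 0` and decay at the critical parameter -/

namespace IsSol

variable {n ε δ : ℝ} {q u v : ℝ → ℝ}

/-- The Pohozaev-type quantity `v (r v - u) / 2 + r^(1 - n) u⁴ / 4` for `ε = 0`, `δ = 1`, which
increases along positive solutions; the last term is expressed through `q`. -/
noncomputable def poh (n : ℝ) (q u v : ℝ → ℝ) (r : ℝ) : ℝ :=
  v r * (r * v r - u r) / 2 + r ^ (5 - n) * q r ^ 4 / 4

lemma poh_eq (S : IsSol n ε δ q u v) {r : ℝ} (hr : 0 < r) :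
    poh n q u v r = v r * (r * v r - u r) / 2 + r ^ (1 - n) * u r ^ 4 / 4 := by
  rw [poh, S.u_eq r hr.le, show (5 - n) = (1 - n) + (4 : ℕ) by push_cast; ring,
    Real.rpow_add_natCast hr.ne']
  ring

lemma hasDerivAt_poh (S : IsSol n 0 1 q u v) {r : ℝ} (hr : 0 < r) (hk : kap r (q r) = q r) :
    HasDerivAt (poh n q u v) ((3 - n) / 4 * (r ^ (-n) * u r ^ 4)) r := by
  have h1 : HasDerivAt (fun r => v r * (r * v r - u r) / 2 + r ^ (1 - n) * u r ^ 4 / 4)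
      ((3 - n) / 4 * (r ^ (-n) * u r ^ 4)) r := by
    refine ((((S.hv r).mul (((hasDerivAt_id r).mul (S.hv r)).sub (S.hu r))).div_const 2).add
      ((S.hasDerivAt_quartic (1 - n) hr).div_const 4)).congr_deriv ?_
    rw [S.G_eq hr hk, show 1 - n - 1 = -n by ring, show 1 - n = -n + 1 by ring,
      Real.rpow_add_one hr.ne']
    simp only [id, Pi.sub_apply, Pi.mul_apply]
    ring
  refine h1.congr_of_eventuallyEq ?_
  filter_upwards [lt_mem_nhds hr] with s hs
  exact S.poh_eq hs

lemma poh_cont (S : IsSol n ε δ q u v) (hn : n < 3) : Continuous (poh n q u v) := by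
  unfold poh
  have h1 := S.q_cont
  have h2 := S.u_cont
  have h3 := S.v_cont
  have h4 : Continuous fun r : ℝ => r ^ (5 - n) := Real.continuous_rpow_const (by linarith)
  fun_prop

/-- The solution of the Emden-Fowler equation `u'' = -r^(-n) u³` becomes negative. If it did not, `u`
would be positive, concave and nondecreasing. Concavity gives `r^(2 - n) u² ≲ 1`, while the growth of
`poh` gives `r^(1 - n) u⁴ ≳ 1`; together they bound `r^(3 - n)`, which is unbounded. -/
lemma emden_fowler_crosses (hn0 : 0 < n) (hn : n < 3) (S : IsSol n 0 1 q u v) :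
    ∃ r, 0 ≤ r ∧ q r < 0 := by
  by_contra! hq
  have hqpos : ∀ r, 0 < r → 0 < q r := fun r hr => S.pos_of_nonneg zero_le_one one_pos hq hr
  have hu : ∀ r, 0 < r → 0 < u r := fun r hr => S.u_pos hr (hqpos r hr)
  have hk : ∀ r, 0 ≤ r → kap r (q r) = q r := fun r hr =>
    S.kap_eq zero_le_one zero_le_one (fun s hs _ => hq s hs) hr le_rfl
  have hG : ∀ r, 0 < r → G n 0 1 r (q r) = -(r ^ (-n) * u r ^ 3) := fun r hr => by
    rw [S.G_eq hr (hk r hr.le)]; ring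
  have hGneg : ∀ r, 0 < r → G n 0 1 r (q r) < 0 := fun r hr => by
    rw [hG r hr]
    have := Real.rpow_pos_of_pos hr (-n)
    have := hu r hr
    have : 0 < r ^ (-n) * u r ^ 3 := by positivity
    linarith
  have hvanti : AntitoneOn v (Set.Ici 0) :=
    antitoneOn_of_hasDerivWithinAt_nonpos (convex_Ici 0) S.v_cont.continuousOn
      (fun x _ => (S.hv x).hasDerivWithinAt)
      (fun x hx => by rw [interior_Ici] at hx; exact (hGneg x hx).le)
  have hvnn : ∀ r, 0 < r → 0 ≤ v r := by
    intro r hr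
    by_contra! hneg
    have hanti : AntitoneOn (fun x => u x - v r * x) (Set.Ici r) := by
      refine antitoneOn_of_hasDerivWithinAt_nonpos (f' := fun x => v x - v r) (convex_Ici r) ?_
        (fun x _ => ?_) (fun x hx => ?_)
      · have := S.u_cont
        fun_prop
      · exact (((S.hu x).sub ((hasDerivAt_id x).const_mul (v r))).congr_deriv
          (by ring)).hasDerivWithinAt
      · rw [interior_Ici] at hx
        have := hvanti hr.le (hr.le.trans (le_of_lt hx)) (le_of_lt hx)
        linarith
    have hu1 := hu r hr
    have hpos : 0 < u r / (-v r) := div_pos hu1 (by linarith)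
    have h1 := hanti (Set.mem_Ici.2 le_rfl) (Set.mem_Ici.2 (by linarith : r ≤ r + u r / (-v r)))
      (by linarith)
    have h2 := hu (r + u r / (-v r)) (by linarith)
    have h3 : v r * (u r / (-v r)) = -u r := by
      have := hneg.ne
      field_simp
    simp only at h1
    nlinarith
  have humono : MonotoneOn u (Set.Ici 0) :=
    monotoneOn_of_hasDerivWithinAt_nonneg (convex_Ici 0) S.u_cont.continuousOn
      (fun x _ => (S.hu x).hasDerivWithinAt)
      (fun x hx => by rw [interior_Ici] at hx; exact hvnn x hx)
  have hV : ∀ r, 0 < r → r * v r ≤ u r := by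
    have hanti : AntitoneOn (fun x => x * v x - u x) (Set.Ici 0) := by
      refine antitoneOn_of_hasDerivWithinAt_nonpos (f' := fun x => x * G n 0 1 x (q x))
        (convex_Ici 0) ?_ (fun x _ => ?_) (fun x hx => ?_)
      · have := S.u_cont
        have := S.v_cont
        fun_prop
      · exact ((((hasDerivAt_id x).mul (S.hv x)).sub (S.hu x)).congr_deriv
          (by simp)).hasDerivWithinAt
      · rw [interior_Ici] at hx
        exact mul_nonpos_of_nonneg_of_nonpos (le_of_lt hx) (hGneg x hx).le
    intro r hr
    have := hanti (Set.mem_Ici.2 le_rfl) hr.le hr.le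
    simp only [S.u_zero] at this
    linarith
  have hupper : ∀ r, 0 < r → r ^ 2 * (2 * r) ^ (-n) * u r ^ 2 ≤ 1 := by
    intro r hr
    obtain ⟨c, hc, hcs⟩ := exists_hasDerivAt_eq_slope v (fun x => G n 0 1 x (q x))
      (show r < 2 * r by linarith) S.v_cont.continuousOn (fun x _ => S.hv x)
    have hc0 : 0 < c := hr.trans hc.1
    rw [hG c hc0, eq_div_iff (by linarith)] at hcs
    have h1 : (2 * r) ^ (-n) ≤ c ^ (-n) :=
      Real.rpow_le_rpow_of_nonpos hc0 hc.2.le (by linarith)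
    have h2 : u r ≤ u c := humono hr.le hc0.le hc.1.le
    have h3 := hu r hr
    have h4 : 0 < (2 * r) ^ (-n) := Real.rpow_pos_of_pos (by linarith) _
    have h5 : (2 * r) ^ (-n) * u r ^ 3 ≤ c ^ (-n) * u c ^ 3 := by gcongr
    have h6 := hvnn (2 * r) (by linarith)
    have h7 := hV r hr
    have h8 : (2 * r) ^ (-n) * u r ^ 3 * r ≤ v r := by
      have := mul_le_mul_of_nonneg_right h5 hr.le
      nlinarith
    have h9 : r * ((2 * r) ^ (-n) * u r ^ 3 * r) ≤ u r :=
      (mul_le_mul_of_nonneg_left h8 hr.le).trans h7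
    refine le_of_mul_le_mul_right ?_ h3
    linarith
  have hPmono : StrictMonoOn (poh n q u v) (Set.Ici 0) := by
    refine strictMonoOn_of_hasDerivWithinAt_pos (convex_Ici 0) (S.poh_cont hn).continuousOn
      (f' := fun r => (3 - n) / 4 * (r ^ (-n) * u r ^ 4)) (fun x hx => ?_) (fun x hx => ?_)
    all_goals rw [interior_Ici] at hx
    · exact (S.hasDerivAt_poh hx (hk x (le_of_lt hx))).hasDerivWithinAt
    · have h1 := Real.rpow_pos_of_pos hx (-n)
      have h2 := hu x hx
      have h3 : 0 < 3 - n := by linarith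
      positivity
  have hP0 : poh n q u v 0 = 0 := by
    simp [poh, S.u_zero, Real.zero_rpow (show (5 - n) ≠ 0 by linarith)]
  have hc : 0 < poh n q u v 1 := by
    rw [← hP0]; exact hPmono (Set.mem_Ici.2 le_rfl) (Set.mem_Ici.2 zero_le_one) one_pos
  set c := poh n q u v 1
  have hlower : ∀ r, 1 ≤ r → 4 * c ≤ r * r ^ (-n) * u r ^ 4 := by
    intro r hr
    have hr0 : 0 < r := by linarith
    have h1 : c ≤ poh n q u v r :=
      hPmono.monotoneOn (Set.mem_Ici.2 zero_le_one) (Set.mem_Ici.2 hr0.le) hr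
    rw [S.poh_eq hr0, show 1 - n = -n + 1 by ring, Real.rpow_add_one hr0.ne'] at h1
    have := mul_nonpos_of_nonneg_of_nonpos (hvnn r hr0) (sub_nonpos.2 (hV r hr0))
    linarith
  have hgrow : Tendsto (fun r : ℝ => r ^ (3 - n)) atTop atTop :=
    tendsto_rpow_atTop (by linarith)
  have h2n : 0 < (2 : ℝ) ^ (-n) := by positivity
  obtain ⟨r, hr1, hr2⟩ := ((eventually_ge_atTop 1).and
    (hgrow.eventually_gt_atTop (1 / (4 * c * ((2 : ℝ) ^ (-n)) ^ 2)))).exists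
  have hr0 : 0 < r := by linarith
  have h1 := hupper r hr0
  have h2 := hlower r hr1
  rw [Real.mul_rpow (by norm_num) hr0.le] at h1
  rw [show 3 - n = -n + (3 : ℕ) by push_cast; ring, Real.rpow_add_natCast hr0.ne',
    div_lt_iff₀ (by positivity)] at hr2
  have hX := Real.rpow_pos_of_pos hr0 (-n)
  set X := r ^ (-n)
  set t := (2 : ℝ) ^ (-n)
  have hur := hu r hr0
  have h3 : (r ^ 2 * (t * X) * u r ^ 2) ^ 2 ≤ 1 := pow_le_one₀ (by positivity) h1
  have h4 : (4 * c) * (r ^ 3 * X * t ^ 2) ≤ (r * X * u r ^ 4) * (r ^ 3 * X * t ^ 2) := by gcongr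
  have h5 : (r * X * u r ^ 4) * (r ^ 3 * X * t ^ 2) = (r ^ 2 * (t * X) * u r ^ 2) ^ 2 := by ring
  nlinarith

/-- A positive solution with nonnegative energy decays. Once `v ≤ 0`, nonnegative energy keeps `v ≤ 0`,
so `u` is bounded and `q = u / r → 0`. If instead `v > 0` throughout, then below the curve
`β r^(n/2)` with `β² = ε / δ` nonnegative energy forces `u' ≥ φ u`, `φ² = ε / 2`. Hence `u` reaches
the curve and stays above it, and there the energy decreases at a rate `≳ r^(n - 1)`, so it becomes
negative. -/
lemma tendsto_zero_of_En_nonneg (S : IsSol n ε δ q u v) (hn0 : 0 < n)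
    (hε : 0 < ε) (hε1 : ε ≤ 1) (hδ : 0 < δ) (hq : ∀ r, 0 ≤ r → 0 < q r)
    (hE : ∀ r, 0 < r → 0 ≤ En n ε δ q u v r) : Tendsto q atTop (nhds 0) := by
  have hu : ∀ r, 0 < r → 0 < u r := fun r hr => S.u_pos hr (hq r hr.le)
  have hk : ∀ r, 0 ≤ r → kap r (q r) = q r := fun r hr =>
    S.kap_eq hε1 hδ.le (fun s hs _ => (hq s hs).le) hr le_rfl
  have hE' : ∀ r, 0 < r → ε * u r ^ 2 ≤ v r ^ 2 + δ * (r ^ (-n) * u r ^ 4) / 2 := by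
    intro r hr
    have := hE r hr
    rw [S.En_eq hr] at this
    linarith
  by_cases hcase : ∃ r₁, 0 < r₁ ∧ v r₁ ≤ 0
  · obtain ⟨r₁, hr₁, hv₁⟩ := hcase
    have hv : ∀ r, r₁ ≤ r → v r ≤ 0 := by
      intro r hr
      refine image_le_of_deriv_right_lt_deriv_boundary (f := v) (B := fun _ => 0)
        (f' := fun x => G n ε δ x (q x)) (B' := fun _ => 0) S.v_cont.continuousOn
        (fun x _ => (S.hv x).hasDerivWithinAt) hv₁ (fun x => hasDerivAt_const x 0) ?_
        (Set.right_mem_Icc.2 hr)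
      intro x hx hx0
      have hxp : 0 < x := hr₁.trans_le hx.1
      have h1 := hE' x hxp
      have h2 := hu x hxp
      rw [hx0] at h1
      rw [S.G_eq hxp (hk x hxp.le)]
      have h3 : 0 < ε * u x ^ 2 := by positivity
      have h4 : (ε * u x - δ * (x ^ (-n) * u x ^ 3)) * u x < 0 := by nlinarith
      exact neg_of_mul_neg_left h4 h2.le
    have hanti : AntitoneOn u (Set.Ici r₁) :=
      antitoneOn_of_hasDerivWithinAt_nonpos (convex_Ici r₁) S.u_cont.continuousOn
        (fun x _ => (S.hu x).hasDerivWithinAt)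
        (fun x hx => by rw [interior_Ici] at hx; exact hv x (le_of_lt hx))
    refine tendsto_of_tendsto_of_tendsto_of_le_of_le' tendsto_const_nhds
      (tendsto_const_nhds (x := u r₁) |>.div_atTop tendsto_id) ?_ ?_
    · filter_upwards [eventually_ge_atTop 0] with r hr using (hq r hr).le
    · filter_upwards [eventually_ge_atTop r₁] with r hr
      have hrp : 0 < r := hr₁.trans_le hr
      have := hanti (Set.mem_Ici.2 le_rfl) hr hr
      rw [S.u_eq r hrp.le] at this
      simp only [id]
      rw [le_div_iff₀ hrp]
      linarith
  · exfalso
    push Not at hcase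
    set φ := Real.sqrt (ε / 2) with hφ
    set β := Real.sqrt (ε / δ) with hβ
    have hφ0 : 0 < φ := Real.sqrt_pos.2 (by positivity)
    have hβ0 : 0 < β := Real.sqrt_pos.2 (by positivity)
    have hφ2 : φ ^ 2 = ε / 2 := Real.sq_sqrt (by positivity)
    have hβ2 : β ^ 2 = ε / δ := Real.sq_sqrt (by positivity)
    have hB2 : ∀ r, 0 < r → r ^ (-n) * (β * r ^ (n / 2)) ^ 2 = ε / δ := by
      intro r hr
      rw [mul_pow, hβ2, ← Real.rpow_mul_natCast hr.le]
      push_cast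
      rw [div_mul_cancel₀ n two_ne_zero, mul_left_comm, ← Real.rpow_add hr]
      simp
    have hgrow : ∀ r, 0 < r → u r ≤ β * r ^ (n / 2) → φ * u r ≤ v r := by
      intro r hr hB
      have h1 := hE' r hr
      have h2 := hu r hr
      have h3 := Real.rpow_pos_of_pos hr (-n)
      have h4 : r ^ (-n) * u r ^ 2 ≤ ε / δ := by
        rw [← hB2 r hr]; gcongr
      have h5 : δ * (r ^ (-n) * u r ^ 4) ≤ ε * u r ^ 2 := by
        rw [le_div_iff₀ hδ] at h4
        have := mul_le_mul_of_nonneg_right h4 (sq_nonneg (u r))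
        linarith
      refine le_of_sq_le_sq ?_ (hcase r hr).le
      rw [mul_pow, hφ2]
      linarith
    set R₀ := n / φ with hR₀
    have hR₀p : 0 < R₀ := by positivity
    obtain ⟨r₁, hr₁, hB₁⟩ : ∃ r₁, R₀ ≤ r₁ ∧ β * r₁ ^ (n / 2) ≤ u r₁ := by
      by_contra! hlt
      have hmono : MonotoneOn (fun r => u r * Real.exp (-φ * r)) (Set.Ici R₀) := by
        refine monotoneOn_of_hasDerivWithinAt_nonneg
          (f' := fun r => (v r - φ * u r) * Real.exp (-φ * r)) (convex_Ici R₀) ?_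
          (fun x _ => ?_) (fun x hx => ?_)
        · have := S.u_cont
          fun_prop
        · refine (((S.hu x).mul (((hasDerivAt_id x).const_mul (-φ)).exp)).congr_deriv
            ?_).hasDerivWithinAt
          simp only [id]; ring
        · rw [interior_Ici] at hx
          have hxR : R₀ < x := hx
          have := hgrow x (by linarith) (hlt x hxR.le).le
          exact mul_nonneg (by linarith) (Real.exp_pos _).le
      have ht := (tendsto_rpow_mul_exp_neg_mul_atTop_nhds_zero (n / 2) φ hφ0).const_mul β
      rw [mul_zero] at ht
      have hcp : 0 < u R₀ * Real.exp (-φ * R₀) := mul_pos (hu R₀ hR₀p) (Real.exp_pos _)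
      obtain ⟨r, hr, hr2⟩ := ((eventually_ge_atTop R₀).and (ht.eventually_lt_const hcp)).exists
      have h1 := hmono (Set.mem_Ici.2 le_rfl) hr hr
      have h2 := mul_lt_mul_of_pos_right (hlt r hr) (Real.exp_pos (-φ * r))
      simp only at h1
      linarith
    have hr₁p : 0 < r₁ := hR₀p.trans_le hr₁
    have hBu : ∀ r, r₁ ≤ r → β * r ^ (n / 2) ≤ u r := by
      intro r hr
      refine image_le_of_deriv_right_lt_deriv_boundary' (f := fun r => β * r ^ (n / 2)) (B := u)
        (f' := fun x => β * (n / 2 * x ^ (n / 2 - 1))) (B' := v) ?_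
        (fun x hx => ?_) hB₁ S.u_cont.continuousOn (fun x _ => (S.hu x).hasDerivWithinAt) ?_
        (Set.right_mem_Icc.2 hr)
      · have : Continuous fun r : ℝ => r ^ (n / 2) := Real.continuous_rpow_const (by positivity)
        fun_prop
      · have hxp : 0 < x := hr₁p.trans_le hx.1
        exact ((Real.hasDerivAt_rpow_const (Or.inl hxp.ne')).const_mul β).hasDerivWithinAt
      · intro x hx hxe
        have hxp : 0 < x := hr₁p.trans_le hx.1
        refine lt_of_lt_of_le ?_ (hgrow x hxp hxe.ge)
        rw [← hxe, Real.rpow_sub_one hxp.ne']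
        have h1 : n ≤ x * φ := (div_le_iff₀ hφ0).1 (hr₁.trans hx.1)
        have h2 := Real.rpow_pos_of_pos hxp (n / 2)
        have h3 : n / 2 / x < φ := by
          rw [div_lt_iff₀ hxp]; linarith
        have h4 := mul_lt_mul_of_pos_right h3 (mul_pos hβ0 h2)
        calc _ = n / 2 / x * (β * x ^ (n / 2)) := by ring
          _ < _ := h4
    have hanti : AntitoneOn (fun r => En n ε δ q u v r + δ / 4 * (ε / δ) ^ 2 * r ^ n)
        (Set.Ici r₁) := by
      have hd : ∀ x, 0 < x → HasDerivAt
          (fun r => En n ε δ q u v r + δ / 4 * (ε / δ) ^ 2 * r ^ n)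
          (-(δ * n / 4) * (x ^ (-n - 1) * u x ^ 4) + δ / 4 * (ε / δ) ^ 2 * (n * x ^ (n - 1))) x :=
        fun x hx => (S.hasDerivAt_En hx (hk x hx.le)).add
          ((Real.hasDerivAt_rpow_const (Or.inl hx.ne')).const_mul _)
      refine antitoneOn_of_hasDerivWithinAt_nonpos (convex_Ici r₁)
        (fun x hx => (hd x (hr₁p.trans_le hx)).continuousAt.continuousWithinAt)
        (f' := fun x => -(δ * n / 4) * (x ^ (-n - 1) * u x ^ 4)
          + δ / 4 * (ε / δ) ^ 2 * (n * x ^ (n - 1)))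
        (fun x hx => ?_) (fun x hx => ?_)
      all_goals
        rw [interior_Ici] at hx
        have hxr : r₁ < x := hx
        have hxp : 0 < x := hr₁p.trans hxr
      · exact (hd x hxp).hasDerivWithinAt
      · have h1 := hBu x hxr.le
        have h2 := Real.rpow_pos_of_pos hxp (-n - 1)
        have h3 := Real.rpow_pos_of_pos hxp (n / 2)
        have h4 : x ^ (-n - 1) * (β * x ^ (n / 2)) ^ 4 ≤ x ^ (-n - 1) * u x ^ 4 := by gcongr
        have h5 : x ^ (-n - 1) * (β * x ^ (n / 2)) ^ 4 = (ε / δ) ^ 2 * x ^ (n - 1) := by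
          have e1 : (x ^ (n / 2)) ^ 4 = x ^ (2 * n) := by
            rw [← Real.rpow_mul_natCast hxp.le]
            congr 1
            push_cast
            ring
          rw [mul_pow, e1, show β ^ 4 = (β ^ 2) ^ 2 by ring, hβ2, mul_left_comm,
            ← Real.rpow_add hxp]
          congr 2
          ring
        rw [h5] at h4
        have h6 := mul_le_mul_of_nonneg_left h4 (show 0 ≤ δ * n / 4 by positivity)
        linarith
    have hκ : 0 < δ / 4 * (ε / δ) ^ 2 := by positivity
    have ht := (tendsto_rpow_atTop hn0).const_mul_atTop hκ
    obtain ⟨r, hr, hr2⟩ := ((eventually_ge_atTop r₁).and (ht.eventually_gt_atTop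
      (En n ε δ q u v r₁ + δ / 4 * (ε / δ) ^ 2 * r₁ ^ n))).exists
    have h1 := hanti (Set.mem_Ici.2 le_rfl) hr hr
    have h2 := hE r (hr₁p.trans_le hr)
    simp only at h1
    linarith

end IsSol

/-! ### Positivity for small `δ` -/

lemma exists_radius {K : ℝ} (hK : 0 < K) :
    ∃ R : ℝ, 2 ≤ R ∧ 64 * Real.cosh R ^ 2 * R ^ 5 < K * Real.sinh (R - 1) ^ 4 := by
  obtain ⟨R, hR, hlt⟩ := ((eventually_ge_atTop (2 : ℝ)).and
    ((Real.tendsto_exp_div_pow_atTop 5).eventually_gt_atTop (64 * 20736 / K))).exists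
  refine ⟨R, hR, ?_⟩
  have hR5 : 0 < R ^ 5 := by positivity
  rw [div_lt_div_iff₀ hK hR5] at hlt
  set x := Real.exp R with hx
  have hx1 : 1 ≤ x := Real.one_le_exp (by linarith)
  have hcosh : Real.cosh R ≤ x := by
    rw [Real.cosh_eq]
    have : Real.exp (-R) ≤ Real.exp R := Real.exp_le_exp.2 (by linarith)
    linarith
  have hsinh : x / 12 ≤ Real.sinh (R - 1) := by
    rw [Real.sinh_eq]
    have h1 : Real.exp (-(R - 1)) ≤ 1 := Real.exp_le_one_iff.2 (by linarith)
    have h2 : 2 ≤ Real.exp (R - 1) := by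
      have := Real.add_one_le_exp (R - 1)
      linarith
    have h3 : x = Real.exp (R - 1) * Real.exp 1 := by
      rw [hx, ← Real.exp_add]; congr 1; ring
    have h4 := Real.exp_one_lt_d9
    rw [h3]
    nlinarith
  have hc1 := Real.one_le_cosh R
  calc 64 * Real.cosh R ^ 2 * R ^ 5 ≤ 64 * x ^ 2 * R ^ 5 := by gcongr
    _ = (64 * 20736 * R ^ 5) * (x ^ 2 / 20736) := by ring
    _ < (x * K) * (x ^ 2 / 20736) := by gcongr
    _ = (K / 20736) * x ^ 3 := by ring
    _ ≤ (K / 20736) * x ^ 4 := by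
      have := pow_le_pow_right₀ hx1 (show 3 ≤ 4 by norm_num)
      gcongr
    _ = K * (x / 12) ^ 4 := by ring
    _ ≤ K * Real.sinh (R - 1) ^ 4 := by gcongr

namespace IsSol

variable {n ε δ : ℝ} {q u v : ℝ → ℝ}

/-- A lower bound for the Wronskian that is linear in `δ`, from `q ≤ cosh R` on `[0, m] ⊆ [0, R]`. -/
lemma W_ge (S : IsSol n 1 δ q u v) (hn : n < 3) (hδ : 0 ≤ δ) {m R : ℝ} (hmR : m ≤ R)
    (hq : ∀ r, 0 ≤ r → r ≤ m → 0 ≤ q r) {r : ℝ} (hr : 0 ≤ r) (hrm : r ≤ m) :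
    -(δ / (3 - n) * Real.cosh R ^ 2 * (Real.sinh r ^ 2 * r ^ (3 - n)))
      ≤ v r * Real.sinh r - u r * Real.cosh r := by
  have h3n : 0 < 3 - n := by linarith
  set C := δ / (3 - n) * Real.cosh R ^ 2 with hC
  have hC0 : 0 ≤ C := by positivity
  have hmono : MonotoneOn (fun r => (v r * Real.sinh r - u r * Real.cosh r)
      + C * (Real.sinh r ^ 2 * r ^ (3 - n))) (Set.Icc 0 m) := by
    refine monotoneOn_of_hasDerivWithinAt_nonneg (convex_Icc 0 m)
      (f' := fun r => (G n 1 δ r (q r) - u r) * Real.sinh r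
        + C * (2 * Real.sinh r * Real.cosh r * r ^ (3 - n)
          + Real.sinh r ^ 2 * ((3 - n) * r ^ (3 - n - 1)))) ?_ (fun x hx => ?_) (fun x hx => ?_)
    · have h1 := S.u_cont
      have h2 := S.v_cont
      have h3 := Real.continuous_sinh
      have h4 := Real.continuous_cosh
      have h5 : Continuous fun r : ℝ => r ^ (3 - n) := Real.continuous_rpow_const h3n.le
      fun_prop
    · rw [interior_Icc] at hx
      refine HasDerivAt.hasDerivWithinAt ?_
      refine ((S.hasDerivAt_W x).add ((((Real.hasDerivAt_sinh x).pow 2).mul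
        (Real.hasDerivAt_rpow_const (p := 3 - n) (Or.inl hx.1.ne'))).const_mul C)).congr_deriv ?_
      simp
    · rw [interior_Icc] at hx
      have hx0 := hx.1
      have hk := S.kap_eq le_rfl hδ hq hx0.le hx.2.le
      have hs := Real.sinh_pos_iff.2 hx0
      have hu1 := S.u_le_sinh le_rfl hδ hq hx0.le hx.2.le
      have hcR : Real.cosh x ≤ Real.cosh R := by
        rw [Real.cosh_le_cosh, abs_of_pos hx0, abs_of_pos (hx0.trans (hx.2.trans_le hmR))]
        exact hx.2.le.trans hmR
      have hu2 : u x ≤ x * Real.cosh R :=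
        hu1.trans ((sinh_le_mul_cosh hx0.le).trans (by gcongr))
      have hu0 : 0 ≤ u x := by
        rw [S.u_eq x hx0.le]; exact mul_nonneg hx0.le (hq x hx0.le hx.2.le)
      have hc := Real.one_le_cosh x
      have hX := Real.rpow_pos_of_pos hx0 (-n)
      rw [S.G_eq hx0 hk, show 3 - n - 1 = -n + (2 : ℕ) by push_cast; ring,
        Real.rpow_add_natCast hx0.ne']
      have h1 : u x ^ 2 * u x ≤ (x * Real.cosh R) ^ 2 * Real.sinh x := by gcongr
      have h2 : δ * (x ^ (-n) * u x ^ 3) * Real.sinh x ≤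
          δ * (x ^ (-n) * ((x * Real.cosh R) ^ 2 * Real.sinh x)) * Real.sinh x := by
        rw [show u x ^ 3 = u x ^ 2 * u x by ring]
        gcongr
      have h3 : C * (Real.sinh x ^ 2 * ((3 - n) * (x ^ (-n) * x ^ 2))) =
          δ * (x ^ (-n) * ((x * Real.cosh R) ^ 2 * Real.sinh x)) * Real.sinh x := by
        rw [hC]; field_simp
      have h4 : 0 ≤ C * (2 * Real.sinh x * Real.cosh x * x ^ (3 - n)) := by positivity
      linarith
  have := hmono ⟨le_rfl, hr.trans hrm⟩ ⟨hr, hrm⟩ hr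
  simp [S.u_zero] at this
  linarith

/-- For small `δ` the cubic term is a perturbation: `u` stays above `sinh / 2` up to `R`. -/
lemma half_sinh_le (S : IsSol n 1 δ q u v) (hn : n < 3) (hδ : 0 ≤ δ) {m R : ℝ} (hmR : m ≤ R)
    (hδR : 2 * δ * Real.cosh R ^ 2 * R ^ (4 - n) ≤ 3 - n)
    (hq : ∀ r, 0 ≤ r → r ≤ m → 0 ≤ q r) {r : ℝ} (hr : 0 < r) (hrm : r ≤ m) :
    Real.sinh r / 2 ≤ u r := by
  have h3n : 0 < 3 - n := by linarith
  have hR : 0 < R := hr.trans_le (hrm.trans hmR)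
  set k := δ / (3 - n) * Real.cosh R ^ 2 * R ^ (3 - n) with hk
  have hX := Real.rpow_pos_of_pos hR (3 - n)
  have hk0 : 0 ≤ k := by positivity
  have hkR : k * R ≤ 1 / 2 := by
    rw [show 4 - n = 3 - n + 1 by ring, Real.rpow_add_one hR.ne'] at hδR
    rw [hk, show δ / (3 - n) * Real.cosh R ^ 2 * R ^ (3 - n) * R =
      (2 * δ * Real.cosh R ^ 2 * (R ^ (3 - n) * R)) / (3 - n) / 2 by ring]
    have := (div_le_one h3n).2 hδR
    linarith
  have hmono : MonotoneOn (fun r => u r / Real.sinh r + k * r) (Set.Ioc 0 m) := by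
    have hd : ∀ x, 0 < x → HasDerivAt (fun r => u r / Real.sinh r + k * r)
        ((v x * Real.sinh x - u x * Real.cosh x) / Real.sinh x ^ 2 + k) x := fun x hx =>
      ((S.hasDerivAt_div_sinh hx).add ((hasDerivAt_id x).const_mul k)).congr_deriv (by simp)
    refine monotoneOn_of_hasDerivWithinAt_nonneg (convex_Ioc 0 m)
      (fun x hx => (hd x hx.1).continuousAt.continuousWithinAt)
      (f' := fun x => (v x * Real.sinh x - u x * Real.cosh x) / Real.sinh x ^ 2 + k)
      (fun x hx => ?_) (fun x hx => ?_)
    all_goals rw [interior_Ioc] at hx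
    · exact (hd x hx.1).hasDerivWithinAt
    · have h1 := S.W_ge hn hδ hmR hq hx.1.le hx.2.le
      have hs := Real.sinh_pos_iff.2 hx.1
      have h2 : x ^ (3 - n) ≤ R ^ (3 - n) :=
        Real.rpow_le_rpow hx.1.le (hx.2.le.trans hmR) h3n.le
      have h3 : δ / (3 - n) * Real.cosh R ^ 2 * (Real.sinh x ^ 2 * x ^ (3 - n)) ≤
          δ / (3 - n) * Real.cosh R ^ 2 * (Real.sinh x ^ 2 * R ^ (3 - n)) := by gcongr
      have h4 : -k ≤ (v x * Real.sinh x - u x * Real.cosh x) / Real.sinh x ^ 2 := by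
        rw [le_div_iff₀ (by positivity), hk]
        linarith
      linarith
  have hs := Real.sinh_pos_iff.2 hr
  have key : 1 ≤ u r / Real.sinh r + k * r := by
    have ht : Tendsto (fun s => q s / Real.cosh s) (nhdsWithin 0 (Set.Ioi 0)) (nhds 1) := by
      have hc : Continuous fun s => q s / Real.cosh s :=
        S.q_cont.div Real.continuous_cosh fun s => (Real.cosh_pos s).ne'
      have h := (hc.tendsto 0).mono_left (nhdsWithin_le_nhds (s := Set.Ioi 0))
      simpa [S.q_zero] using h
    refine le_of_tendsto ht ?_
    filter_upwards [Ioc_mem_nhdsGT hr] with s hs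
    refine le_trans ?_ (hmono ⟨hs.1, hs.2.trans hrm⟩ ⟨hr, hrm⟩ hs.2)
    have h1 := Real.sinh_pos_iff.2 hs.1
    have h2 := sinh_le_mul_cosh hs.1.le
    have h3 := hq s hs.1.le (hs.2.trans hrm)
    have h4 : q s / Real.cosh s ≤ u s / Real.sinh s := by
      rw [div_le_div_iff₀ (Real.cosh_pos s) h1, S.u_eq s hs.1.le]
      nlinarith
    have h5 : 0 ≤ k * s := mul_nonneg hk0 hs.1.le
    linarith
  have h6 : k * r ≤ k * R := by
    have := hrm.trans hmR
    gcongr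
  have h7 : 1 / 2 ≤ u r / Real.sinh r := by linarith
  rw [le_div_iff₀ hs] at h7
  linarith

/-- If `q` had a zero, the energy would be nonnegative up to it; the zero lies beyond `R` by
`half_sinh_le`, and the energy, at most `1 / 2` at `R - 1`, drops by more than `1 / 2` on `[R - 1, R]`. -/
lemma nonneg_of_small (S : IsSol n 1 δ q u v) (hn0 : 0 < n) (hn : n < 3) (hδ : 0 ≤ δ) {R : ℝ}
    (hR : 2 ≤ R) (hbig : 64 * Real.cosh R ^ 2 * R ^ 5 < n * (3 - n) * Real.sinh (R - 1) ^ 4)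
    (hδR : 2 * δ * Real.cosh R ^ 2 * R ^ (4 - n) = 3 - n) {r : ℝ} (hr : 0 ≤ r) : 0 ≤ q r := by
  by_contra! hneg
  obtain ⟨r₀, hr₀, -, hq0, hpos⟩ := S.exists_first_zero hr hneg.le
  have hq : ∀ s, 0 ≤ s → s ≤ r₀ → 0 ≤ q s := fun s hs hs' => by
    rcases hs'.eq_or_lt with rfl | h
    · exact hq0.ge
    · exact (hpos s hs h).le
  have hRr : R < r₀ := by
    by_contra! hle
    have h1 := S.half_sinh_le hn hδ hle hδR.le hq hr₀ le_rfl
    rw [S.u_eq r₀ hr₀.le, hq0] at h1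
    have := Real.sinh_pos_iff.2 hr₀
    linarith
  have hqR : ∀ s, 0 ≤ s → s ≤ R → 0 ≤ q s := fun s hs hs' => hq s hs (hs'.trans hRr.le)
  have hRp : 0 < R := by linarith
  set c := δ * n / 4 * (R ^ (-n - 1) * (Real.sinh (R - 1) / 2) ^ 4) with hc
  have hanti : AntitoneOn (fun r => En n 1 δ q u v r + c * r) (Set.Icc (R - 1) R) := by
    have hd : ∀ x, R - 1 ≤ x → x ≤ R → HasDerivAt (fun r => En n 1 δ q u v r + c * r)
        (-(δ * n / 4) * (x ^ (-n - 1) * u x ^ 4) + c) x := fun x hx hx' =>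
      ((S.hasDerivAt_En (by linarith) (S.kap_eq le_rfl hδ hqR (by linarith) hx')).add
        ((hasDerivAt_id x).const_mul c)).congr_deriv (by simp)
    refine antitoneOn_of_hasDerivWithinAt_nonpos (convex_Icc _ _)
      (fun x hx => (hd x hx.1 hx.2).continuousAt.continuousWithinAt)
      (f' := fun x => -(δ * n / 4) * (x ^ (-n - 1) * u x ^ 4) + c)
      (fun x hx => ?_) (fun x hx => ?_)
    all_goals rw [interior_Icc] at hx
    · exact (hd x hx.1.le hx.2.le).hasDerivWithinAt
    · have hx0 : 0 < x := by linarith [hx.1]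
      have h1 := S.half_sinh_le hn hδ le_rfl hδR.le hqR hx0 hx.2.le
      have h2 : Real.sinh (R - 1) ≤ Real.sinh x := Real.sinh_le_sinh.2 hx.1.le
      have h3 : 0 ≤ Real.sinh (R - 1) := Real.sinh_nonneg_iff.2 (by linarith)
      have h4 : Real.sinh (R - 1) / 2 ≤ u x := by linarith
      have h5 : R ^ (-n - 1) ≤ x ^ (-n - 1) :=
        Real.rpow_le_rpow_of_nonpos hx0 hx.2.le (by linarith)
      have h6 := Real.rpow_pos_of_pos hRp (-n - 1)
      have h7 : c ≤ δ * n / 4 * (x ^ (-n - 1) * u x ^ 4) := by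
        rw [hc]; gcongr
      linarith
  have h1 := hanti ⟨le_rfl, by linarith⟩ ⟨by linarith, le_rfl⟩ (by linarith : R - 1 ≤ R)
  simp only at h1
  have h2 := S.En_antitone hn0 hn le_rfl hδ hqR ⟨le_rfl, hRp.le⟩
    ⟨by linarith, by linarith⟩ (by linarith : 0 ≤ R - 1)
  rw [S.En_zero hn] at h2
  have h3 := S.En_nonneg_before_zero hn0 hn le_rfl hδ hq0 hpos hRp.le hRr.le
  have h4 : c ≤ 1 / 2 := by linarith
  rw [show 4 - n = -n - 1 + (5 : ℕ) by push_cast; ring, Real.rpow_add_natCast hRp.ne'] at hδR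
  rw [← hδR] at hbig
  have hcosh := Real.one_le_cosh R
  have h5 : n * (2 * δ * Real.cosh R ^ 2 * (R ^ (-n - 1) * R ^ 5)) * Real.sinh (R - 1) ^ 4 =
      c * (128 * Real.cosh R ^ 2 * R ^ 5) := by rw [hc]; ring
  have h6 : c * (128 * Real.cosh R ^ 2 * R ^ 5) ≤ 1 / 2 * (128 * Real.cosh R ^ 2 * R ^ 5) := by
    gcongr
  linarith

end IsSol

lemma exists_small_delta {n : ℝ} (hn0 : 0 < n) (hn : n < 3) :
    ∃ δ : ℝ, 0 < δ ∧ δ ≤ 1 ∧ ∀ q u v, IsSol n 1 δ q u v → ∀ r, 0 ≤ r → 0 ≤ q r := by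
  have h3n : 0 < 3 - n := by linarith
  obtain ⟨R, hR, hbig⟩ := exists_radius (mul_pos hn0 h3n)
  have hRp : 0 < R := by linarith
  have hX : 1 ≤ R ^ (4 - n) := Real.one_le_rpow (by linarith) (by linarith)
  have hc : 4 ≤ Real.cosh R ^ 2 := by
    have h1 := Real.self_le_sinh_iff.2 hRp.le
    have h2 := (Real.sinh_lt_cosh R).le
    nlinarith
  have hD : 8 ≤ 2 * Real.cosh R ^ 2 * R ^ (4 - n) := by nlinarith
  refine ⟨(3 - n) / (2 * Real.cosh R ^ 2 * R ^ (4 - n)), div_pos h3n (by linarith), ?_, ?_⟩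
  · rw [div_le_one (by linarith)]; linarith
  · intro q u v S r hr
    refine S.nonneg_of_small hn0 hn (div_pos h3n (by linarith)).le hR hbig ?_ hr
    have : 2 * Real.cosh R ^ 2 * R ^ (4 - n) ≠ 0 := by linarith
    rw [show ∀ a : ℝ, 2 * a * Real.cosh R ^ 2 * R ^ (4 - n) =
      a * (2 * Real.cosh R ^ 2 * R ^ (4 - n)) from fun a => by ring]
    exact div_mul_cancel₀ _ this

/-! ### Shooting -/

/-- The family restricted to the path `ε = min τ 1`, `δ = min 1 (2 - τ)`, `0 ≤ τ ≤ 2`, which joins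
`(0, 1)` to `(1, 0)` through `(1, 1)`. Clamping at `0` extends it to all real `τ`. -/
lemma exists_path {n : ℝ} (hn : n < 3) :
    ∃ Q U V : ℝ → ℝ → ℝ,
      (∀ τ, IsSol n (max 0 (min τ 1)) (max 0 (min 1 (2 - τ))) (Q τ) (U τ) (V τ)) ∧
      ∀ R, 0 ≤ R → ∃ C, ∀ τ τ' r, 0 ≤ r → r ≤ R →
        |Q τ r - Q τ' r| ≤ C * |τ - τ'| ∧ |V τ r - V τ' r| ≤ C * |τ - τ'| := by
  obtain ⟨q, u, v, hsol, hlip⟩ := exists_family hn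
  have he : ∀ τ : ℝ, |max 0 (min τ 1)| ≤ 1 := fun τ => by
    rw [abs_of_nonneg (le_max_left _ _)]; exact max_le zero_le_one (min_le_right _ _)
  have hd : ∀ τ : ℝ, |max 0 (min 1 (2 - τ))| ≤ 1 := fun τ => by
    rw [abs_of_nonneg (le_max_left _ _)]; exact max_le zero_le_one (min_le_left _ _)
  refine ⟨fun τ => q (max 0 (min τ 1)) (max 0 (min 1 (2 - τ))),
    fun τ => u (max 0 (min τ 1)) (max 0 (min 1 (2 - τ))),
    fun τ => v (max 0 (min τ 1)) (max 0 (min 1 (2 - τ))), fun τ => hsol _ _ (he τ) (hd τ),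
    fun R hR => ?_⟩
  obtain ⟨C, hC⟩ := hlip R hR
  refine ⟨|C| * 2, fun τ τ' r hr hrR => ?_⟩
  have h1 : |max 0 (min τ 1) - max 0 (min τ' 1)| ≤ |τ - τ'| := by
    rw [max_comm 0, max_comm 0]
    exact (abs_max_sub_max_le_abs _ _ _).trans (abs_inf_sub_inf_le_abs _ _ _)
  have h2 : |max 0 (min 1 (2 - τ)) - max 0 (min 1 (2 - τ'))| ≤ |τ - τ'| := by
    rw [max_comm 0, max_comm 0, min_comm 1, min_comm 1]
    refine (abs_max_sub_max_le_abs _ _ _).trans ?_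
    refine (abs_inf_sub_inf_le_abs _ _ _).trans ?_
    rw [show 2 - τ - (2 - τ') = -(τ - τ') by ring, abs_neg]
  have h3 : C * (|max 0 (min τ 1) - max 0 (min τ' 1)|
      + |max 0 (min 1 (2 - τ)) - max 0 (min 1 (2 - τ'))|) ≤ |C| * 2 * |τ - τ'| := by
    have h4 : |max 0 (min τ 1) - max 0 (min τ' 1)|
      + |max 0 (min 1 (2 - τ)) - max 0 (min 1 (2 - τ'))| ≤ 2 * |τ - τ'| := by linarith
    calc _ ≤ |C| * (|max 0 (min τ 1) - max 0 (min τ' 1)|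
      + |max 0 (min 1 (2 - τ)) - max 0 (min 1 (2 - τ'))|) := by gcongr; exact le_abs_self C
      _ ≤ |C| * (2 * |τ - τ'|) := by gcongr
      _ = _ := by ring
  have h := hC _ _ _ _ (he τ) (hd τ) (he τ') (hd τ') r hr hrR
  exact ⟨h.1.trans h3, h.2.trans h3⟩

/-- The shooting argument along the path. -/
lemma exists_decaying {n : ℝ} (hn0 : 0 < n) (hn : n < 3) :
    ∃ (ε δ : ℝ) (q u v : ℝ → ℝ), 0 < ε ∧ ε ≤ 1 ∧ 0 < δ ∧ IsSol n ε δ q u v ∧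
      (∀ r, 0 ≤ r → 0 < q r) ∧ Tendsto q atTop (nhds 0) := by
  obtain ⟨Q, U, V, hS, hlip⟩ := exists_path hn
  have hQc : ∀ r, 0 ≤ r → Continuous fun τ => Q τ r := fun r hr => by
    obtain ⟨C, hC⟩ := hlip r hr
    exact (LipschitzWith.of_dist_le' fun τ τ' => (hC τ τ' r hr le_rfl).1).continuous
  have hVc : ∀ r, 0 ≤ r → Continuous fun τ => V τ r := fun r hr => by
    obtain ⟨C, hC⟩ := hlip r hr
    exact (LipschitzWith.of_dist_le' fun τ τ' => (hC τ τ' r hr le_rfl).2).continuous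
  -- `B` collects the parameters whose solution never becomes negative; its least element is the
  -- critical one.
  let B : Set ℝ := {τ | 0 ≤ τ ∧ ∀ r, 0 ≤ r → 0 ≤ Q τ r}
  have hBc : IsClosed B := by
    have : B = {τ | 0 ≤ τ} ∩ ⋂ r, ⋂ _ : 0 ≤ r, {τ | 0 ≤ Q τ r} := by
      ext τ; simp [B]
    rw [this]
    exact isClosed_Ici.inter (isClosed_iInter fun r => isClosed_iInter fun hr =>
      isClosed_le continuous_const (hQc r hr))
  have hBb : BddBelow B := ⟨0, fun τ hτ => hτ.1⟩
  obtain ⟨δ₁, hδ₁, hδ₁1, hpos₁⟩ := exists_small_delta hn0 hn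
  have hmem₁ : 2 - δ₁ ∈ B := by
    refine ⟨by linarith, ?_⟩
    have h := hS (2 - δ₁)
    rw [min_eq_right (by linarith : (1 : ℝ) ≤ 2 - δ₁), max_eq_right zero_le_one, sub_sub_cancel,
      min_eq_right hδ₁1, max_eq_right hδ₁.le] at h
    exact hpos₁ _ _ _ h
  set τ₀ := sInf B with hτ₀
  have hmem : τ₀ ∈ B := hBc.csInf_mem ⟨_, hmem₁⟩ hBb
  have hτ2 : τ₀ < 2 := (csInf_le hBb hmem₁).trans_lt (by linarith)
  have hτ0 : 0 < τ₀ := by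
    refine lt_of_le_of_ne hmem.1 fun h0 => ?_
    have h := hS τ₀
    rw [← h0, min_eq_left zero_le_one, max_self, sub_zero, min_eq_left one_le_two,
      max_eq_right zero_le_one] at h
    have hm := hmem
    rw [← h0] at hm
    obtain ⟨r, hr, hneg⟩ := h.emden_fowler_crosses hn0 hn
    exact absurd (hm.2 r hr) (not_le.2 hneg)
  have hε : 0 < max 0 (min τ₀ 1) := lt_max_of_lt_right (lt_min hτ0 one_pos)
  have hδ : 0 < max 0 (min 1 (2 - τ₀)) := lt_max_of_lt_right (lt_min one_pos (by linarith))
  have hε1 : ∀ τ : ℝ, max 0 (min τ 1) ≤ 1 := fun τ => max_le zero_le_one (min_le_right _ _)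
  have hpos : ∀ r, 0 ≤ r → 0 < Q τ₀ r := by
    intro r hr
    rcases hr.eq_or_lt with rfl | hr
    · rw [(hS τ₀).q_zero]; exact one_pos
    · exact (hS τ₀).pos_of_nonneg (hε1 _) hδ hmem.2 hr
  refine ⟨_, _, Q τ₀, U τ₀, V τ₀, hε, hε1 _, hδ, hS τ₀, hpos,
    (hS τ₀).tendsto_zero_of_En_nonneg hn0 hε (hε1 _) hδ hpos fun r hr => ?_⟩
  -- Negative energy at `r` would persist for `τ < τ₀` close to `τ₀`. Those solutions cross zero, and
  -- only after `r`, so their energy at `r` is nonnegative.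
  by_contra! hneg
  have hEc : Continuous fun τ =>
      En n (max 0 (min τ 1)) (max 0 (min 1 (2 - τ))) (Q τ) (U τ) (V τ) r := by
    have h1 := hQc r hr.le
    have h2 := hVc r hr.le
    have h3 : Continuous fun τ => U τ r := by
      simp_rw [fun τ => (hS τ).u_eq r hr.le]; fun_prop
    unfold En
    fun_prop
  obtain ⟨s₀, hs₀, hmin⟩ := isCompact_Icc.exists_isMinOn (Set.nonempty_Icc.2 hr.le)
    (hS τ₀).q_cont.continuousOn
  obtain ⟨C, hC⟩ := hlip r hr.le
  have hev : ∀ᶠ τ in nhds τ₀, C * |τ₀ - τ| < Q τ₀ s₀ := by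
    have : Continuous fun τ => C * |τ₀ - τ| := by fun_prop
    refine this.continuousAt.eventually_lt_const ?_
    simpa using hpos s₀ hs₀.1
  obtain ⟨τ, ⟨⟨hτ1, hτ2⟩, hτ3⟩, hτ4⟩ := (((hev.and (hEc.continuousAt.eventually_lt_const
    hneg)).and (lt_mem_nhds hτ0)).filter_mono nhdsWithin_le_nhds |>.and
    (self_mem_nhdsWithin (s := Set.Iio τ₀))).exists
  have hτB : τ ∉ B := notMem_of_lt_csInf hτ4 hBb
  obtain ⟨r', hr', hneg'⟩ : ∃ r', 0 ≤ r' ∧ Q τ r' < 0 := by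
    by_contra! h
    exact hτB ⟨le_of_lt hτ3, h⟩
  obtain ⟨r₀, hr₀, -, hz, hbefore⟩ := (hS τ).exists_first_zero hr' hneg'.le
  have hrr : r ≤ r₀ := by
    by_contra! hlt
    have h1 := (hC τ₀ τ r₀ hr₀.le hlt.le).1
    have h2 : Q τ₀ s₀ ≤ Q τ₀ r₀ := hmin ⟨hr₀.le, hlt.le⟩
    have h3 := le_abs_self (Q τ₀ r₀ - Q τ r₀)
    linarith
  have := (hS τ).En_nonneg_before_zero hn0 hn (hε1 _) (le_max_left _ _) hz hbefore hr.le hrr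
  linarith

/-! ### Regularity and scaling -/

lemma contDiffOn_two_of_hasDerivAt {f f' f'' : ℝ → ℝ} {s : Set ℝ} (hs : IsOpen s)
    (h1 : ∀ x ∈ s, HasDerivAt f (f' x) x) (h2 : ∀ x ∈ s, HasDerivAt f' (f'' x) x)
    (h3 : ContinuousOn f'' s) : ContDiffOn ℝ 2 f s := by
  have hone : ContDiffOn ℝ 1 f' s := by
    rw [show (1 : WithTop ℕ∞) = 0 + 1 from rfl, contDiffOn_succ_iff_deriv_of_isOpen hs]
    exact ⟨fun x hx => (h2 x hx).differentiableAt.differentiableWithinAt, by simp,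
      contDiffOn_zero.2 (h3.congr fun x hx => (h2 x hx).deriv)⟩
  rw [show (2 : WithTop ℕ∞) = 1 + 1 from by norm_num, contDiffOn_succ_iff_deriv_of_isOpen hs]
  exact ⟨fun x hx => (h1 x hx).differentiableAt.differentiableWithinAt, by simp,
    hone.congr fun x hx => (h1 x hx).deriv⟩

namespace IsSol

variable {n ε δ : ℝ} {q u v : ℝ → ℝ}

lemma hasDerivAt_q (S : IsSol n ε δ q u v) {r : ℝ} (hr : 0 < r) :
    HasDerivAt q (v r / r - u r / r ^ 2) r := by
  have h1 : HasDerivAt (fun s => u s / s) (v r / r - u r / r ^ 2) r := by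
    refine ((S.hu r).div (hasDerivAt_id r) hr.ne').congr_deriv ?_
    simp only [id]
    field_simp
  refine h1.congr_of_eventuallyEq ?_
  filter_upwards [lt_mem_nhds hr] with s hs
  rw [S.u_eq s (le_of_lt hs), mul_div_cancel_left₀ _ (ne_of_gt hs)]

lemma hasDerivAt_q' (S : IsSol n ε δ q u v) {r : ℝ} (hr : 0 < r) :
    HasDerivAt (fun s => v s / s - u s / s ^ 2)
      (G n ε δ r (q r) / r - 2 * v r / r ^ 2 + 2 * u r / r ^ 3) r := by
  refine (((S.hv r).div (hasDerivAt_id r) hr.ne').sub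
    ((S.hu r).div ((hasDerivAt_id r).pow 2) (by simpa using hr.ne'))).congr_deriv ?_
  simp
  field_simp
  ring

/-- The scaling `Q(r) = c q(μ r)` with `μ² ε = 1` and `c² = δ μ^(4 - n)` normalises both coefficients
to `1`. -/
lemma exists_scaled (S : IsSol n ε δ q u v) (hn : n < 3) (hε : 0 < ε) (hε1 : ε ≤ 1) (hδ : 0 < δ)
    (hq : ∀ r, 0 ≤ r → 0 < q r) (ht : Tendsto q atTop (nhds 0)) :
    ∃ Q : ℝ → ℝ,
      ContDiffOn ℝ 2 Q (Set.Ioi 0) ∧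
      (∀ r > (0 : ℝ), 0 < Q r) ∧
      (∀ r > (0 : ℝ),
        deriv (deriv Q) r + (2 / r) * deriv Q r = Q r - r ^ (2 - n) * Q r ^ 3) ∧
      (∃ L : ℝ, Tendsto Q (nhdsWithin 0 (Set.Ioi 0)) (nhds L)) ∧
      Tendsto Q atTop (nhds 0) := by
  obtain ⟨μ, hμ, hμ2⟩ : ∃ μ : ℝ, 0 < μ ∧ μ ^ 2 * ε = 1 := by
    refine ⟨Real.sqrt (1 / ε), Real.sqrt_pos.2 (by positivity), ?_⟩
    rw [Real.sq_sqrt (by positivity)]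
    field_simp
  obtain ⟨c, hc, hc2⟩ : ∃ c : ℝ, 0 < c ∧ c ^ 2 = δ * (μ ^ (2 - n) * μ ^ 2) :=
    ⟨Real.sqrt (δ * (μ ^ (2 - n) * μ ^ 2)), Real.sqrt_pos.2 (by positivity),
      Real.sq_sqrt (by positivity)⟩
  have hd1 : ∀ r, 0 < r → HasDerivAt (fun r => c * q (μ * r))
      (c * ((v (μ * r) / (μ * r) - u (μ * r) / (μ * r) ^ 2) * μ)) r := fun r hr =>
    ((S.hasDerivAt_q (mul_pos hμ hr)).comp r
      (((hasDerivAt_id r).const_mul μ).congr_deriv (mul_one μ))).const_mul c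
  have hd2 : ∀ r, 0 < r → HasDerivAt
      (fun r => c * ((v (μ * r) / (μ * r) - u (μ * r) / (μ * r) ^ 2) * μ))
      (c * ((G n ε δ (μ * r) (q (μ * r)) / (μ * r) - 2 * v (μ * r) / (μ * r) ^ 2
        + 2 * u (μ * r) / (μ * r) ^ 3) * μ * μ)) r := fun r hr =>
    (((S.hasDerivAt_q' (mul_pos hμ hr)).comp r
      (((hasDerivAt_id r).const_mul μ).congr_deriv (mul_one μ))).mul_const μ).const_mul c
  have hmul : Continuous fun r : ℝ => μ * r := by fun_prop
  refine ⟨fun r => c * q (μ * r),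
    contDiffOn_two_of_hasDerivAt isOpen_Ioi (fun r hr => hd1 r hr) (fun r hr => hd2 r hr) ?_,
    fun r hr => mul_pos hc (hq _ (mul_pos hμ hr).le), fun r hr => ?_, ⟨c, ?_⟩, ?_⟩
  · have h1 : Continuous fun r => G n ε δ (μ * r) (q (μ * r)) :=
      (G_cont hn ε δ).comp (hmul.prodMk (S.q_cont.comp hmul))
    have h2 : Continuous fun r => v (μ * r) := S.v_cont.comp hmul
    have h3 : Continuous fun r => u (μ * r) := S.u_cont.comp hmul
    have hne : ∀ r ∈ Set.Ioi (0 : ℝ), μ * r ≠ 0 := fun r hr => (mul_pos hμ hr).ne'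
    refine continuousOn_const.mul (((((h1.continuousOn.div hmul.continuousOn hne).sub
      ((continuous_const.mul h2).continuousOn.div (hmul.pow 2).continuousOn fun r hr =>
        pow_ne_zero 2 (hne r hr))).add
      ((continuous_const.mul h3).continuousOn.div (hmul.pow 3).continuousOn fun r hr =>
        pow_ne_zero 3 (hne r hr))).mul continuousOn_const).mul continuousOn_const)
  · have hr0 : 0 < r := hr
    have hs : 0 < μ * r := mul_pos hμ hr0
    have he : deriv (fun r => c * q (μ * r)) =ᶠ[nhds r]
        fun r => c * ((v (μ * r) / (μ * r) - u (μ * r) / (μ * r) ^ 2) * μ) := by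
      filter_upwards [lt_mem_nhds hr0] with s hs
      exact (hd1 s hs).deriv
    have hk : kap (μ * r) (q (μ * r)) = q (μ * r) :=
      S.kap_eq hε1 hδ.le (fun s hs _ => (hq s hs).le) hs.le le_rfl
    have hG : G n ε δ (μ * r) (q (μ * r)) = ε * (μ * r * q (μ * r))
        - δ * (μ ^ (2 - n) * r ^ (2 - n) * (μ * r) * q (μ * r) ^ 3) := by
      rw [G, hk, show 3 - n = 2 - n + 1 by ring, Real.rpow_add_one hs.ne',
        Real.mul_rpow hμ.le hr0.le]
    rw [he.deriv_eq, (hd2 r hr0).deriv, (hd1 r hr0).deriv, hG]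
    have e1 : c * ((((ε * (μ * r * q (μ * r))
        - δ * (μ ^ (2 - n) * r ^ (2 - n) * (μ * r) * q (μ * r) ^ 3)) / (μ * r)
        - 2 * v (μ * r) / (μ * r) ^ 2 + 2 * u (μ * r) / (μ * r) ^ 3) * μ * μ))
        + 2 / r * (c * ((v (μ * r) / (μ * r) - u (μ * r) / (μ * r) ^ 2) * μ))
        = c * ((μ ^ 2 * ε) * q (μ * r)
          - (δ * (μ ^ (2 - n) * μ ^ 2)) * r ^ (2 - n) * q (μ * r) ^ 3) := by
      field_simp
      ring
    rw [e1, hμ2, ← hc2]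
    ring
  · have h := ((continuous_const (y := c)).mul (S.q_cont.comp hmul)).tendsto 0
    simp only [Pi.mul_apply, Function.comp_apply, mul_zero, S.q_zero, mul_one] at h
    exact h.mono_left nhdsWithin_le_nhds
  · have h := (ht.comp (tendsto_id.const_mul_atTop hμ)).const_mul c
    simpa using h

end IsSol

end GroundState

/-- For `0 < n < 3` there exists a positive radial ground state of
`Δu = u − |x|^{2−n}u³` on `ℝ³`: a `C²` function `Q` on `(0,∞)` with `Q > 0`,
`Q'' + (2/r)Q' = Q − r^{2−n}Q³`, a finite limit as `r → 0⁺`, and `Q(r) → 0` as `r → ∞`. -/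
theorem ground_state_exists (n : ℝ) (hn0 : 0 < n) (hn3 : n < 3) :
    ∃ Q : ℝ → ℝ,
      ContDiffOn ℝ 2 Q (Set.Ioi 0) ∧
      (∀ r > (0 : ℝ), 0 < Q r) ∧
      (∀ r > (0 : ℝ),
        deriv (deriv Q) r + (2 / r) * deriv Q r = Q r - r ^ (2 - n) * Q r ^ 3) ∧
      (∃ L : ℝ, Tendsto Q (nhdsWithin 0 (Set.Ioi 0)) (nhds L)) ∧
      Tendsto Q atTop (nhds 0) := by
  obtain ⟨ε, δ, q, u, v, hε, hε1, hδ, hS, hq, ht⟩ := GroundState.exists_decaying hn0 hn3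
  exact hS.exists_scaled hn3 hε hε1 hδ hq ht
end

section
/- Let n be a real number with 0 < n < 3 and let Q ∈ C²((0,∞), ℝ) satisfy: Q(r) > 0 for all r > 0; Q''(r) + (2/r)Q'(r) = Q(r) − r^{2−n}Q(r)³ for all r > 0; lim_{r→0⁺} Q(r) exists and is positive; and there exist C, a > 0 with |Q(r)| + |Q'(r)| ≤ C e^{−a r} for all r ≥ 1. Then every bounded function v ∈ C²((0,∞), ℝ) satisfying the linearised equation v''(r) + (2/r)v'(r) = v(r) − 3 r^{2−n} Q(r)² v(r) for all r > 0 is identically zero on (0,∞). -/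
/-!
Put `u = rQ`, `w = rv`, `s = n/3 ∈ (0,1)`, `a = r^s`, `b = r^{-n}`. Then `u'' = u − b u³` and
`w'' = w − 3 b u² w`, with `u, w = O(r)` at the origin. The weight `a` is the one for which
`φ = a u' − a' u / 2` satisfies `−φ'' + φ − 3 b u² φ = G u` with no cubic remainder, where
`G = a'''/2 − 2a'` changes sign exactly once, from positive to negative. Three quantities carry the
argument.

* The weighted Pohozaev function `J` (`poho`), quadratic in `(u, u')` up to the quartic potential
  term, has `J' = G u² / 2` and vanishes at `0` and at `∞`. The single sign change of `G` gives
  `J > 0` (`poho_pos`). Moreover `(φ/u)' = −(2J + a b u⁴ / 2) / u²`, so `φ/u` is strictly decreasing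
  (`phi_div_anti`).
* The Wronskian `W = w'u − u'w` has `W' = −2 b u³ w` and vanishes at `0` and `∞`.
* `K = φ w' − φ' w` has `K' = G u w`, and `M = K − 2 (w/u) J` has `M' = −2 (W/u²) J`. It vanishes at
  `0` and `∞`, and equals `φ w'` at the zeros of `w`.

Suppose `w ≢ 0`. If `w` had no zero, `W` would be strictly monotone on `(0,∞)` with limit `0` at
both ends. Otherwise `w` has a first zero `q` and a last zero `p`. With `w > 0` on `(0,q)` we get
`W < 0` there, hence `M(q) > 0` with `w'(q) < 0`, i.e. `φ(q) < 0`
(`phi_neg_at_first_zero_of_pos`). With `w > 0` on `(p,∞)` we get `W > 0`, hence `M(p) > 0` with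
`w'(p) > 0`, i.e. `φ(p) > 0` (`phi_pos_at_last_zero_of_pos`). As `q ≤ p`, this contradicts the
monotonicity of `φ/u`; the intermediate zeros of `w` play no role.

The first zero exists because near the origin `φ` is a positive strict supersolution of the
linearised operator (`no_zero_near_zero`); the last one because `w²` is nonincreasing for large `r`
(`antitone_sq_and_bounded`).
-/

open Filter
open Set Topology

/-! ### Signs from monotonicity and a vanishing limit -/

theorem pos_of_deriv_pos_of_tendsto_zero {f f' : ℝ → ℝ} {q : ℝ} (hq : 0 < q)
    (hf : ∀ x ∈ Ioc 0 q, HasDerivAt f (f' x) x) (hpos : ∀ x ∈ Ioo 0 q, 0 < f' x)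
    (hlim : Tendsto f (𝓝[>] 0) (𝓝 0)) : 0 < f q := by
  have hmono : StrictMonoOn f (Ioc 0 q) := by
    refine strictMonoOn_of_deriv_pos (convex_Ioc 0 q)
      (fun x hx => (hf x hx).continuousAt.continuousWithinAt) fun x hx => ?_
    rw [interior_Ioc] at hx
    rw [(hf x ⟨hx.1, hx.2.le⟩).deriv]
    exact hpos x hx
  have h1 : f (q / 2) < f q :=
    hmono ⟨by linarith, by linarith⟩ ⟨hq, le_rfl⟩ (by linarith)
  have h2 : 0 ≤ f (q / 2) := by
    refine le_of_tendsto hlim ?_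
    filter_upwards [Ioo_mem_nhdsGT (show (0 : ℝ) < q / 2 by linarith)] with x hx
    exact hmono.monotoneOn ⟨hx.1, by linarith [hx.2]⟩ ⟨by linarith, by linarith⟩ hx.2.le
  linarith

theorem pos_of_deriv_neg_of_tendsto_zero {f f' : ℝ → ℝ} {p : ℝ}
    (hf : ∀ x ∈ Ici p, HasDerivAt f (f' x) x) (hneg : ∀ x ∈ Ioi p, f' x < 0)
    (hlim : Tendsto f atTop (𝓝 0)) : 0 < f p := by
  have hanti : StrictAntiOn f (Ici p) := by
    refine strictAntiOn_of_deriv_neg (convex_Ici p)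
      (fun x hx => (hf x hx).continuousAt.continuousWithinAt) fun x hx => ?_
    rw [interior_Ici] at hx
    rw [(hf x (mem_Ici.2 (le_of_lt hx))).deriv]
    exact hneg x hx
  have h1 : f (p + 1) < f p := hanti (mem_Ici.2 le_rfl) (mem_Ici.2 (by linarith)) (by linarith)
  have h2 : 0 ≤ f (p + 1) := by
    refine le_of_tendsto hlim ?_
    filter_upwards [eventually_ge_atTop (p + 1)] with x hx
    exact hanti.antitoneOn (mem_Ici.2 (by linarith)) (mem_Ici.2 (by linarith)) hx
  linarith

/-! ### The transformed problem -/

/-- `u > 0` solves `u'' = u − b u³` with derivative `u1`, for positive weights `a`, `b` which behave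
like `r^s`, `r^{-3s}` (they solve the same first-order equations), together with the boundary
behaviour at `0` and `∞` under which the boundary terms of all identities below vanish. -/
structure Profile (s : ℝ) (a b u u1 : ℝ → ℝ) : Prop where
  s_pos : 0 < s
  s_lt : s < 1
  a_pos : ∀ r > 0, 0 < a r
  b_pos : ∀ r > 0, 0 < b r
  u_pos : ∀ r > 0, 0 < u r
  ha : ∀ r > 0, HasDerivAt a (s * a r / r) r
  hb : ∀ r > 0, HasDerivAt b (-(3 * s) * b r / r) r
  hu : ∀ r > 0, HasDerivAt u (u1 r) r
  hu1 : ∀ r > 0, HasDerivAt u1 (u r - b r * u r ^ 3) r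
  a_zero : Tendsto a (𝓝[>] 0) (𝓝 0)
  ra_zero : Tendsto (fun r => r / a r) (𝓝[>] 0) (𝓝 0)
  near_zero : ∃ C > 0, ∀ᶠ r in 𝓝[>] (0 : ℝ),
    u r ≤ C * r ∧ r ≤ C * u r ∧ |u1 r| ≤ C ∧ b r * r ^ 3 ≤ C
  near_top : ∀ᶠ r in atTop, |u1 r| ≤ u r ∧ u r ≤ 1 ∧ b r ≤ 1
  u_top : Tendsto u atTop (𝓝 0)
  au_top : Tendsto (fun r => a r * u r) atTop (𝓝 0)

/-- `w`, with derivative `w1`, solves the linearised equation `w'' = w − 3 b u² w`, is `O(r)` with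
bounded derivative at the origin, and is bounded with bounded derivative and nonincreasing modulus
near infinity. -/
structure Kernel (b u w w1 : ℝ → ℝ) : Prop where
  hw : ∀ r > 0, HasDerivAt w (w1 r) r
  hw1 : ∀ r > 0, HasDerivAt w1 (w r - 3 * b r * u r ^ 2 * w r) r
  near_zero : ∃ C > 0, ∀ᶠ r in 𝓝[>] (0 : ℝ), |w r| ≤ C * r ∧ |w1 r| ≤ C
  near_top : ∃ C > 0, ∀ᶠ r in atTop, |w r| ≤ C ∧ |w1 r| ≤ C
  sq_anti : ∃ R > 0, AntitoneOn (fun r => w r ^ 2) (Ici R)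

/-- `φ = a u' − a' u / 2`, written with `a' = s a / r`. -/
noncomputable def phi (s : ℝ) (a u u1 : ℝ → ℝ) (r : ℝ) : ℝ := a r * (u1 r - s / (2 * r) * u r)

/-- The derivative of `phi`, with `u''` eliminated by the equation. -/
noncomputable def phi1 (s : ℝ) (a b u u1 : ℝ → ℝ) (r : ℝ) : ℝ :=
  a r * (s / (2 * r) * u1 r + (u r - b r * u r ^ 3) - s * (s - 1) / (2 * r ^ 2) * u r)

/-- The weighted Pohozaev function
`J = a u'²/2 − a' u u'/2 + a'' u²/4 − a u²/2 + a b u⁴/4`, with the derivatives of `a = r^s` written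
out. -/
noncomputable def poho (s : ℝ) (a b u u1 : ℝ → ℝ) (r : ℝ) : ℝ :=
  a r * (u1 r ^ 2 / 2 - s / (2 * r) * (u r * u1 r) + s * (s - 1) / (4 * r ^ 2) * u r ^ 2
    - u r ^ 2 / 2 + b r * u r ^ 4 / 4)

/-- `G = a'''/2 − 2a'` for `a = r^s`. -/
noncomputable def gfun (s : ℝ) (a : ℝ → ℝ) (r : ℝ) : ℝ := a r * s / r * ((1 - s) * (2 - s) / (2 * r ^ 2) - 2)

/-- `K = φ w' − φ' w`; this is also the first variation of the Pohozaev function `J` at `u` in the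
direction `w`. -/
noncomputable def lpoho (s : ℝ) (a b u u1 w w1 : ℝ → ℝ) (r : ℝ) : ℝ :=
  phi s a u u1 r * w1 r - phi1 s a b u u1 r * w r

/-- The Wronskian `W = w' u − u' w`, which is `u²` times the derivative of `w/u`. -/
noncomputable def wron (u u1 w w1 : ℝ → ℝ) (r : ℝ) : ℝ := w1 r * u r - u1 r * w r

/-- `M = K − 2 (w/u) J`: the combination of `K` and `J` in whose derivative `G` cancels. -/
noncomputable def mfun (s : ℝ) (a b u u1 w w1 : ℝ → ℝ) (r : ℝ) : ℝ :=
  lpoho s a b u u1 w w1 r - 2 * (w r / u r) * poho s a b u u1 r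

/-! ### Differential identities -/

section derivs
variable {s : ℝ} {a b u u1 w w1 : ℝ → ℝ}

theorem hasDerivAt_c_div (c : ℝ) {r : ℝ} (hr : 0 < r) :
    HasDerivAt (fun x : ℝ => c / (2 * x)) (-c / (2 * r ^ 2)) r := by
  have h := (hasDerivAt_const r c).div ((hasDerivAt_id r).const_mul 2) (by simp; positivity)
  refine h.congr_deriv ?_
  simp only [id]
  field_simp
  ring

theorem hasDerivAt_c_div_sq (c d : ℝ) (hd : 0 < d) {r : ℝ} (hr : 0 < r) :
    HasDerivAt (fun x : ℝ => c / (d * x ^ 2)) (-2 * c / (d * r ^ 3)) r := by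
  have h := (hasDerivAt_const r c).div (((hasDerivAt_id r).pow 2).const_mul d)
    (by simp; constructor <;> positivity)
  refine h.congr_deriv ?_
  simp only [id]
  simp
  field_simp

theorem hasDerivAt_phi (P : Profile s a b u u1) {r : ℝ} (hr : 0 < r) :
    HasDerivAt (phi s a u u1) (phi1 s a b u u1 r) r := by
  have h := (P.ha r hr).mul ((P.hu1 r hr).sub ((hasDerivAt_c_div s hr).mul (P.hu r hr)))
  refine h.congr_deriv ?_
  simp only [phi1, Pi.mul_apply, Pi.sub_apply]
  field_simp
  ring

/-- `−φ'' + φ − 3 b u² φ = G u`. No term in `b u³` appears, because `3a' = n a / r` for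
`a = r^{n/3}`. -/
theorem hasDerivAt_phi1 (P : Profile s a b u u1) {r : ℝ} (hr : 0 < r) :
    HasDerivAt (phi1 s a b u u1)
      (phi s a u u1 r - 3 * b r * u r ^ 2 * phi s a u u1 r - gfun s a r * u r) r := by
  have h := (P.ha r hr).mul ((((hasDerivAt_c_div s hr).mul (P.hu1 r hr)).add
    ((P.hu r hr).sub ((P.hb r hr).mul ((P.hu r hr).pow 3)))).sub
    ((hasDerivAt_c_div_sq (s * (s - 1)) 2 two_pos hr).mul (P.hu r hr)))
  refine h.congr_deriv ?_
  simp only [phi, gfun, Pi.mul_apply, Pi.sub_apply, Pi.add_apply, Pi.pow_apply]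
  push_cast
  field_simp
  ring

theorem hasDerivAt_poho (P : Profile s a b u u1) {r : ℝ} (hr : 0 < r) :
    HasDerivAt (poho s a b u u1) (gfun s a r * u r ^ 2 / 2) r := by
  have h := (P.ha r hr).mul (((((((P.hu1 r hr).pow 2).div_const 2).sub
    ((hasDerivAt_c_div s hr).mul ((P.hu r hr).mul (P.hu1 r hr)))).add
    ((hasDerivAt_c_div_sq (s * (s - 1)) 4 four_pos hr).mul ((P.hu r hr).pow 2))).sub
    (((P.hu r hr).pow 2).div_const 2)).add
    (((P.hb r hr).mul ((P.hu r hr).pow 4)).div_const 4))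
  refine h.congr_deriv ?_
  simp only [gfun, Pi.mul_apply, Pi.sub_apply, Pi.add_apply, Pi.pow_apply]
  push_cast
  field_simp
  ring

theorem hasDerivAt_lpoho (P : Profile s a b u u1) (N : Kernel b u w w1) {r : ℝ} (hr : 0 < r) :
    HasDerivAt (lpoho s a b u u1 w w1) (gfun s a r * u r * w r) r := by
  have h := ((hasDerivAt_phi P hr).mul (N.hw1 r hr)).sub ((hasDerivAt_phi1 P hr).mul (N.hw r hr))
  refine h.congr_deriv ?_
  ring

theorem hasDerivAt_wron (P : Profile s a b u u1) (N : Kernel b u w w1) {r : ℝ} (hr : 0 < r) :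
    HasDerivAt (wron u u1 w w1) (-2 * b r * u r ^ 3 * w r) r := by
  have h := ((N.hw1 r hr).mul (P.hu r hr)).sub ((P.hu1 r hr).mul (N.hw r hr))
  refine h.congr_deriv ?_
  ring

theorem hasDerivAt_mfun (P : Profile s a b u u1) (N : Kernel b u w w1) {r : ℝ} (hr : 0 < r) :
    HasDerivAt (mfun s a b u u1 w w1)
      (-2 * wron u u1 w w1 r / u r ^ 2 * poho s a b u u1 r) r := by
  have hu0 := (P.u_pos r hr).ne'
  have h := (hasDerivAt_lpoho P N hr).sub
    ((((N.hw r hr).div (P.hu r hr) hu0).const_mul 2).mul (hasDerivAt_poho P hr))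
  refine h.congr_deriv ?_
  simp only [wron, Pi.div_apply]
  field_simp
  ring

theorem hasDerivAt_phi_div (P : Profile s a b u u1) {r : ℝ} (hr : 0 < r) :
    HasDerivAt (fun x => phi s a u u1 x / u x)
      (-(2 * poho s a b u u1 r + a r * b r * u r ^ 4 / 2) / u r ^ 2) r := by
  have hu0 := (P.u_pos r hr).ne'
  refine ((hasDerivAt_phi P hr).div (P.hu r hr) hu0).congr_deriv ?_
  simp only [phi, phi1, poho]
  field_simp
  ring

theorem Kernel.neg (N : Kernel b u w w1) : Kernel b u (fun r => -w r) (fun r => -w1 r) where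
  hw r hr := (N.hw r hr).neg
  hw1 r hr := ((N.hw1 r hr).neg).congr_deriv (by ring)
  near_zero := by simpa only [abs_neg] using N.near_zero
  near_top := by simpa only [abs_neg] using N.near_top
  sq_anti := by simpa only [neg_sq] using N.sq_anti

end derivs

/-! ### Boundary limits -/

/-- `f` is bounded along the filter `l`. -/
def Bd (l : Filter ℝ) (f : ℝ → ℝ) : Prop := f =O[l] (fun _ => (1 : ℝ))

namespace Bd
variable {l : Filter ℝ} {f g : ℝ → ℝ}

theorem of_le {C : ℝ} (h : ∀ᶠ r in l, |f r| ≤ C) : Bd l f :=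
  Asymptotics.IsBigO.of_bound C (h.mono fun r hr => by simpa using hr)

theorem const (c : ℝ) : Bd l fun _ => c := of_le (C := |c|) (Eventually.of_forall fun _ => le_rfl)

theorem mul (hf : Bd l f) (hg : Bd l g) : Bd l fun r => f r * g r := by
  simpa [Bd] using Asymptotics.IsBigO.mul hf hg

theorem add (hf : Bd l f) (hg : Bd l g) : Bd l fun r => f r + g r :=
  Asymptotics.IsBigO.add hf hg

theorem sub (hf : Bd l f) (hg : Bd l g) : Bd l fun r => f r - g r :=
  Asymptotics.IsBigO.sub hf hg

theorem pow (hf : Bd l f) (k : ℕ) : Bd l fun r => f r ^ k := by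
  simpa [Bd] using Asymptotics.IsBigO.pow hf k

theorem tendsto_mul {e : ℝ → ℝ} (he : Tendsto e l (𝓝 0)) (hf : Bd l f) :
    Tendsto (fun r => e r * f r) l (𝓝 0) := by
  have h := ((Asymptotics.isLittleO_one_iff ℝ).2 he).mul_isBigO hf
  simpa [Asymptotics.isLittleO_one_iff] using h

end Bd

section limits
variable {s : ℝ} {a b u u1 w w1 : ℝ → ℝ}

theorem eventually_pos_zero : ∀ᶠ r : ℝ in 𝓝[>] 0, 0 < r := self_mem_nhdsWithin

theorem bd_id_zero : Bd (𝓝[>] 0) fun r => r := by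
  refine Bd.of_le (C := 1) ?_
  filter_upwards [Ioo_mem_nhdsGT (show (0 : ℝ) < 1 by norm_num)] with r hr
  rw [abs_of_pos hr.1]
  exact hr.2.le

theorem Profile.bd_div_zero (P : Profile s a b u u1) : Bd (𝓝[>] 0) fun r => u r / r := by
  obtain ⟨C, hC, h⟩ := P.near_zero
  refine Bd.of_le (C := C) ?_
  filter_upwards [h, eventually_pos_zero] with r hr h0
  rw [abs_of_pos (div_pos (P.u_pos r h0) h0), div_le_iff₀ h0]
  exact hr.1

theorem Profile.bd_inv_zero (P : Profile s a b u u1) : Bd (𝓝[>] 0) fun r => r / u r := by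
  obtain ⟨C, hC, h⟩ := P.near_zero
  refine Bd.of_le (C := C) ?_
  filter_upwards [h, eventually_pos_zero] with r hr h0
  rw [abs_of_pos (div_pos h0 (P.u_pos r h0)), div_le_iff₀ (P.u_pos r h0)]
  exact hr.2.1

theorem Profile.bd_u1_zero (P : Profile s a b u u1) : Bd (𝓝[>] 0) u1 := by
  obtain ⟨C, hC, h⟩ := P.near_zero
  exact Bd.of_le (C := C) (h.mono fun r hr => hr.2.2.1)

theorem Profile.bd_b_zero (P : Profile s a b u u1) : Bd (𝓝[>] 0) fun r => b r * r ^ 3 := by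
  obtain ⟨C, hC, h⟩ := P.near_zero
  refine Bd.of_le (C := C) ?_
  filter_upwards [h, eventually_pos_zero] with r hr h0
  rw [abs_of_pos (mul_pos (P.b_pos r h0) (by positivity))]
  exact hr.2.2.2

theorem Kernel.bd_div_zero (N : Kernel b u w w1) : Bd (𝓝[>] 0) fun r => w r / r := by
  obtain ⟨C, hC, h⟩ := N.near_zero
  refine Bd.of_le (C := C) ?_
  filter_upwards [h, eventually_pos_zero] with r hr h0
  rw [abs_div, abs_of_pos h0, div_le_iff₀ h0]
  exact hr.1

theorem Kernel.bd_w1_zero (N : Kernel b u w w1) : Bd (𝓝[>] 0) w1 := by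
  obtain ⟨C, hC, h⟩ := N.near_zero
  exact Bd.of_le (C := C) (h.mono fun r hr => hr.2)

theorem bd_ratio_zero (P : Profile s a b u u1) (N : Kernel b u w w1) :
    Bd (𝓝[>] 0) fun r => w r / u r := by
  refine Asymptotics.IsBigO.congr' (N.bd_div_zero.mul P.bd_inv_zero) ?_ EventuallyEq.rfl
  filter_upwards [eventually_pos_zero] with r h0
  have := P.u_pos r h0
  field_simp

theorem bd_poho_zero (P : Profile s a b u u1) :
    Bd (𝓝[>] 0) fun r => (u1 r ^ 2 / 2 - s / (2 * r) * (u r * u1 r)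
      + s * (s - 1) / (4 * r ^ 2) * u r ^ 2 - u r ^ 2 / 2 + b r * u r ^ 4 / 4) := by
  have hp := P.bd_div_zero
  have hv := P.bd_u1_zero
  refine Asymptotics.IsBigO.congr' ((((((Bd.const (1 / 2)).mul (hv.pow 2)).sub
    ((Bd.const (s / 2)).mul (hp.mul hv))).add ((Bd.const (s * (s - 1) / 4)).mul (hp.pow 2))).sub
    ((Bd.const (1 / 2)).mul ((hp.pow 2).mul (bd_id_zero.pow 2)))).add
    ((Bd.const (1 / 4)).mul (P.bd_b_zero.mul ((hp.pow 4).mul bd_id_zero)))) ?_ EventuallyEq.rfl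
  filter_upwards [eventually_pos_zero] with r h0
  field_simp

theorem tendsto_poho_zero (P : Profile s a b u u1) :
    Tendsto (poho s a b u u1) (𝓝[>] 0) (𝓝 0) :=
  Bd.tendsto_mul P.a_zero (bd_poho_zero P)

theorem tendsto_lpoho_zero (P : Profile s a b u u1) (N : Kernel b u w w1) :
    Tendsto (lpoho s a b u u1 w w1) (𝓝[>] 0) (𝓝 0) := by
  have hp := P.bd_div_zero
  have hv := P.bd_u1_zero
  have hq := N.bd_div_zero
  have hz := N.bd_w1_zero
  refine Tendsto.congr' ?_ (Bd.tendsto_mul P.a_zero ((((hv.mul hz).sub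
    ((Bd.const (s / 2)).mul ((hp.mul hz).add (hv.mul hq)))).add
    ((Bd.const (s * (s - 1) / 2)).mul (hp.mul hq))).sub
    ((bd_id_zero.pow 2).mul (hp.mul hq)) |>.add
    (P.bd_b_zero.mul (bd_id_zero.mul ((hp.pow 3).mul hq)))))
  filter_upwards [eventually_pos_zero] with r h0
  simp only [lpoho, phi, phi1]
  field_simp
  ring

theorem tendsto_mfun_zero (P : Profile s a b u u1) (N : Kernel b u w w1) :
    Tendsto (mfun s a b u u1 w w1) (𝓝[>] 0) (𝓝 0) := by
  have h := (tendsto_lpoho_zero P N).sub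
    (Bd.tendsto_mul (tendsto_poho_zero P) ((Bd.const 2).mul (bd_ratio_zero P N)))
  rw [sub_zero] at h
  refine h.congr fun r => ?_
  simp only [mfun]
  ring

theorem tendsto_wron_zero (P : Profile s a b u u1) (N : Kernel b u w w1) :
    Tendsto (wron u u1 w w1) (𝓝[>] 0) (𝓝 0) := by
  have h := Bd.tendsto_mul (tendsto_id.mono_left nhdsWithin_le_nhds : Tendsto id (𝓝[>] (0:ℝ)) (𝓝 0))
    ((N.bd_w1_zero.mul P.bd_div_zero).sub (P.bd_u1_zero.mul N.bd_div_zero))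
  refine h.congr' ?_
  filter_upwards [eventually_pos_zero] with r h0
  simp only [wron, id]
  field_simp

theorem bd_inv_top : Bd atTop fun r : ℝ => 1 / r := by
  refine Bd.of_le (C := 1) ?_
  filter_upwards [eventually_ge_atTop 1] with r hr
  rw [abs_of_pos (by positivity), div_le_one (by linarith)]
  exact hr

theorem Profile.bd_log_top (P : Profile s a b u u1) : Bd atTop fun r => u1 r / u r := by
  refine Bd.of_le (C := 1) ?_
  filter_upwards [P.near_top, eventually_gt_atTop 0] with r hr h0
  have := P.u_pos r h0
  rw [abs_div, abs_of_pos this, div_le_one this]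
  exact hr.1

theorem Profile.bd_u_top (P : Profile s a b u u1) : Bd atTop u := by
  refine Bd.of_le (C := 1) ?_
  filter_upwards [P.near_top, eventually_gt_atTop 0] with r hr h0
  rw [abs_of_pos (P.u_pos r h0)]
  exact hr.2.1

theorem Profile.bd_b_top (P : Profile s a b u u1) : Bd atTop b := by
  refine Bd.of_le (C := 1) ?_
  filter_upwards [P.near_top, eventually_gt_atTop 0] with r hr h0
  rw [abs_of_pos (P.b_pos r h0)]
  exact hr.2.2

theorem Kernel.bd_w_top (N : Kernel b u w w1) : Bd atTop w := by
  obtain ⟨C, hC, h⟩ := N.near_top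
  exact Bd.of_le (h.mono fun r hr => hr.1)

theorem Kernel.bd_w1_top (N : Kernel b u w w1) : Bd atTop w1 := by
  obtain ⟨C, hC, h⟩ := N.near_top
  exact Bd.of_le (h.mono fun r hr => hr.2)

theorem bd_poho_top (P : Profile s a b u u1) :
    Bd atTop fun r => 1 / 2 * (u1 r / u r) ^ 2 - s / 2 * (1 / r * (u1 r / u r))
      + s * (s - 1) / 4 * (1 / r) ^ 2 - 1 / 2 + 1 / 4 * (b r * u r ^ 2) :=
  have hy := P.bd_log_top
  ((((((Bd.const (1 / 2)).mul (hy.pow 2)).sub ((Bd.const (s / 2)).mul (bd_inv_top.mul hy))).add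
    ((Bd.const (s * (s - 1) / 4)).mul (bd_inv_top.pow 2))).sub (Bd.const (1 / 2))).add
    ((Bd.const (1 / 4)).mul (P.bd_b_top.mul (P.bd_u_top.pow 2))))

theorem tendsto_poho_top (P : Profile s a b u u1) :
    Tendsto (poho s a b u u1) atTop (𝓝 0) := by
  refine (Bd.tendsto_mul P.au_top (P.bd_u_top.mul (bd_poho_top P))).congr' ?_
  filter_upwards [eventually_gt_atTop 0] with r h0
  have := P.u_pos r h0
  simp only [poho]
  field_simp

theorem tendsto_mfun_top (P : Profile s a b u u1) (N : Kernel b u w w1) :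
    Tendsto (mfun s a b u u1 w w1) atTop (𝓝 0) := by
  have hy := P.bd_log_top
  have hw := N.bd_w_top
  have hz := N.bd_w1_top
  refine (Bd.tendsto_mul P.au_top ((((((hy.mul hz).sub
    ((Bd.const (s / 2)).mul (bd_inv_top.mul (hz.add (hy.mul hw))))).add
    ((Bd.const (s * (s - 1) / 2)).mul ((bd_inv_top.pow 2).mul hw))).sub hw).add
    (P.bd_b_top.mul ((P.bd_u_top.pow 2).mul hw))).sub
    ((Bd.const 2).mul (hw.mul (bd_poho_top P))))).congr' ?_
  filter_upwards [eventually_gt_atTop 0] with r h0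
  have := P.u_pos r h0
  simp only [mfun, lpoho, phi, phi1, poho]
  field_simp
  ring

theorem tendsto_wron_top (P : Profile s a b u u1) (N : Kernel b u w w1) :
    Tendsto (wron u u1 w w1) atTop (𝓝 0) := by
  refine (Bd.tendsto_mul P.u_top (N.bd_w1_top.sub (P.bd_log_top.mul N.bd_w_top))).congr' ?_
  filter_upwards [eventually_gt_atTop 0] with r h0
  have := P.u_pos r h0
  simp only [wron]
  field_simp

end limits

/-! ### Signs, zeros, and triviality of the kernel -/

section core
variable {s : ℝ} {a b u u1 w w1 : ℝ → ℝ}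

/-- `G` has exactly one sign change, from positive to negative, at `ρ² = (1 − s)(2 − s)/4`. -/
theorem Profile.exists_turn (P : Profile s a b u u1) : ∃ ρ > 0,
    (∀ r ∈ Ioo 0 ρ, 0 < gfun s a r) ∧ ∀ r ∈ Ioi ρ, gfun s a r < 0 := by
  have h1 : 0 < (1 - s) * (2 - s) :=
    mul_pos (by linarith [P.s_lt]) (by linarith [P.s_lt])
  have hρ : 0 < √((1 - s) * (2 - s) / 4) := Real.sqrt_pos.2 (by positivity)
  have hsq : √((1 - s) * (2 - s) / 4) ^ 2 = (1 - s) * (2 - s) / 4 := Real.sq_sqrt (by positivity)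
  refine ⟨_, hρ, fun r hr => ?_, fun r hr => ?_⟩
  · have h0 := hr.1
    refine mul_pos (div_pos (mul_pos (P.a_pos r h0) P.s_pos) h0) ?_
    rw [sub_pos, lt_div_iff₀ (by positivity)]
    nlinarith [pow_lt_pow_left₀ hr.2 h0.le two_ne_zero]
  · have h0 : 0 < r := hρ.trans hr
    refine mul_neg_of_pos_of_neg (div_pos (mul_pos (P.a_pos r h0) P.s_pos) h0) ?_
    rw [sub_neg, div_lt_iff₀ (by positivity)]
    nlinarith [pow_lt_pow_left₀ (mem_Ioi.1 hr) hρ.le two_ne_zero]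

theorem poho_pos (P : Profile s a b u u1) {r : ℝ} (hr : 0 < r) : 0 < poho s a b u u1 r := by
  obtain ⟨ρ, hρ, hG1, hG2⟩ := P.exists_turn
  have hd : ∀ x > 0, 0 < u x ^ 2 := fun x hx => pow_pos (P.u_pos x hx) 2
  rcases le_total r ρ with h | h
  · refine pos_of_deriv_pos_of_tendsto_zero hr (fun x hx => hasDerivAt_poho P hx.1)
      (fun x hx => ?_) (tendsto_poho_zero P)
    have := mul_pos (hG1 x ⟨hx.1, hx.2.trans_le h⟩) (hd x hx.1)
    linarith
  · refine pos_of_deriv_neg_of_tendsto_zero (fun x hx => hasDerivAt_poho P (hr.trans_le hx))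
      (fun x hx => ?_) (tendsto_poho_top P)
    have := mul_neg_of_neg_of_pos (hG2 x (h.trans_lt hx)) (hd x (hr.trans hx))
    linarith

theorem phi_div_anti (P : Profile s a b u u1) :
    StrictAntiOn (fun x => phi s a u u1 x / u x) (Ioi 0) := by
  refine strictAntiOn_of_deriv_neg (convex_Ioi 0)
    (fun x hx => (hasDerivAt_phi_div P hx).continuousAt.continuousWithinAt) fun x hx => ?_
  rw [interior_Ioi] at hx
  rw [(hasDerivAt_phi_div P hx).deriv]
  have h0 : 0 < x := hx
  have := P.u_pos x h0
  have := P.a_pos x h0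
  have := P.b_pos x h0
  have := poho_pos P h0
  rw [neg_div, neg_lt_zero]
  positivity

/-- If `φ ≤ 0` throughout, then `u²/a` is nonincreasing; but it is positive and tends to `0` at the
origin. -/
theorem exists_phi_pos (P : Profile s a b u u1) : ∃ x > 0, 0 < phi s a u u1 x := by
  by_contra! hcon
  have hder : ∀ x > 0, HasDerivAt (fun x => u x ^ 2 / a x)
      (2 * u x * phi s a u u1 x / a x ^ 2) x := fun x hx => by
    refine (((P.hu x hx).pow 2).div (P.ha x hx) (P.a_pos x hx).ne').congr_deriv ?_
    simp only [phi, Pi.pow_apply]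
    push_cast
    field_simp
  have hanti : AntitoneOn (fun x => u x ^ 2 / a x) (Ioi 0) := by
    refine antitoneOn_of_deriv_nonpos (convex_Ioi 0)
      (fun x hx => (hder x hx).continuousAt.continuousWithinAt)
      (fun x hx => ((hder x (by simpa using hx)).differentiableAt).differentiableWithinAt)
      fun x hx => ?_
    rw [interior_Ioi] at hx
    rw [(hder x hx).deriv]
    have h0 : 0 < x := hx
    exact div_nonpos_of_nonpos_of_nonneg
      (mul_nonpos_of_nonneg_of_nonpos (by linarith [P.u_pos x h0]) (hcon x h0)) (by positivity)
  have hlim : Tendsto (fun x => u x ^ 2 / a x) (𝓝[>] 0) (𝓝 0) := by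
    refine (Bd.tendsto_mul P.ra_zero (bd_id_zero.mul (P.bd_div_zero.pow 2))).congr' ?_
    filter_upwards [eventually_pos_zero] with r h0
    have := P.a_pos r h0
    field_simp
  have h1 : u 1 ^ 2 / a 1 ≤ 0 := by
    refine ge_of_tendsto hlim ?_
    filter_upwards [Ioo_mem_nhdsGT (show (0 : ℝ) < 1 by norm_num)] with x hx
    exact hanti hx.1 (mem_Ioi.2 one_pos) hx.2.le
  have := div_pos (pow_pos (P.u_pos 1 one_pos) 2) (P.a_pos 1 one_pos)
  linarith

/-- Uniqueness for the Cauchy problem, by Grönwall applied to `w² + w'²`. -/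
theorem Kernel.unique (P : Profile s a b u u1) (N : Kernel b u w w1) {p : ℝ} (hp : 0 < p)
    (h0 : w p = 0) (h1 : w1 p = 0) : ∀ r > 0, w r = 0 := by
  intro r hr
  have hE : ∀ x > 0, HasDerivAt (fun x => w x ^ 2 + w1 x ^ 2)
      (w x * w1 x * (4 - 6 * b x * u x ^ 2)) x := fun x hx => by
    refine (((N.hw x hx).pow 2).add ((N.hw1 x hx).pow 2)).congr_deriv ?_
    push_cast
    ring
  have hcont : ContinuousOn (fun x => 4 - 6 * b x * u x ^ 2) (uIcc p r) := fun x hx => by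
    have hx0 : 0 < x := (lt_min hp hr).trans_le hx.1
    exact (continuousAt_const.sub ((continuousAt_const.mul (P.hb x hx0).continuousAt).mul
      ((P.hu x hx0).continuousAt.pow 2))).continuousWithinAt
  obtain ⟨K, hK⟩ := isCompact_uIcc.exists_bound_of_continuousOn hcont
  have hb : ∀ x ∈ uIcc p r, |w x * w1 x * (4 - 6 * b x * u x ^ 2)| ≤ K * (w x ^ 2 + w1 x ^ 2) := by
    intro x hx
    have h := hK x hx
    rw [Real.norm_eq_abs] at h
    have hKn : 0 ≤ K := (abs_nonneg _).trans h
    rw [abs_mul, abs_mul]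
    have h2 : |w x| * |w1 x| ≤ w x ^ 2 + w1 x ^ 2 := by
      nlinarith [sq_nonneg (|w x| - |w1 x|), sq_abs (w x), sq_abs (w1 x), sq_nonneg (w x),
        sq_nonneg (w1 x)]
    calc |w x| * |w1 x| * |4 - 6 * b x * u x ^ 2| ≤ (w x ^ 2 + w1 x ^ 2) * K :=
          mul_le_mul h2 h (abs_nonneg _) (by positivity)
      _ = _ := mul_comm _ _
  have hexp : ∀ c x : ℝ, HasDerivAt (fun x => Real.exp (c * x)) (Real.exp (c * x) * c) x :=
    fun c x => by simpa using ((hasDerivAt_id x).const_mul c).exp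
  have hF : ∀ c : ℝ, ∀ x > 0, HasDerivAt (fun x => (w x ^ 2 + w1 x ^ 2) * Real.exp (c * x))
      ((w x * w1 x * (4 - 6 * b x * u x ^ 2) + c * (w x ^ 2 + w1 x ^ 2)) * Real.exp (c * x)) x :=
    fun c x hx => ((hE x hx).mul (hexp c x)).congr_deriv (by ring)
  have key : (w r ^ 2 + w1 r ^ 2) ≤ 0 := by
    rcases le_total p r with h | h
    · have hanti : AntitoneOn (fun x => (w x ^ 2 + w1 x ^ 2) * Real.exp (-K * x)) (Icc p r) := by
        refine antitoneOn_of_deriv_nonpos (convex_Icc p r)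
          (fun x hx => (hF _ x (hp.trans_le hx.1)).continuousAt.continuousWithinAt)
          (fun x hx => (hF _ x (hp.trans_le
            (interior_subset hx).1)).differentiableAt.differentiableWithinAt) fun x hx => ?_
        have hx' := interior_subset hx
        rw [(hF _ x (hp.trans_le hx'.1)).deriv]
        have := (abs_le.1 (hb x (by rwa [uIcc_of_le h]))).2
        exact mul_nonpos_of_nonpos_of_nonneg (by linarith) (Real.exp_pos _).le
      have := hanti (left_mem_Icc.2 h) (right_mem_Icc.2 h) h
      simp only [h0, h1] at this
      norm_num at this
      exact nonpos_of_mul_nonpos_left this (Real.exp_pos _)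
    · have hmono : MonotoneOn (fun x => (w x ^ 2 + w1 x ^ 2) * Real.exp (K * x)) (Icc r p) := by
        refine monotoneOn_of_deriv_nonneg (convex_Icc r p)
          (fun x hx => (hF _ x (hr.trans_le hx.1)).continuousAt.continuousWithinAt)
          (fun x hx => (hF _ x (hr.trans_le
            (interior_subset hx).1)).differentiableAt.differentiableWithinAt) fun x hx => ?_
        have hx' := interior_subset hx
        rw [(hF _ x (hr.trans_le hx'.1)).deriv]
        have := (abs_le.1 (hb x (by rwa [uIcc_of_ge h]))).1
        exact mul_nonneg (by linarith) (Real.exp_pos _).le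
      have := hmono (left_mem_Icc.2 h) (right_mem_Icc.2 h) h
      simp only [h0, h1] at this
      norm_num at this
      exact nonpos_of_mul_nonpos_left this (Real.exp_pos _)
  have : w r ^ 2 = 0 := le_antisymm (by linarith [sq_nonneg (w1 r)]) (sq_nonneg _)
  exact pow_eq_zero_iff two_ne_zero |>.1 this

theorem Kernel.eq_zero_of_zero_on (P : Profile s a b u u1) (N : Kernel b u w w1) {p q : ℝ}
    (hp : 0 ≤ p) (hpq : p < q) (h : ∀ x ∈ Ioo p q, w x = 0) : ∀ r > 0, w r = 0 := by
  have hm : (p + q) / 2 ∈ Ioo p q := ⟨by linarith, by linarith⟩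
  have hm0 : 0 < (p + q) / 2 := hp.trans_lt hm.1
  refine N.unique P hm0 (h _ hm) ?_
  refine (N.hw _ hm0).unique ((hasDerivAt_const _ (0 : ℝ)).congr_of_eventuallyEq ?_)
  filter_upwards [Ioo_mem_nhds hm.1 hm.2] with x hx using h x hx

/-- Zeros of a nontrivial `w` do not accumulate at the origin: on an interval `(0, δ)` where `φ > 0`
and `G > 0`, a Picone-type identity for the quotient `w/φ` forbids even a single zero. -/
theorem no_zero_near_zero (P : Profile s a b u u1) (N : Kernel b u w w1)
    (hne : ∃ r > 0, w r ≠ 0) : ∃ δ > 0, ∀ r ∈ Ioo 0 δ, w r ≠ 0 := by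
  obtain ⟨ρ, hρ, hG1, -⟩ := P.exists_turn
  obtain ⟨x0, hx0, hphi⟩ := exists_phi_pos P
  have hu0 := P.u_pos x0 hx0
  set κ := phi s a u u1 x0 / u x0 with hκ
  have hκpos : 0 < κ := div_pos hphi hu0
  have hlow : ∀ x ∈ Ioo 0 x0, κ < phi s a u u1 x / u x := fun x hx =>
    phi_div_anti P hx.1 (mem_Ioi.2 hx0) hx.2
  have hφ : ∀ x ∈ Ioo 0 x0, 0 < phi s a u u1 x := fun x hx => by
    have := (hκpos.trans (hlow x hx))
    exact (div_pos_iff_of_pos_right (P.u_pos x hx.1)).1 this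
  refine ⟨min ρ x0, lt_min hρ hx0, fun c hc hwc => ?_⟩
  have hsub : ∀ x ∈ Ioc 0 c, x ∈ Ioo 0 ρ ∧ x ∈ Ioo 0 x0 := fun x hx =>
    ⟨⟨hx.1, hx.2.trans_lt (hc.2.trans_le (min_le_left _ _))⟩,
      ⟨hx.1, hx.2.trans_lt (hc.2.trans_le (min_le_right _ _))⟩⟩
  -- With `ζ = w/φ` one has `(Kζ)' = G u w²/φ + (K/φ)² ≥ 0`, while `Kζ` vanishes at `0` and at `c`.
  set T : ℝ → ℝ := fun x => lpoho s a b u u1 w w1 x * (w x / phi s a u u1 x) with hT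
  have hTd : ∀ x ∈ Ioc 0 c, HasDerivAt T (gfun s a x * u x * w x ^ 2 / phi s a u u1 x
      + (lpoho s a b u u1 w w1 x / phi s a u u1 x) ^ 2) x := fun x hx => by
    have hφ0 := (hφ x (hsub x hx).2).ne'
    refine ((hasDerivAt_lpoho P N hx.1).mul
      ((N.hw x hx.1).div (hasDerivAt_phi P hx.1) hφ0)).congr_deriv ?_
    simp only [lpoho, Pi.div_apply]
    field_simp
  have hTnn : ∀ x ∈ Ioc 0 c, 0 ≤ gfun s a x * u x * w x ^ 2 / phi s a u u1 x := fun x hx => by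
    have h1 := hG1 x (hsub x hx).1
    have h2 := hφ x (hsub x hx).2
    have h3 := P.u_pos x hx.1
    positivity
  have hmono : MonotoneOn T (Ioc 0 c) := by
    refine monotoneOn_of_deriv_nonneg (convex_Ioc 0 c)
      (fun x hx => (hTd x hx).continuousAt.continuousWithinAt)
      (fun x hx => (hTd x (interior_subset hx)).differentiableAt.differentiableWithinAt)
      fun x hx => ?_
    rw [(hTd x (interior_subset hx)).deriv]
    have := hTnn x (interior_subset hx)
    positivity
  have hbd : Bd (𝓝[>] 0) fun x => u x / phi s a u u1 x := by
    refine Bd.of_le (C := 1 / κ) ?_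
    filter_upwards [Ioo_mem_nhdsGT hx0] with x hx
    have h1 := hφ x hx
    have h2 := P.u_pos x hx.1
    rw [abs_of_pos (by positivity), div_le_div_iff₀ h1 hκpos]
    have := (lt_div_iff₀ h2).1 (hlow x hx)
    linarith
  have hlim : Tendsto T (𝓝[>] 0) (𝓝 0) := by
    refine (Bd.tendsto_mul (tendsto_lpoho_zero P N) ((bd_ratio_zero P N).mul hbd)).congr' ?_
    filter_upwards [eventually_pos_zero] with x hx
    have h2 := P.u_pos x hx
    simp only [hT]
    field_simp
  have hTc : T c = 0 := by simp [hT, hwc]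
  have hT0 : ∀ x ∈ Ioc 0 c, T x = 0 := fun x hx => by
    refine le_antisymm (hTc ▸ hmono hx ⟨hc.1, le_rfl⟩ hx.2) (le_of_tendsto hlim ?_)
    filter_upwards [Ioo_mem_nhdsGT hx.1] with y hy
    exact hmono ⟨hy.1, hy.2.le.trans hx.2⟩ hx hy.2.le
  have hw0 : ∀ x ∈ Ioo 0 c, w x = 0 := fun x hx => by
    have hx' : x ∈ Ioc 0 c := ⟨hx.1, hx.2.le⟩
    have hd : HasDerivAt T 0 x := by
      refine (hasDerivAt_const x (0 : ℝ)).congr_of_eventuallyEq ?_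
      filter_upwards [Ioo_mem_nhds hx.1 hx.2] with y hy using hT0 y ⟨hy.1, hy.2.le⟩
    have heq := (hTd x hx').unique hd
    by_contra hne0
    have h1 := hG1 x (hsub x hx').1
    have h2 := hφ x (hsub x hx').2
    have h3 := P.u_pos x hx.1
    have : 0 < gfun s a x * u x * w x ^ 2 / phi s a u u1 x := by positivity
    linarith [sq_nonneg (lpoho s a b u u1 w w1 x / phi s a u u1 x)]
  obtain ⟨r, hr, hne⟩ := hne
  exact hne (N.eq_zero_of_zero_on P le_rfl hc.1 hw0 r hr)

theorem no_zero_near_top (P : Profile s a b u u1) (N : Kernel b u w w1)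
    (hne : ∃ r > 0, w r ≠ 0) : ∃ R > 0, ∀ r ≥ R, w r ≠ 0 := by
  obtain ⟨R, hR, hanti⟩ := N.sq_anti
  refine ⟨R, hR, fun p hp hwp => ?_⟩
  obtain ⟨r, hr, hne⟩ := hne
  have hR0 : 0 ≤ p := hR.le.trans hp
  refine hne (N.eq_zero_of_zero_on P hR0 (lt_add_one p) (fun x hx => ?_) r hr)
  have := hanti (mem_Ici.2 hp) (mem_Ici.2 (le_trans hp hx.1.le)) hx.1.le
  simp only [hwp] at this
  exact pow_eq_zero_iff two_ne_zero |>.1 (le_antisymm (by simpa using this) (sq_nonneg _))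

/-- The value of `M` at a zero `p` of `w`; there `K = φ w'`. -/
theorem mfun_at_zero {p : ℝ} (h : w p = 0) :
    mfun s a b u u1 w w1 p = phi s a u u1 p * w1 p := by
  simp [mfun, lpoho, h]

theorem wron_neg_of_pos (P : Profile s a b u u1) (N : Kernel b u w w1) {q : ℝ} (hq : 0 < q)
    (hpos : ∀ r ∈ Ioo 0 q, 0 < w r) : wron u u1 w w1 q < 0 := by
  have := pos_of_deriv_pos_of_tendsto_zero (f := fun r => -wron u u1 w w1 r) hq
    (fun x hx => (hasDerivAt_wron P N hx.1).neg) (fun x hx => ?_)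
    (by simpa using (tendsto_wron_zero P N).neg)
  · linarith
  · have := P.u_pos x hx.1
    have := P.b_pos x hx.1
    have := hpos x hx
    have : 0 < b x * u x ^ 3 * w x := by positivity
    linarith

theorem wron_pos_of_pos (P : Profile s a b u u1) (N : Kernel b u w w1) {p : ℝ} (hp : 0 < p)
    (hpos : ∀ r ∈ Ioi p, 0 < w r) : 0 < wron u u1 w w1 p := by
  refine pos_of_deriv_neg_of_tendsto_zero
    (fun x hx => hasDerivAt_wron P N (hp.trans_le hx)) (fun x hx => ?_) (tendsto_wron_top P N)
  have hx0 : 0 < x := hp.trans hx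
  have := P.u_pos x hx0
  have := P.b_pos x hx0
  have := hpos x hx
  have : 0 < b x * u x ^ 3 * w x := by positivity
  linarith

/-- On `(0, q)` the Wronskian is negative, so `M' > 0`, and `M(0⁺) = 0` gives
`0 < M(q) = φ(q) w'(q)` with `w'(q) < 0`. -/
theorem phi_neg_at_first_zero_of_pos (P : Profile s a b u u1) (N : Kernel b u w w1) {q : ℝ}
    (hq : 0 < q) (hpos : ∀ r ∈ Ioo 0 q, 0 < w r) (hwq : w q = 0) : phi s a u u1 q < 0 := by
  have hW : ∀ x ∈ Ioc 0 q, wron u u1 w w1 x < 0 := fun x hx =>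
    wron_neg_of_pos P N hx.1 fun r hr => hpos r ⟨hr.1, hr.2.trans_le hx.2⟩
  have hM : 0 < mfun s a b u u1 w w1 q := by
    refine pos_of_deriv_pos_of_tendsto_zero hq (fun x hx => hasDerivAt_mfun P N hx.1)
      (fun x hx => ?_) (tendsto_mfun_zero P N)
    have h1 := hW x ⟨hx.1, hx.2.le⟩
    exact mul_pos (div_pos (by linarith) (pow_pos (P.u_pos x hx.1) 2)) (poho_pos P hx.1)
  rw [mfun_at_zero hwq] at hM
  have hw1 : w1 q < 0 := by
    have := hW q ⟨hq, le_rfl⟩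
    simp only [wron, hwq] at this
    have := P.u_pos q hq
    nlinarith
  nlinarith

/-- On `(p, ∞)` the Wronskian is positive, so `M' < 0`, and `M(∞) = 0` gives
`0 < M(p) = φ(p) w'(p)` with `w'(p) > 0`. -/
theorem phi_pos_at_last_zero_of_pos (P : Profile s a b u u1) (N : Kernel b u w w1) {p : ℝ}
    (hp : 0 < p) (hpos : ∀ r ∈ Ioi p, 0 < w r) (hwp : w p = 0) : 0 < phi s a u u1 p := by
  have hW : ∀ x ∈ Ici p, 0 < wron u u1 w w1 x := fun x hx =>
    wron_pos_of_pos P N (hp.trans_le hx) fun r hr => hpos r (lt_of_le_of_lt (mem_Ici.1 hx) hr)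
  have hM : 0 < mfun s a b u u1 w w1 p := by
    refine pos_of_deriv_neg_of_tendsto_zero (fun x hx => hasDerivAt_mfun P N (hp.trans_le hx))
      (fun x hx => ?_) (tendsto_mfun_top P N)
    have hx0 : 0 < x := hp.trans hx
    have h1 := hW x (mem_Ici.2 (le_of_lt hx))
    exact mul_neg_of_neg_of_pos (div_neg_of_neg_of_pos (by linarith) (pow_pos (P.u_pos x hx0) 2))
      (poho_pos P hx0)
  rw [mfun_at_zero hwp] at hM
  have hw1 : 0 < w1 p := by
    have := hW p (mem_Ici.2 le_rfl)
    simp only [wron, hwp] at this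
    have := P.u_pos p hp
    nlinarith
  exact pos_of_mul_pos_left hM hw1.le

theorem pos_or_neg_of_ne_zero {f : ℝ → ℝ} {S : Set ℝ} (hS : IsPreconnected S)
    (hf : ContinuousOn f S) (hne : ∀ x ∈ S, f x ≠ 0) :
    (∀ x ∈ S, 0 < f x) ∨ ∀ x ∈ S, f x < 0 := by
  by_contra! h
  obtain ⟨⟨x, hx, hfx⟩, y, hy, hfy⟩ := h
  obtain ⟨z, hz, hz0⟩ := hS.intermediate_value hx hy hf ⟨hfx, hfy⟩
  exact hne z hz hz0

/-- The first and last zeros of a nontrivial `w` would violate the monotonicity of `φ/u`. -/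
theorem Kernel.eq_zero (P : Profile s a b u u1) (N : Kernel b u w w1) : ∀ r > 0, w r = 0 := by
  by_contra! hne
  have hcont : ContinuousOn w (Ioi 0) := fun x hx => (N.hw x hx).continuousAt.continuousWithinAt
  obtain ⟨δ, hδ, hδ0⟩ := no_zero_near_zero P N hne
  obtain ⟨R, hR, hR0⟩ := no_zero_near_top P N hne
  by_cases hz : ∃ z > 0, w z = 0
  · have hmem : ∀ z > 0, w z = 0 → z ∈ Icc δ R := fun z hz h =>
      ⟨not_lt.1 fun hlt => hδ0 z ⟨hz, hlt⟩ h, not_lt.1 fun hlt => hR0 z hlt.le h⟩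
    have hZ : IsCompact (Icc δ R ∩ w ⁻¹' {0}) := by
      refine isCompact_Icc.of_isClosed_subset (ContinuousOn.preimage_isClosed_of_isClosed
        (hcont.mono fun x hx => hδ.trans_le hx.1) isClosed_Icc isClosed_singleton) inter_subset_left
    obtain ⟨z, hz0, hwz⟩ := hz
    have hZne : (Icc δ R ∩ w ⁻¹' {0}).Nonempty := ⟨z, hmem z hz0 hwz, hwz⟩
    obtain ⟨q, ⟨hqI, hwq⟩, hqmin⟩ := hZ.exists_isLeast hZne
    obtain ⟨p, ⟨hpI, hwp⟩, hpmax⟩ := hZ.exists_isGreatest hZne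
    have hq0 : 0 < q := hδ.trans_le hqI.1
    have hp0 : 0 < p := hδ.trans_le hpI.1
    have hwq' : w q = 0 := hwq
    have hwp' : w p = 0 := hwp
    have hqp : q ≤ p := hqmin ⟨hpI, hwp⟩
    have h1 : phi s a u u1 q < 0 := by
      rcases pos_or_neg_of_ne_zero (isPreconnected_Ioo (a := 0) (b := q))
        (hcont.mono fun x hx => hx.1)
        (fun x hx h => (not_lt.2 (hqmin ⟨hmem x hx.1 h, h⟩)) hx.2) with h | h
      · exact phi_neg_at_first_zero_of_pos P N hq0 h hwq'
      · exact phi_neg_at_first_zero_of_pos P N.neg hq0 (fun r hr => neg_pos.2 (h r hr))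
          (by simp [hwq'])
    have h2 : 0 < phi s a u u1 p := by
      rcases pos_or_neg_of_ne_zero (isPreconnected_Ioi (a := p))
        (hcont.mono fun x hx => hp0.trans hx)
        (fun x hx h => (not_lt.2 (hpmax ⟨hmem x (hp0.trans hx) h, h⟩)) hx) with h | h
      · exact phi_pos_at_last_zero_of_pos P N hp0 h hwp'
      · exact phi_pos_at_last_zero_of_pos P N.neg hp0 (fun r hr => neg_pos.2 (h r hr))
          (by simp [hwp'])
    have h3 := (phi_div_anti P).antitoneOn (mem_Ioi.2 hq0) (mem_Ioi.2 hp0) hqp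
    have h4 := div_neg_of_neg_of_pos h1 (P.u_pos q hq0)
    have h5 := div_pos h2 (P.u_pos p hp0)
    linarith
  · push Not at hz
    rcases pos_or_neg_of_ne_zero isPreconnected_Ioi hcont hz with h | h
    · have h1 := wron_neg_of_pos P N one_pos fun r hr => h r hr.1
      have h2 := wron_pos_of_pos P N one_pos fun r hr => h r (mem_Ioi.2 (one_pos.trans hr))
      linarith
    · have h1 := wron_neg_of_pos P N.neg one_pos fun r hr => neg_pos.2 (h r hr.1)
      have h2 := wron_pos_of_pos P N.neg one_pos fun r hr => neg_pos.2 (h r (mem_Ioi.2 (one_pos.trans hr)))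
      linarith

end core

/-! ### Asymptotics of the ground state and of bounded solutions -/

section instantiation

theorem bounded_near_zero_of_deriv {g g' : ℝ → ℝ} {D : ℝ} (hg : ∀ x > 0, HasDerivAt g (g' x) x)
    (h : ∀ᶠ x in 𝓝[>] (0 : ℝ), |g' x| ≤ D) : ∃ C > 0, ∀ᶠ x in 𝓝[>] (0 : ℝ), |g x| ≤ C := by
  obtain ⟨δ, hδ, hδ'⟩ := mem_nhdsGT_iff_exists_Ioo_subset.1 h
  have hδ0 : (0 : ℝ) < δ := hδ
  have hm : δ / 2 ∈ Ioo 0 δ := ⟨by linarith, by linarith⟩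
  have hD : 0 ≤ D := (abs_nonneg _).trans (hδ' hm)
  refine ⟨|g (δ / 2)| + D * δ + 1, by positivity, ?_⟩
  filter_upwards [Ioo_mem_nhdsGT hδ0] with x hx
  have h1 := (convex_Ioo 0 δ).norm_image_sub_le_of_norm_hasDerivWithin_le
    (fun y hy => (hg y hy.1).hasDerivWithinAt) (fun y hy => hδ' hy) hm hx
  rw [Real.norm_eq_abs, Real.norm_eq_abs] at h1
  have h2 : |x - δ / 2| ≤ δ := abs_le.2 ⟨by linarith [hx.1], by linarith [hx.2]⟩
  have h3 := mul_le_mul_of_nonneg_left h2 hD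
  have h4 := abs_sub_abs_le_abs_sub (g x) (g (δ / 2))
  linarith

theorem hasDerivAt_of_C2 {f : ℝ → ℝ} (hf : ContDiffOn ℝ 2 f (Ioi 0)) {r : ℝ} (hr : 0 < r) :
    HasDerivAt f (deriv f r) r ∧ HasDerivAt (deriv f) (deriv (deriv f) r) r := by
  have h1 : ContDiffOn ℝ 1 (deriv f) (Ioi 0) := hf.deriv_of_isOpen isOpen_Ioi (by norm_num)
  exact ⟨((hf.contDiffAt (Ioi_mem_nhds hr)).differentiableAt (by norm_num)).hasDerivAt,
    ((h1.contDiffAt (Ioi_mem_nhds hr)).differentiableAt (by norm_num)).hasDerivAt⟩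

theorem hasDerivAt_id_mul {f : ℝ → ℝ} (hf : ContDiffOn ℝ 2 f (Ioi 0)) {r : ℝ} (hr : 0 < r) :
    HasDerivAt (fun x => x * f x) (f r + r * deriv f r) r :=
  ((hasDerivAt_id r).mul (hasDerivAt_of_C2 hf hr).1).congr_deriv (by simp)

theorem hasDerivAt_id_mul_deriv {f : ℝ → ℝ} (hf : ContDiffOn ℝ 2 f (Ioi 0)) {r F : ℝ} (hr : 0 < r)
    (hF : deriv (deriv f) r + (2 / r) * deriv f r = F) :
    HasDerivAt (fun x => f x + x * deriv f x) (r * F) r := by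
  obtain ⟨h1, h2⟩ := hasDerivAt_of_C2 hf hr
  refine (h1.add ((hasDerivAt_id r).mul h2)).congr_deriv ?_
  rw [← hF]
  simp only [id]
  field_simp
  ring

/-- Relates the weight `r^{2−n}` of the equation for `Q` to the weight `b = r^{-n}` for `u = rQ`. -/
theorem rpow_weight {n r : ℝ} (hr : 0 < r) : r ^ (2 - n) = r ^ (-n) * r ^ 2 := by
  rw [sub_eq_neg_add, Real.rpow_add hr, Real.rpow_two]

/-- Once `u ≤ 1` and `b ≤ 1`, the decaying solution is convex, hence `u' ≤ 0`; then `u'² − u²` is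
nondecreasing with limit `0`, so `|u'| ≤ u`. -/
theorem abs_deriv_le_of_decay {b u u1 : ℝ → ℝ} {R : ℝ} (hR : 0 < R)
    (hb : ∀ r ≥ R, 0 ≤ b r ∧ b r ≤ 1) (hu0 : ∀ r ≥ R, 0 ≤ u r ∧ u r ≤ 1)
    (hu : ∀ r > 0, HasDerivAt u (u1 r) r)
    (hu1 : ∀ r > 0, HasDerivAt u1 (u r - b r * u r ^ 3) r)
    (hut : Tendsto u atTop (𝓝 0)) (hu1t : Tendsto u1 atTop (𝓝 0)) :
    ∀ r ≥ R, |u1 r| ≤ u r := by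
  have hmono : MonotoneOn u1 (Ici R) := by
    refine monotoneOn_of_deriv_nonneg (convex_Ici R)
      (fun x hx => (hu1 x (hR.trans_le hx)).continuousAt.continuousWithinAt)
      (fun x hx => (hu1 x (hR.trans_le
        (interior_subset hx))).differentiableAt.differentiableWithinAt) fun x hx => ?_
    have hx' : R ≤ x := interior_subset hx
    rw [(hu1 x (hR.trans_le hx')).deriv]
    obtain ⟨h1, h2⟩ := hb x hx'
    obtain ⟨h3, h4⟩ := hu0 x hx'
    have h5 : u x ^ 3 ≤ u x := by
      have := mul_nonneg h3 (mul_nonneg (sub_nonneg.2 h4) (by linarith : 0 ≤ 1 + u x))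
      nlinarith
    have h6 : b x * u x ^ 3 ≤ 1 * u x ^ 3 := mul_le_mul_of_nonneg_right h2 (by positivity)
    linarith
  have hneg : ∀ r ≥ R, u1 r ≤ 0 := fun r hr => by
    refine ge_of_tendsto hu1t ?_
    filter_upwards [eventually_ge_atTop r] with x hx
    exact hmono hr (mem_Ici.2 (le_trans hr hx)) hx
  have hd : ∀ x > 0, HasDerivAt (fun x => u1 x ^ 2 - u x ^ 2) (-2 * b x * u x ^ 3 * u1 x) x :=
    fun x hx => by
      refine (((hu1 x hx).pow 2).sub ((hu x hx).pow 2)).congr_deriv ?_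
      push_cast
      ring
  have hmono2 : MonotoneOn (fun x => u1 x ^ 2 - u x ^ 2) (Ici R) := by
    refine monotoneOn_of_deriv_nonneg (convex_Ici R)
      (fun x hx => (hd x (hR.trans_le hx)).continuousAt.continuousWithinAt)
      (fun x hx => (hd x (hR.trans_le
        (interior_subset hx))).differentiableAt.differentiableWithinAt) fun x hx => ?_
    have hx' : R ≤ x := interior_subset hx
    rw [(hd x (hR.trans_le hx')).deriv]
    have h1 := (hb x hx').1
    have h2 := (hu0 x hx').1
    have h3 : 0 ≤ b x * u x ^ 3 * -u1 x :=
      mul_nonneg (by positivity) (neg_nonneg.2 (hneg x hx'))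
    linarith
  intro r hr
  have hlim : Tendsto (fun x => u1 x ^ 2 - u x ^ 2) atTop (𝓝 0) := by
    simpa using (hu1t.pow 2).sub (hut.pow 2)
  have hle : u1 r ^ 2 - u r ^ 2 ≤ 0 := by
    refine ge_of_tendsto hlim ?_
    filter_upwards [eventually_ge_atTop r] with x hx
    exact hmono2 hr (mem_Ici.2 (le_trans hr hx)) hx
  exact abs_le_of_sq_le_sq (by linarith) (hu0 r hr).1

/-- A solution of `w'' = V w`, `V ≥ 1/2`, growing at most linearly has `(w²)' ≤ 0`: with `h = w²`,
`h'' ≥ h` makes `e^{-r}(h' + h)` nondecreasing, so `h' > 0` at one point would force exponential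
growth of `h`. -/
theorem mul_deriv_nonpos {V w w1 : ℝ → ℝ} {R M : ℝ} (hR : 0 < R) (hV : ∀ r ≥ R, 1 / 2 ≤ V r)
    (hw : ∀ r > 0, HasDerivAt w (w1 r) r) (hw1 : ∀ r > 0, HasDerivAt w1 (V r * w r) r)
    (hM : ∀ r ≥ R, |w r| ≤ M * r) : ∀ r ≥ R, w r * w1 r ≤ 0 := by
  by_contra! hcon
  obtain ⟨r0, hr0, hpos⟩ := hcon
  have hr00 : 0 < r0 := hR.trans_le hr0
  have hd1 : ∀ x > 0, HasDerivAt (fun x => Real.exp (-x) * (2 * (w x * w1 x) + w x ^ 2))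
      (Real.exp (-x) * (2 * w1 x ^ 2 + (2 * V x - 1) * w x ^ 2)) x := fun x hx => by
    refine ((hasDerivAt_neg x).exp.mul ((((hw x hx).mul (hw1 x hx)).const_mul 2).add
      ((hw x hx).pow 2))).congr_deriv ?_
    simp only [Pi.mul_apply, Pi.add_apply, Pi.pow_apply]
    push_cast
    ring
  have hm1 : MonotoneOn (fun x => Real.exp (-x) * (2 * (w x * w1 x) + w x ^ 2)) (Ici r0) := by
    refine monotoneOn_of_deriv_nonneg (convex_Ici r0)
      (fun x hx => (hd1 x (hr00.trans_le hx)).continuousAt.continuousWithinAt)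
      (fun x hx => (hd1 x (hr00.trans_le
        (interior_subset hx))).differentiableAt.differentiableWithinAt) fun x hx => ?_
    have hx' : r0 ≤ x := interior_subset hx
    rw [(hd1 x (hr00.trans_le hx')).deriv]
    have := hV x (le_trans hr0 hx')
    have : 0 ≤ 2 * V x - 1 := by linarith
    positivity
  set c := Real.exp (-r0) * (2 * (w r0 * w1 r0) + w r0 ^ 2) with hc
  have hc0 : 0 < c := by positivity
  have hlow : ∀ x ≥ r0, c * Real.exp x ≤ 2 * (w x * w1 x) + w x ^ 2 := fun x hx => by
    have h : c ≤ _ := hm1 (mem_Ici.2 le_rfl) (mem_Ici.2 hx) hx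
    have h2 := mul_le_mul_of_nonneg_right h (Real.exp_pos x).le
    refine h2.trans_eq ?_
    rw [mul_right_comm, ← Real.exp_add]
    simp
  have hd2 : ∀ x > 0, HasDerivAt (fun x => Real.exp x * w x ^ 2 - c / 2 * Real.exp x ^ 2)
      (Real.exp x * (2 * (w x * w1 x) + w x ^ 2 - c * Real.exp x)) x := fun x hx => by
    refine (((Real.hasDerivAt_exp x).mul ((hw x hx).pow 2)).sub
      (((Real.hasDerivAt_exp x).pow 2).const_mul (c / 2))).congr_deriv ?_
    simp only [Pi.pow_apply]
    push_cast
    ring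
  have hm2 : MonotoneOn (fun x => Real.exp x * w x ^ 2 - c / 2 * Real.exp x ^ 2) (Ici r0) := by
    refine monotoneOn_of_deriv_nonneg (convex_Ici r0)
      (fun x hx => (hd2 x (hr00.trans_le hx)).continuousAt.continuousWithinAt)
      (fun x hx => (hd2 x (hr00.trans_le
        (interior_subset hx))).differentiableAt.differentiableWithinAt) fun x hx => ?_
    have hx' : r0 ≤ x := interior_subset hx
    rw [(hd2 x (hr00.trans_le hx')).deriv]
    exact mul_nonneg (Real.exp_pos x).le (sub_nonneg.2 (hlow x hx'))
  set d := Real.exp r0 * w r0 ^ 2 - c / 2 * Real.exp r0 ^ 2 with hd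
  have hineq : ∀ x ≥ r0, c / 2 + d * Real.exp (-x) ^ 2 ≤ M ^ 2 * (x ^ 2 * Real.exp (-x)) := by
    intro x hx
    have h : d ≤ _ := hm2 (mem_Ici.2 le_rfl) (mem_Ici.2 hx) hx
    have hwx : w x ^ 2 ≤ (M * x) ^ 2 := by
      rw [← sq_abs (w x)]
      exact pow_le_pow_left₀ (abs_nonneg _) (hM x (le_trans hr0 hx)) 2
    have he : Real.exp x * Real.exp (-x) = 1 := by rw [← Real.exp_add]; simp
    have h2 := mul_le_mul_of_nonneg_right h (sq_nonneg (Real.exp (-x)))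
    have h3 : (Real.exp x * w x ^ 2 - c / 2 * Real.exp x ^ 2) * Real.exp (-x) ^ 2
        = w x ^ 2 * Real.exp (-x) - c / 2 := by
      linear_combination (w x ^ 2 * Real.exp (-x)
        - c / 2 * (Real.exp x * Real.exp (-x) + 1)) * he
    have h4 := mul_le_mul_of_nonneg_right hwx (Real.exp_pos (-x)).le
    simp only [h3] at h2
    nlinarith
  have hl1 : Tendsto (fun x => c / 2 + d * Real.exp (-x) ^ 2) atTop (𝓝 (c / 2 + d * 0 ^ 2)) :=
    tendsto_const_nhds.add ((Real.tendsto_exp_neg_atTop_nhds_zero.pow 2).const_mul d)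
  have hl2 : Tendsto (fun x : ℝ => M ^ 2 * (x ^ 2 * Real.exp (-x))) atTop (𝓝 (M ^ 2 * 0)) :=
    (Real.tendsto_pow_mul_exp_neg_atTop_nhds_zero 2).const_mul _
  have := le_of_tendsto_of_tendsto hl1 hl2 ((eventually_ge_atTop r0).mono hineq)
  norm_num at this
  linarith

theorem antitone_sq_and_bounded {V w w1 : ℝ → ℝ} {R M : ℝ} (hR : 0 < R)
    (hV : ∀ r ≥ R, 1 / 2 ≤ V r)
    (hw : ∀ r > 0, HasDerivAt w (w1 r) r) (hw1 : ∀ r > 0, HasDerivAt w1 (V r * w r) r)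
    (hM : ∀ r ≥ R, |w r| ≤ M * r) :
    AntitoneOn (fun r => w r ^ 2) (Ici R) ∧ AntitoneOn (fun r => w1 r ^ 2) (Ici R) := by
  have hneg := mul_deriv_nonpos hR hV hw hw1 hM
  have hd : ∀ x > 0, HasDerivAt (fun x => w x ^ 2) (2 * (w x * w1 x)) x := fun x hx => by
    refine ((hw x hx).pow 2).congr_deriv ?_
    push_cast
    ring
  have hd1 : ∀ x > 0, HasDerivAt (fun x => w1 x ^ 2) (2 * V x * (w x * w1 x)) x := fun x hx => by
    refine ((hw1 x hx).pow 2).congr_deriv ?_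
    push_cast
    ring
  constructor
  · refine antitoneOn_of_deriv_nonpos (convex_Ici R)
      (fun x hx => (hd x (hR.trans_le hx)).continuousAt.continuousWithinAt)
      (fun x hx => (hd x (hR.trans_le
        (interior_subset hx))).differentiableAt.differentiableWithinAt) fun x hx => ?_
    have hx' : R ≤ x := interior_subset hx
    rw [(hd x (hR.trans_le hx')).deriv]
    linarith [hneg x hx']
  · refine antitoneOn_of_deriv_nonpos (convex_Ici R)
      (fun x hx => (hd1 x (hR.trans_le hx)).continuousAt.continuousWithinAt)
      (fun x hx => (hd1 x (hR.trans_le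
        (interior_subset hx))).differentiableAt.differentiableWithinAt) fun x hx => ?_
    have hx' : R ≤ x := interior_subset hx
    rw [(hd1 x (hR.trans_le hx')).deriv]
    exact mul_nonpos_of_nonneg_of_nonpos (by linarith [hV x hx']) (hneg x hx')

theorem tendsto_rpow_mul_of_decay {f : ℝ → ℝ} {C α : ℝ} (hα : 0 < α)
    (hf : ∀ r ≥ (1 : ℝ), |f r| ≤ C * Real.exp (-α * r)) (t : ℝ) :
    Tendsto (fun r => r ^ t * f r) atTop (𝓝 0) := by
  have h := (tendsto_rpow_mul_exp_neg_mul_atTop_nhds_zero t α hα).const_mul C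
  rw [mul_zero] at h
  refine squeeze_zero_norm' ?_ h
  filter_upwards [eventually_ge_atTop 1] with r hr
  have hr0 : 0 < r ^ t := Real.rpow_pos_of_pos (by linarith) t
  rw [Real.norm_eq_abs, abs_mul, abs_of_pos hr0]
  calc r ^ t * |f r| ≤ r ^ t * (C * Real.exp (-α * r)) :=
        mul_le_mul_of_nonneg_left (hf r hr) hr0.le
    _ = _ := by ring

theorem rpow_neg_mul_cube_le {n r : ℝ} (hn3 : n < 3) (h0 : 0 < r) (h1 : r ≤ 1) :
    r ^ (-n) * r ^ 3 ≤ 1 := by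
  rw [← Real.rpow_natCast, ← Real.rpow_add h0]
  exact Real.rpow_le_one h0.le h1 (by push_cast; linarith)

/-- `u = rQ` with `a = r^{n/3}` and `b = r^{-n}` satisfies all requirements of `Profile`. -/
theorem profile_of_ground_state {n : ℝ} (hn0 : 0 < n) (hn3 : n < 3) {Q : ℝ → ℝ}
    (hQreg : ContDiffOn ℝ 2 Q (Set.Ioi 0)) (hQpos : ∀ r > (0 : ℝ), 0 < Q r)
    (hQode : ∀ r > (0 : ℝ),
      deriv (deriv Q) r + (2 / r) * deriv Q r = Q r - r ^ (2 - n) * Q r ^ 3)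
    (hQlim : ∃ L > (0 : ℝ), Tendsto Q (nhdsWithin 0 (Set.Ioi 0)) (nhds L))
    (hQdecay : ∃ C > (0 : ℝ), ∃ a > (0 : ℝ), ∀ r ≥ (1 : ℝ),
      |Q r| + |deriv Q r| ≤ C * Real.exp (-a * r)) :
    Profile (n / 3) (fun r => r ^ (n / 3)) (fun r => r ^ (-n)) (fun r => r * Q r)
      (fun r => Q r + r * deriv Q r) := by
  obtain ⟨L, hL, hQlim⟩ := hQlim
  obtain ⟨C, hC, α, hα, hdec⟩ := hQdecay
  have hu : ∀ r > 0, HasDerivAt (fun r => r * Q r) (Q r + r * deriv Q r) r :=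
    fun r hr => hasDerivAt_id_mul hQreg hr
  have hu1 : ∀ r > 0, HasDerivAt (fun r => Q r + r * deriv Q r)
      (r * Q r - r ^ (-n) * (r * Q r) ^ 3) r := fun r hr => by
    refine (hasDerivAt_id_mul_deriv hQreg hr (hQode r hr)).congr_deriv ?_
    rw [rpow_weight hr]
    ring
  have hQd : ∀ r ≥ (1 : ℝ), |Q r| ≤ C * Real.exp (-α * r) := fun r hr =>
    (le_add_of_nonneg_right (abs_nonneg _)).trans (hdec r hr)
  have hQ1d : ∀ r ≥ (1 : ℝ), |deriv Q r| ≤ C * Real.exp (-α * r) := fun r hr =>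
    (le_add_of_nonneg_left (abs_nonneg _)).trans (hdec r hr)
  have hut : Tendsto (fun r => r * Q r) atTop (𝓝 0) := by
    simpa using tendsto_rpow_mul_of_decay hα hQd 1
  have hu1t : Tendsto (fun r => Q r + r * deriv Q r) atTop (𝓝 0) := by
    simpa using (tendsto_rpow_mul_of_decay hα hQd 0).add (tendsto_rpow_mul_of_decay hα hQ1d 1)
  have hQL : ∀ᶠ r in 𝓝[>] (0 : ℝ), L / 2 < Q r ∧ Q r < 2 * L :=
    hQlim.eventually (Ioo_mem_nhds (by linarith) (by linarith))
  refine
    { s_pos := by positivity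
      s_lt := by linarith
      a_pos := fun r hr => Real.rpow_pos_of_pos hr _
      b_pos := fun r hr => Real.rpow_pos_of_pos hr _
      u_pos := fun r hr => mul_pos hr (hQpos r hr)
      ha := fun r hr => ?_
      hb := fun r hr => ?_
      hu := hu
      hu1 := hu1
      a_zero := ?_
      ra_zero := ?_
      near_zero := ?_
      near_top := ?_
      u_top := hut
      au_top := ?_ }
  · refine (Real.hasDerivAt_rpow_const (Or.inl hr.ne')).congr_deriv ?_
    rw [Real.rpow_sub_one hr.ne']
    ring
  · refine (Real.hasDerivAt_rpow_const (Or.inl hr.ne')).congr_deriv ?_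
    rw [Real.rpow_sub_one hr.ne']
    ring
  · have h := (Real.continuousAt_rpow_const 0 (n / 3) (Or.inr (by positivity))).tendsto
    rw [Real.zero_rpow (by positivity)] at h
    exact h.mono_left nhdsWithin_le_nhds
  · have h := (Real.continuousAt_rpow_const 0 (1 - n / 3) (Or.inr (by linarith))).tendsto
    rw [Real.zero_rpow (by linarith)] at h
    refine (h.mono_left nhdsWithin_le_nhds).congr' ?_
    filter_upwards [eventually_pos_zero] with r hr
    rw [Real.rpow_sub hr, Real.rpow_one]
  -- `|u''| ≤ u + b u³` is bounded near `0` because `b r³ = r^{3−n} ≤ 1`; this is where `n < 3` enters.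
  · obtain ⟨D, hD, hDb⟩ := bounded_near_zero_of_deriv (D := 2 * L + (2 * L) ^ 3) hu1 (by
      filter_upwards [hQL, Ioo_mem_nhdsGT (show (0 : ℝ) < 1 by norm_num)] with r hr h01
      have hb := rpow_neg_mul_cube_le hn3 h01.1 h01.2.le
      have hb0 : 0 < r ^ (-n) := Real.rpow_pos_of_pos h01.1 _
      have hq := hQpos r h01.1
      have h0 := h01.1
      have e1 : r * Q r ≤ 1 * (2 * L) :=
        mul_le_mul h01.2.le hr.2.le hq.le zero_le_one
      have e2 : r ^ (-n) * r ^ 3 * Q r ^ 3 ≤ 1 * (2 * L) ^ 3 :=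
        mul_le_mul hb (pow_le_pow_left₀ hq.le hr.2.le 3) (by positivity) zero_le_one
      have e3 : r ^ (-n) * (r * Q r) ^ 3 = r ^ (-n) * r ^ 3 * Q r ^ 3 := by ring
      have e4 : 0 ≤ r ^ (-n) * r ^ 3 * Q r ^ 3 := by positivity
      have e5 : 0 ≤ r * Q r := by positivity
      rw [e3]
      exact abs_le.2 ⟨by linarith, by linarith⟩)
    refine ⟨2 * L + 2 / L + D + 1, by positivity, ?_⟩
    filter_upwards [hQL, hDb, Ioo_mem_nhdsGT (show (0 : ℝ) < 1 by norm_num)] with r hr hr1 h01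
    have h0 := h01.1
    have hLi : 0 < 2 / L := by positivity
    refine ⟨?_, ?_, by linarith, by linarith [rpow_neg_mul_cube_le hn3 h01.1 h01.2.le]⟩
    · rw [mul_comm]
      exact mul_le_mul_of_nonneg_right (by linarith) h0.le
    · have e1 : 2 / L * (L / 2) ≤ (2 * L + 2 / L + D + 1) * Q r :=
        mul_le_mul (by linarith) hr.1.le (by positivity) (by positivity)
      have e2 : 2 / L * (L / 2) = 1 := by field_simp
      have e3 := mul_le_mul_of_nonneg_left (e2 ▸ e1) h0.le
      linarith
  · have hev : ∀ᶠ r in atTop, r * Q r ≤ 1 := hut.eventually (ge_mem_nhds one_pos)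
    obtain ⟨R, hR⟩ := eventually_atTop.1 hev
    have hbt : ∀ r ≥ (1 : ℝ), r ^ (-n) ≤ 1 := fun r hr =>
      Real.rpow_le_one_of_one_le_of_nonpos hr (by linarith)
    have hpos : (0 : ℝ) < max R 1 := lt_max_of_lt_right one_pos
    have key := abs_deriv_le_of_decay hpos
      (b := fun r => r ^ (-n)) (u := fun r => r * Q r) (u1 := fun r => Q r + r * deriv Q r)
      (fun r hr => ⟨(Real.rpow_pos_of_pos (hpos.trans_le hr) _).le,
        hbt r ((le_max_right _ _).trans hr)⟩)
      (fun r hr => ⟨(mul_pos (hpos.trans_le hr) (hQpos r (hpos.trans_le hr))).le,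
        hR r ((le_max_left _ _).trans hr)⟩) hu hu1 hut hu1t
    filter_upwards [eventually_ge_atTop (max R 1)] with r hr
    exact ⟨key r hr, hR r ((le_max_left _ _).trans hr), hbt r ((le_max_right _ _).trans hr)⟩
  · refine (tendsto_rpow_mul_of_decay hα hQd (n / 3 + 1)).congr' ?_
    filter_upwards [eventually_gt_atTop 0] with r hr
    rw [Real.rpow_add_one hr.ne']
    ring

/-- `w = rv` satisfies all requirements of `Kernel` when `v` is a bounded solution. -/
theorem kernel_of_solution {n : ℝ} {Q v : ℝ → ℝ}
    (P : Profile (n / 3) (fun r => r ^ (n / 3)) (fun r => r ^ (-n)) (fun r => r * Q r)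
      (fun r => Q r + r * deriv Q r))
    (hv : ContDiffOn ℝ 2 v (Set.Ioi 0)) (hM : ∃ M : ℝ, ∀ r > (0 : ℝ), |v r| ≤ M)
    (hode : ∀ r > (0 : ℝ),
        deriv (deriv v) r + (2 / r) * deriv v r = v r - 3 * r ^ (2 - n) * Q r ^ 2 * v r) :
    Kernel (fun r => r ^ (-n)) (fun r => r * Q r) (fun r => r * v r)
      (fun r => v r + r * deriv v r) := by
  obtain ⟨M, hM⟩ := hM
  have hM0 : 0 ≤ M := (abs_nonneg _).trans (hM 1 one_pos)
  have hw : ∀ r > 0, HasDerivAt (fun r => r * v r) (v r + r * deriv v r) r :=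
    fun r hr => hasDerivAt_id_mul hv hr
  have hw1 : ∀ r > 0, HasDerivAt (fun r => v r + r * deriv v r)
      (r * v r - 3 * r ^ (-n) * (r * Q r) ^ 2 * (r * v r)) r := fun r hr => by
    refine (hasDerivAt_id_mul_deriv hv hr (hode r hr)).congr_deriv ?_
    rw [rpow_weight hr]
    ring
  have hwM : ∀ r > 0, |r * v r| ≤ M * r := fun r hr => by
    rw [abs_mul, abs_of_pos hr, mul_comm]
    exact mul_le_mul_of_nonneg_right (hM r hr) hr.le
  have hnz : ∃ C > 0, ∀ᶠ r in 𝓝[>] (0 : ℝ), |r * v r| ≤ C * r ∧ |v r + r * deriv v r| ≤ C := by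
    obtain ⟨A, hA, hAev⟩ := P.near_zero
    obtain ⟨D, hD, hDb⟩ := bounded_near_zero_of_deriv (D := M + 3 * A * A ^ 2 * M) hw1 (by
      filter_upwards [hAev, Ioo_mem_nhdsGT (show (0 : ℝ) < 1 by norm_num)] with r hr h01
      have h0 := h01.1
      have hb0 : 0 < r ^ (-n) := Real.rpow_pos_of_pos h0 _
      have hu0 := P.u_pos r h0
      have e1 : |r * v r| ≤ M :=
        (hwM r h0).trans (mul_le_of_le_one_right hM0 h01.2.le)
      have e2 : |3 * r ^ (-n) * (r * Q r) ^ 2 * (r * v r)| ≤ 3 * A * A ^ 2 * M := by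
        rw [abs_mul, abs_of_nonneg (by positivity)]
        calc 3 * r ^ (-n) * (r * Q r) ^ 2 * |r * v r|
            ≤ 3 * r ^ (-n) * (A * r) ^ 2 * (M * r) := by
              refine mul_le_mul (mul_le_mul_of_nonneg_left
                (pow_le_pow_left₀ hu0.le hr.1 2) (by positivity)) (hwM r h0)
                (abs_nonneg _) (by positivity)
          _ = 3 * (r ^ (-n) * r ^ 3) * A ^ 2 * M := by ring
          _ ≤ 3 * A * A ^ 2 * M := by
              have := hr.2.2.2
              gcongr
      exact (abs_sub _ _).trans (add_le_add e1 e2))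
    refine ⟨M + D, by positivity, ?_⟩
    filter_upwards [hDb, eventually_pos_zero] with r hr h0
    refine ⟨(hwM r h0).trans (mul_le_mul_of_nonneg_right (by linarith) h0.le), by linarith⟩
  have hev : ∀ᶠ r in atTop, r * Q r ≤ 1 / 3 := P.u_top.eventually (ge_mem_nhds (by norm_num))
  obtain ⟨R, hR⟩ := eventually_atTop.1 (hev.and P.near_top)
  have hpos : (0 : ℝ) < max R 1 := lt_max_of_lt_right one_pos
  have key := antitone_sq_and_bounded (V := fun r => 1 - 3 * r ^ (-n) * (r * Q r) ^ 2)
    (w := fun r => r * v r) (w1 := fun r => v r + r * deriv v r) (M := M) hpos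
    (fun r hr => by
      obtain ⟨h1, -, -, h2⟩ := hR r ((le_max_left _ _).trans hr)
      have h0 := hpos.trans_le hr
      have hu0 := P.u_pos r h0
      have e1 : (r * Q r) ^ 2 ≤ (1 / 3) ^ 2 := pow_le_pow_left₀ hu0.le h1 2
      have e2 : r ^ (-n) * (r * Q r) ^ 2 ≤ 1 * (1 / 3) ^ 2 :=
        mul_le_mul h2 e1 (by positivity) zero_le_one
      norm_num at e2 ⊢
      linarith)
    hw (fun r hr => (hw1 r hr).congr_deriv (by ring))
    (fun r hr => hwM r (hpos.trans_le hr))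
  refine ⟨hw, hw1, hnz, ?_, _, hpos, key.1⟩
  refine ⟨|max R 1 * v (max R 1)| + |v (max R 1) + max R 1 * deriv v (max R 1)| + 1,
    by positivity, ?_⟩
  filter_upwards [eventually_ge_atTop (max R 1)] with r hr
  have h1 := sq_le_sq.1 (key.1 (mem_Ici.2 le_rfl) (mem_Ici.2 hr) hr)
  have h2 := sq_le_sq.1 (key.2 (mem_Ici.2 le_rfl) (mem_Ici.2 hr) hr)
  constructor
  · linarith [abs_nonneg (v (max R 1) + max R 1 * deriv v (max R 1))]
  · linarith [abs_nonneg (max R 1 * v (max R 1))]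

end instantiation

theorem ground_state_nondegenerate (n : ℝ) (hn0 : 0 < n) (hn3 : n < 3)
    (Q : ℝ → ℝ) (hQreg : ContDiffOn ℝ 2 Q (Set.Ioi 0))
    (hQpos : ∀ r > (0 : ℝ), 0 < Q r)
    (hQode : ∀ r > (0 : ℝ),
      deriv (deriv Q) r + (2 / r) * deriv Q r = Q r - r ^ (2 - n) * Q r ^ 3)
    (hQlim : ∃ L > (0 : ℝ), Tendsto Q (nhdsWithin 0 (Set.Ioi 0)) (nhds L))
    (hQdecay : ∃ C > (0 : ℝ), ∃ a > (0 : ℝ), ∀ r ≥ (1 : ℝ),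
      |Q r| + |deriv Q r| ≤ C * Real.exp (-a * r)) :
    ∀ v : ℝ → ℝ, ContDiffOn ℝ 2 v (Set.Ioi 0) →
      (∃ M : ℝ, ∀ r > (0 : ℝ), |v r| ≤ M) →
      (∀ r > (0 : ℝ),
        deriv (deriv v) r + (2 / r) * deriv v r = v r - 3 * r ^ (2 - n) * Q r ^ 2 * v r) →
      ∀ r > (0 : ℝ), v r = 0 := by
  intro v hv hM hode r hr
  have P := profile_of_ground_state hn0 hn3 hQreg hQpos hQode hQlim hQdecay
  exact (mul_eq_zero.1 ((kernel_of_solution P hv hM hode).eq_zero P r hr)).resolve_left hr.ne'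
end

section
/- Let n ∈ ℝ and let Q ∈ C³((0,∞), ℝ) satisfy Q''(r) + (2/r)Q'(r) = Q(r) − r^{2−n}Q(r)³ for all r > 0. Define Q₁ : (0,∞) → ℝ by Q₁(r) := r·Q'(r) + ((4−n)/2)·Q(r), and let ℒ denote the linearised operator ℒv := −(v'' + (2/r)v') + v − 3r^{2−n}Q²v. Then for all r > 0: (a) (ℒQ)(r) = −2 r^{2−n} Q(r)³; and (b) (ℒQ₁)(r) = −2 Q(r), i.e. Q₁''(r) + (2/r)Q₁'(r) = Q₁(r) − 3r^{2−n}Q(r)²Q₁(r) + 2Q(r). -/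
/-!
The second identity is the infinitesimal form of scaling invariance: with `a = (4 - n) / 2`, the
rescaled functions `Q_μ(r) = μ ^ a * Q(μ r)` solve `Δu = μ ^ 2 u - r ^ (2 - n) u ^ 3`; differentiating
in `μ` at `μ = 1` gives `ℒQ₁ = -2Q`. The proof carries this out in coordinates: the equation,
solved for `Q''`, is differentiated once to express `Q'''`, and then `Q₁'' = (2 + a) Q'' + r Q'''` is
substituted into `ℒQ₁`. The first identity is the equation itself.
-/

/-- For a `C³` solution `Q` of `Q'' + (2/r)Q' = Q − r^{2−n}Q³` on `(0,∞)`,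
with `Q₁(r) = r Q'(r) + ((4−n)/2) Q(r)` and `ℒv = −(v'' + (2/r)v') + v − 3r^{2−n}Q²v`:
(a) `ℒQ = −2r^{2−n}Q³`, and (b) `ℒQ₁ = −2Q` on `(0,∞)`. -/
theorem linearisation_identities (n : ℝ) (Q : ℝ → ℝ)
    (hQreg : ContDiffOn ℝ 3 Q (Set.Ioi 0))
    (hQode : ∀ r > (0 : ℝ),
      deriv (deriv Q) r + (2 / r) * deriv Q r = Q r - r ^ (2 - n) * Q r ^ 3)
    (Q₁ : ℝ → ℝ)
    (hQ₁ : ∀ r : ℝ, Q₁ r = r * deriv Q r + ((4 - n) / 2) * Q r) :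
    ∀ r > (0 : ℝ),
      (-(deriv (deriv Q) r + (2 / r) * deriv Q r) + Q r - 3 * r ^ (2 - n) * Q r ^ 2 * Q r =
        -2 * r ^ (2 - n) * Q r ^ 3) ∧
      (-(deriv (deriv Q₁) r + (2 / r) * deriv Q₁ r) + Q₁ r - 3 * r ^ (2 - n) * Q r ^ 2 * Q₁ r =
        -2 * Q r) := by
  have hQ : ∀ x > (0 : ℝ), HasDerivAt Q (deriv Q x) x := fun x hx =>
    ((hQreg.differentiableOn (by norm_num)).differentiableAt (Ioi_mem_nhds hx)).hasDerivAt
  have hQreg' : ContDiffOn ℝ 2 (deriv Q) (Set.Ioi 0) :=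
    hQreg.deriv_of_isOpen isOpen_Ioi (by norm_num)
  have hQ' : ∀ x > (0 : ℝ), HasDerivAt (deriv Q) (deriv (deriv Q) x) x := fun x hx =>
    ((hQreg'.differentiableOn (by norm_num)).differentiableAt (Ioi_mem_nhds hx)).hasDerivAt
  intro r hr
  have hr0 : r ≠ 0 := hr.ne'
  have hode := hQode r hr
  refine ⟨by linear_combination -hode, ?_⟩
  -- `Q'''`, by differentiating the equation solved for `Q''`
  have hQ'' : HasDerivAt (deriv (deriv Q))
      (deriv Q r - ((2 - n) * (r ^ (2 - n) / r) * Q r ^ 3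
        + r ^ (2 - n) * (3 * Q r ^ 2 * deriv Q r))
        - (-2 / r ^ 2 * deriv Q r + 2 / r * deriv (deriv Q) r)) r := by
    have hpow : HasDerivAt (fun x : ℝ => x ^ (2 - n)) ((2 - n) * (r ^ (2 - n) / r)) r := by
      rw [← Real.rpow_sub_one hr0]
      exact Real.hasDerivAt_rpow_const (Or.inl hr0)
    have hcube : HasDerivAt (fun x => Q x ^ 3) (3 * Q r ^ 2 * deriv Q r) r := by
      simpa using (hQ r hr).fun_pow 3
    have hinv : HasDerivAt (fun x : ℝ => 2 / x) (-2 / r ^ 2) r := by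
      simpa [div_eq_mul_inv] using (hasDerivAt_inv hr0).const_mul 2
    refine (((hQ r hr).fun_sub (hpow.fun_mul hcube)).fun_sub
      (hinv.fun_mul (hQ' r hr))).congr_of_eventuallyEq ?_
    filter_upwards [Ioi_mem_nhds hr] with x hx
    linear_combination hQode x hx
  have hQ₁' : ∀ x > (0 : ℝ),
      deriv Q₁ x = (1 + (4 - n) / 2) * deriv Q x + x * deriv (deriv Q) x := by
    intro x hx
    rw [funext hQ₁]
    refine (((hasDerivAt_id' x).fun_mul (hQ' x hx)).fun_add
      ((hQ x hx).const_mul ((4 - n) / 2))).deriv.trans ?_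
    ring
  have hQ₁'' := ((((hQ' r hr).const_mul (1 + (4 - n) / 2)).fun_add
    ((hasDerivAt_id' r).fun_mul hQ'')).congr_of_eventuallyEq
      (Filter.eventually_of_mem (Ioi_mem_nhds hr) hQ₁')).deriv
  have hsolved : deriv (deriv Q) r = Q r - r ^ (2 - n) * Q r ^ 3 - 2 / r * deriv Q r := by
    linear_combination hode
  rw [hQ₁'', hQ₁' r hr, hQ₁ r, hsolved]
  field_simp
  ring
end
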